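/- arXiv:2506.11296 — 3 statements merged into one kernel-verified Lean document; each statement's English description precedes it below -/
import Mathlib

section
/- Let d ≥ 1 be an integer, α ∈ (0,1), and let v ∈ ℝ^d be a unit vector. If 0 < m < 2√(1 − γ_α), then u_{α,1}(t, m t v) → ∞ as t → ∞. -/
open Real MeasureTheory Filter Topology

/-- The Wright function `W_{λ,μ}(z) = ∑ z^n / (n! Γ(λn+μ))`.
(In Mathlib, `Real.Gamma` vanishes at nonpositive integers, so `1/Γ(s) = 0` there.) -/
noncomputable def wrightFn (l μ z : ℝ) : ℝ :=
  ∑' n : ℕ, z ^ n / (n.factorial * Real.Gamma (l * n + μ))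

/-- The fundamental solution `u_{α,1}` of `∂_t^α u − Δu = u`, `u(0,·)=δ₀`,
via the subordination formula. -/
noncomputable def fundSol (α : ℝ) (d : ℕ) (t : ℝ) (x : EuclideanSpace ℝ (Fin d)) : ℝ :=
  t ^ (-α) * ∫ s in Set.Ioi (0 : ℝ),
    Real.exp s * (Real.exp (-‖x‖ ^ 2 / (4 * s)) / (4 * Real.pi * s) ^ ((d : ℝ) / 2)) *
      wrightFn (-α) (1 - α) (-(t ^ (-α) * s))

/-- `γ_α = (1-α) α^{α/(1-α)}`. -/
noncomputable def gammaAlpha (α : ℝ) : ℝ := (1 - α) * α ^ (α / (1 - α))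



noncomputable def pp (β : ℝ) (n : ℕ) : ℝ := ∏ i ∈ Finset.range n, (1 - β / (i + 1))

noncomputable def bs (a : ℝ) : PowerSeries ℝ :=
  PowerSeries.rescale (-1 : ℝ) (PowerSeries.binomialSeries ℝ a)

lemma bs_coeff (a : ℝ) (n : ℕ) : PowerSeries.coeff n (bs a) = pp (a + 1) n := by
  rw [bs, PowerSeries.coeff_rescale, PowerSeries.binomialSeries_coeff, Ring.choose_eq_smul]
  simp only [smul_eq_mul, mul_one]
  induction n with
  | zero => simp [pp]
  | succ n ih =>
    have h1 : pp (a + 1) (n + 1) = pp (a + 1) n * (1 - (a + 1) / (n + 1)) := by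
      simp [pp, Finset.prod_range_succ]
    rw [h1, ← ih, descPochhammer_succ_right, Polynomial.smeval_mul]
    have hn : (n : ℝ) + 1 ≠ 0 := by positivity
    have hf : (n.factorial : ℝ) ≠ 0 := by positivity
    simp [Polynomial.smeval_sub, Nat.factorial_succ, Polynomial.smeval_natCast]
    field_simp
    ring

lemma bs_add (a b : ℝ) : bs (a + b) = bs a * bs b := by
  simp [bs]

lemma bs_zero : bs 0 = 1 := by
  rw [bs, PowerSeries.binomialSeries_zero]; simp

lemma bs_nat_mul (a : ℝ) (j : ℕ) : bs (a * j) = bs a ^ j := by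
  induction j with
  | zero => simp [bs_zero]
  | succ n ih => rw [pow_succ, ← ih, ← bs_add]; congr 1; push_cast; ring

def NN (f : PowerSeries ℝ) : Prop := ∀ n, 0 ≤ PowerSeries.coeff n f

lemma NN.mul {f g : PowerSeries ℝ} (hf : NN f) (hg : NN g) : NN (f * g) := by
  intro n
  rw [PowerSeries.coeff_mul]
  exact Finset.sum_nonneg fun p _ => mul_nonneg (hf _) (hg _)

lemma NN.pow {f : PowerSeries ℝ} (hf : NN f) (k : ℕ) : NN (f ^ k) := by
  induction k with
  | zero =>
    intro n
    rw [pow_zero, PowerSeries.coeff_one]; split_ifs <;> norm_num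
  | succ k ih => rw [pow_succ]; exact ih.mul hf

lemma pp_succ (β : ℝ) (n : ℕ) : pp β (n + 1) = pp β n * (1 - β / (n + 1)) := by
  simp [pp, Finset.prod_range_succ]

lemma pp_nonneg {β : ℝ} (h1 : β ≤ 1) (n : ℕ) : 0 ≤ pp β n := by
  refine Finset.prod_nonneg fun i _ => ?_
  rw [sub_nonneg, div_le_one (by positivity)]
  have : (0 : ℝ) ≤ i := by positivity
  linarith

lemma pp_nonpos {α : ℝ} (h0 : 0 < α) (h1 : α < 1) (n : ℕ) (hn : n ≠ 0) : pp (α + 1) n ≤ 0 := by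
  obtain ⟨n, rfl⟩ := Nat.exists_eq_succ_of_ne_zero hn
  rw [pp, Finset.prod_range_succ']
  refine mul_nonpos_of_nonneg_of_nonpos ?_ (by simp; linarith)
  refine Finset.prod_nonneg fun i _ => ?_
  rw [sub_nonneg, div_le_one (by positivity)]
  have : (0 : ℝ) ≤ i := by positivity
  push_cast
  linarith

lemma disc_nonneg {α : ℝ} (h0 : 0 < α) (h1 : α < 1) (k n : ℕ) :
    0 ≤ ∑ j ∈ Finset.range (k + 1), (-1 : ℝ) ^ j * (k.choose j) * pp (α * (j + 1)) n := by
  have hA : NN (bs (α - 1)) := fun n => by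
    rw [bs_coeff]; exact pp_nonneg (by linarith) n
  have hB : NN (1 - bs α) := fun n => by
    rw [map_sub, bs_coeff, PowerSeries.coeff_one]
    split_ifs with h
    · subst h; simp [pp]
    · have := pp_nonpos h0 h1 n h
      linarith
  have := (hA.mul (hB.pow k)) n
  convert this
  rw [sub_eq_neg_add (1 : PowerSeries ℝ), add_pow, Finset.mul_sum, map_sum]
  refine Finset.sum_congr rfl fun j _ => ?_
  have : bs (α - 1) * ((-bs α) ^ j * 1 ^ (k - j) * (k.choose j : PowerSeries ℝ))
      = PowerSeries.C ((-1 : ℝ) ^ j * (k.choose j)) * bs (α - 1 + α * j) := by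
    rw [bs_add, bs_nat_mul, neg_pow]
    simp
    ring
  rw [this, PowerSeries.coeff_C_mul, bs_coeff]
  congr 2
  ring

lemma pp_tendsto (β : ℝ) :
    Tendsto (fun n : ℕ => (n : ℝ) ^ β * pp β n) atTop (𝓝 (1 / Gamma (1 - β))) := by
  by_cases hG : Gamma (1 - β) = 0
  · rw [hG, div_zero]
    obtain ⟨m, hm⟩ := (Real.Gamma_eq_zero_iff _).1 hG
    refine tendsto_const_nhds.congr' ?_
    filter_upwards [eventually_ge_atTop (m + 1)] with n hn
    have : pp β n = 0 := by
      refine Finset.prod_eq_zero (i := m) (Finset.mem_range.2 hn) ?_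
      have : β = m + 1 := by linarith
      rw [this, div_self (by positivity), sub_self]
    simp [this]
  · have h1 := (Real.GammaSeq_tendsto_Gamma (1 - β)).inv₀ hG
    have h2 : Tendsto (fun n : ℕ => (n : ℝ) / (n + (1 - β))) atTop (𝓝 1) :=
      tendsto_natCast_div_add_atTop (1 - β)
    have h3 := h1.mul h2
    rw [mul_one, ← one_div] at h3
    refine h3.congr' ?_
    obtain ⟨N, hN⟩ := exists_nat_gt (|β| + 1)
    filter_upwards [eventually_ge_atTop N, eventually_gt_atTop 0] with n hn hn0
    have hn0' : (0 : ℝ) < n := by exact_mod_cast hn0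
    have hne : (n : ℝ) + (1 - β) ≠ 0 := by
      have : (N : ℝ) ≤ n := by exact_mod_cast hn
      have := le_abs_self β
      apply ne_of_gt; linarith
    have hp : ∏ j ∈ Finset.range (n + 1), (1 - β + (j : ℝ)) = (n.factorial : ℝ) * pp β n * (n + (1 - β)) := by
      rw [Finset.prod_range_succ]
      congr 1
      · rw [← Finset.prod_range_add_one_eq_factorial, pp]
        push_cast
        rw [← Finset.prod_mul_distrib]
        refine Finset.prod_congr rfl fun i _ => ?_
        field_simp
        ring
      · ring
    rw [Real.GammaSeq, hp, rpow_sub hn0', rpow_one]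
    have hf : (n.factorial : ℝ) ≠ 0 := by positivity
    have : (n : ℝ) ^ β ≠ 0 := (rpow_pos_of_pos hn0' _).ne'
    field_simp


lemma pp_bound {β : ℝ} (hβ : 0 < β) (n : ℕ) (hn : n ≠ 0) :
    (n : ℝ) ^ β * |pp β n| ≤ exp (β * (2 + log (β + 1))) := by
  have hn0 : (0 : ℝ) < n := by positivity
  have key : ∀ k : ℕ, k ≤ ⌊β⌋₊ → |pp β k| ≤ exp β := by
    intro k hk
    refine le_trans ?_ (Real.pow_div_factorial_le_exp β hβ.le k)
    rw [pp, Finset.abs_prod, ← Finset.prod_range_add_one_eq_factorial]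
    push_cast
    rw [← Finset.card_range k, ← Finset.prod_const, Finset.card_range, ← Finset.prod_div_distrib]
    refine Finset.prod_le_prod (fun _ _ => abs_nonneg _) fun i hi => ?_
    have hi' : i + 1 ≤ ⌊β⌋₊ := (Finset.mem_range.1 hi).trans_le hk
    have : ((i + 1 : ℕ) : ℝ) ≤ β := (Nat.le_floor_iff hβ.le).1 hi'
    push_cast at this
    have h1 : 1 ≤ β / (i + 1) := by rw [le_div_iff₀ (by positivity)]; linarith
    rw [abs_of_nonpos (by linarith)]
    linarith
  have hmβ : (⌊β⌋₊ : ℝ) ≤ β := Nat.floor_le hβ.le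
  have hexp : exp (β * (2 + log (β + 1))) = exp (β * (1 + log (β + 1))) * exp β := by
    rw [← exp_add]; congr 1; ring
  rw [hexp]
  have hl0 : 0 ≤ log (β + 1) := log_nonneg (by linarith)
  rcases le_or_gt n ⌊β⌋₊ with h | h
  · refine mul_le_mul ?_ (key n h) (abs_nonneg _) (exp_pos _).le
    rw [rpow_def_of_pos hn0]
    have hnβ : (n : ℝ) ≤ β := (Nat.cast_le.2 h).trans hmβ
    have : log n ≤ log (β + 1) := log_le_log hn0 (by linarith)
    refine exp_le_exp.2 ?_
    nlinarith
  · set m := ⌊β⌋₊ with hm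
    have hsplit : pp β n = pp β m * ∏ i ∈ Finset.Ico m n, (1 - β / (i + 1)) := by
      rw [pp, pp, Finset.prod_range_mul_prod_Ico _ h.le]
    have hle : |∏ i ∈ Finset.Ico m n, (1 - β / ((i : ℝ) + 1))| ≤
        exp (-β * ((harmonic n : ℝ) - harmonic m)) := by
      have hh : (harmonic n : ℝ) - harmonic m = ∑ i ∈ Finset.Ico m n, ((i : ℝ) + 1)⁻¹ := by
        rw [harmonic, harmonic]
        push_cast
        rw [Finset.sum_Ico_eq_sub _ h.le]
      rw [hh, Finset.mul_sum, exp_sum, Finset.abs_prod]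
      refine Finset.prod_le_prod (fun _ _ => abs_nonneg _) fun i hi => ?_
      have hi' : m ≤ i := (Finset.mem_Ico.1 hi).1
      have h2 : β < i + 1 := (Nat.lt_floor_add_one β).trans_le (by
        rw [← hm]; gcongr)
      have h1 : β / (i + 1) ≤ 1 := by rw [div_le_one (by positivity)]; linarith
      rw [abs_of_nonneg (by linarith)]
      have := add_one_le_exp (-β * ((i : ℝ) + 1)⁻¹)
      rw [div_eq_mul_inv]; linarith
    have hlog : log n ≤ harmonic n := by
      refine le_trans ?_ (log_add_one_le_harmonic n)
      exact log_le_log hn0 (by push_cast; linarith)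
    have hlogm : (harmonic m : ℝ) ≤ 1 + log (β + 1) := by
      refine (harmonic_le_one_add_log m).trans ?_
      rcases Nat.eq_zero_or_pos m with h0 | h0
      · rw [h0]; simp; exact hl0
      · have : (0 : ℝ) < m := by exact_mod_cast h0
        have := log_le_log this (show (m : ℝ) ≤ β + 1 by linarith)
        linarith
    rw [hsplit, abs_mul, mul_comm |pp β m|, ← mul_assoc]
    refine mul_le_mul ?_ (key m le_rfl) (abs_nonneg _) (exp_pos _).le
    calc (n : ℝ) ^ β * |∏ i ∈ Finset.Ico m n, (1 - β / ((i : ℝ) + 1))|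
        ≤ exp (log n * β) * exp (-β * ((harmonic n : ℝ) - harmonic m)) := by
          rw [rpow_def_of_pos hn0]; gcongr
      _ ≤ _ := by
          rw [← exp_add]
          refine exp_le_exp.2 ?_
          nlinarith

lemma summable_aux {α : ℝ} (h1 : α < 1) {R : ℝ} (hR : 0 ≤ R) :
    Summable fun j : ℕ => R ^ j / (j.factorial : ℝ) ^ (1 - α) := by
  set x := R ^ (1 / (1 - α)) with hx
  have hx0 : 0 ≤ x := rpow_nonneg hR _
  have h1' : 0 < 1 - α := by linarith
  have hRx : R = x ^ (1 - α) := by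
    rw [hx, ← rpow_mul hR, one_div, inv_mul_cancel₀ h1'.ne', rpow_one]
  have hg : Summable fun j : ℕ => exp (2 * x) ^ (1 - α) * ((1 / 2 : ℝ) ^ (1 - α)) ^ j := by
    refine (summable_geometric_of_lt_one (by positivity) ?_).mul_left _
    exact rpow_lt_one (by norm_num) (by norm_num) h1'
  refine Summable.of_nonneg_of_le (fun j => by positivity) (fun j => ?_) hg
  have e1 : R ^ j / (j.factorial : ℝ) ^ (1 - α) = (x ^ j / j.factorial) ^ (1 - α) := by
    rw [div_rpow (by positivity) (by positivity), hRx, ← rpow_natCast, ← rpow_natCast,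
      ← rpow_mul hx0, ← rpow_mul hx0, mul_comm]
  have e2 : exp (2 * x) ^ (1 - α) * ((1 / 2 : ℝ) ^ (1 - α)) ^ j
      = (exp (2 * x) * (1 / 2) ^ j) ^ (1 - α) := by
    rw [mul_rpow (exp_pos _).le (by positivity), ← rpow_natCast, ← rpow_natCast (1/2 : ℝ),
      ← rpow_mul (by norm_num), ← rpow_mul (by norm_num), mul_comm (1 - α)]
  rw [e1, e2]
  refine rpow_le_rpow (by positivity) ?_ h1'.le
  have := Real.pow_div_factorial_le_exp (x := 2 * x) (by positivity) j
  have h2 : x ^ j / j.factorial = ((2 * x) ^ j / j.factorial) * (1 / 2) ^ j := by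
    rw [mul_pow, one_div, inv_pow]; field_simp
  rw [h2]
  gcongr

lemma summable_bound {α : ℝ} (h0 : 0 < α) (h1 : α < 1) {r : ℝ} (hr : 0 ≤ r) :
    Summable fun j : ℕ => r ^ j / j.factorial *
      exp (α * (j + 1) * (2 + log (α * (j + 1) + 1))) := by
  have h := (summable_aux h1 (R := r * exp 6) (by positivity)).mul_left (exp 6)
  refine Summable.of_nonneg_of_le (fun j => by positivity) (fun j => ?_) h
  have hj : (0 : ℝ) ≤ j := by positivity
  have hF : (0 : ℝ) < j.factorial := by positivity
  have hlF : exp (log (j.factorial : ℝ)) = j.factorial := exp_log hF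
  have e1 : (j.factorial : ℝ) ^ (1 - α) = exp (log (j.factorial : ℝ) * (1 - α)) :=
    rpow_def_of_pos hF _
  have hlog : log (α * (j + 1) + 1) ≤ log (j + 2) := by
    refine log_le_log (by positivity) (by nlinarith)
  -- (j+1) * log (j+2) ≤ log j! + 3 j + 4
  have hmain : ((j : ℝ) + 1) * log (j + 2) ≤ log (j.factorial : ℝ) + 4 * (j + 1) := by
    have h2 := Real.pow_div_factorial_le_exp (x := (j : ℝ) + 2) (by positivity) (j + 1)
    rw [Nat.factorial_succ, div_le_iff₀ (by positivity)] at h2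
    have h3 := log_le_log (by positivity) h2
    push_cast at h3
    rw [log_pow, log_mul (exp_pos _).ne' (by positivity), log_exp,
      log_mul (by positivity) (by positivity)] at h3
    have h4 : log ((j : ℝ) + 1) ≤ j := by
      have := log_le_sub_one_of_pos (show (0 : ℝ) < j + 1 by positivity); linarith
    push_cast at h3
    linarith
  have hexp : α * (j + 1) * (2 + log (α * (j + 1) + 1)) ≤
      log (j.factorial : ℝ) * α + 6 * (j + 1) := by
    have hl0 : 0 ≤ log (j.factorial : ℝ) := log_nonneg (by exact_mod_cast Nat.one_le_iff_ne_zero.2 (Nat.factorial_ne_zero j))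
    calc _ ≤ α * (j + 1) * (2 + log (j + 2)) := by gcongr
      _ = α * (2 * (j + 1) + (j + 1) * log (j + 2)) := by ring
      _ ≤ α * (2 * (j + 1) + (log (j.factorial : ℝ) + 4 * (j + 1))) := by gcongr
      _ ≤ _ := by nlinarith
  calc _ ≤ r ^ j / j.factorial * exp (log (j.factorial : ℝ) * α + 6 * (j + 1)) := by gcongr
    _ = exp 6 * ((r * exp 6) ^ j / (j.factorial : ℝ) ^ (1 - α)) := by
      rw [e1, mul_pow, ← exp_nat_mul]
      nth_rewrite 1 [← hlF]
      rw [div_eq_mul_inv, div_eq_mul_inv, ← exp_neg, ← exp_neg, mul_assoc, ← exp_add,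
        mul_assoc, ← exp_add, mul_left_comm, ← exp_add]
      congr 2
      ring

lemma wright_nonneg {α : ℝ} (h0 : 0 < α) (h1 : α < 1) {r : ℝ} (hr : 0 < r) :
    0 ≤ wrightFn (-α) (1 - α) (-r) := by
  set k : ℕ → ℕ := fun n => ⌊r * (n : ℝ) ^ α⌋₊ with hk
  set f : ℕ → ℕ → ℝ := fun n j => (-1 : ℝ) ^ j * ((k n).choose j * (((n : ℝ) ^ α)⁻¹) ^ j) *
    ((n : ℝ) ^ (α * (j + 1)) * pp (α * (j + 1)) n) with hf
  have hnα : Tendsto (fun n : ℕ => (n : ℝ) ^ α) atTop atTop :=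
    (tendsto_rpow_atTop h0).comp tendsto_natCast_atTop_atTop
  have hkt : Tendsto k atTop atTop := by
    exact tendsto_nat_floor_atTop.comp (hnα.const_mul_atTop hr)
  have hkr : Tendsto (fun n => (k n : ℝ) * ((n : ℝ) ^ α)⁻¹) atTop (𝓝 r) := by
    have := (tendsto_nat_floor_mul_div_atTop hr.le).comp hnα
    refine this.congr fun n => ?_
    simp [hk, div_eq_mul_inv]
  have hch : ∀ j, Tendsto (fun n => ((k n).choose j : ℝ) * (((n : ℝ) ^ α)⁻¹) ^ j) atTop
      (𝓝 (r ^ j / j.factorial)) := by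
    intro j
    have h := ((isEquivalent_choose j).comp_tendsto hkt)
    have h' := h.mul (Asymptotics.IsEquivalent.refl (u := fun n : ℕ => (((n : ℝ) ^ α)⁻¹) ^ j))
    refine (Asymptotics.IsEquivalent.tendsto_nhds_iff h').2 ?_
    have := (hkr.pow j).div_const (j.factorial : ℝ)
    refine this.congr fun n => ?_
    simp [mul_pow]; ring
  have ht : Tendsto (fun n => ∑' j, f n j) atTop
      (𝓝 (∑' j : ℕ, (-1 : ℝ) ^ j * (r ^ j / j.factorial) * (1 / Gamma (1 - α * (j + 1))))) := by
    refine tendsto_tsum_of_dominated_convergence (summable_bound h0 h1 hr.le) (fun j => ?_) ?_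
    · exact ((hch j).const_mul _).mul (pp_tendsto _)
    · filter_upwards [eventually_ne_atTop 0] with n hn j
      rw [hf, norm_mul, norm_mul, norm_pow, norm_neg, norm_one, one_pow, one_mul]
      have hn0 : (0 : ℝ) < n := by positivity
      refine mul_le_mul ?_ ?_ (norm_nonneg _) (by positivity)
      · rw [Real.norm_of_nonneg (by positivity)]
        calc _ ≤ ((k n : ℝ) ^ j / j.factorial) * (((n : ℝ) ^ α)⁻¹) ^ j := by
              gcongr; exact Nat.choose_le_pow_div _ _
          _ = ((k n : ℝ) * ((n : ℝ) ^ α)⁻¹) ^ j / j.factorial := by rw [mul_pow]; ring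
          _ ≤ _ := by
              gcongr
              rw [← div_eq_mul_inv, div_le_iff₀ (by positivity)]
              exact Nat.floor_le (by positivity)
      · rw [norm_mul, Real.norm_of_nonneg (by positivity)]
        exact pp_bound (by positivity) n hn
  have heq : wrightFn (-α) (1 - α) (-r) =
      ∑' j : ℕ, (-1 : ℝ) ^ j * (r ^ j / j.factorial) * (1 / Gamma (1 - α * (j + 1))) := by
    rw [wrightFn]
    refine tsum_congr fun j => ?_
    rw [neg_pow, show -α * (j : ℝ) + (1 - α) = 1 - α * (j + 1) by ring]
    simp [div_eq_mul_inv]; ring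
  rw [heq]
  refine ge_of_tendsto ht ?_
  filter_upwards [eventually_ne_atTop 0] with n hn
  have hn0 : (0 : ℝ) < n := by positivity
  have : ∑' j, f n j = (n : ℝ) ^ α * ∑ j ∈ Finset.range (k n + 1),
      (-1 : ℝ) ^ j * ((k n).choose j) * pp (α * (j + 1)) n := by
    rw [tsum_eq_sum (s := Finset.range (k n + 1)), Finset.mul_sum]
    · refine Finset.sum_congr rfl fun j _ => ?_
      have : (n : ℝ) ^ (α * (j + 1)) = ((n : ℝ) ^ α) ^ j * (n : ℝ) ^ α := by
        rw [mul_add, rpow_add hn0, mul_one, rpow_mul hn0.le, rpow_natCast]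
      have h3 : ((n : ℝ) ^ α) ≠ 0 := by positivity
      simp only [hf]
      rw [this, inv_pow]
      field_simp
    · intro j hj
      have : k n < j := by simpa [Nat.lt_succ_iff] using hj
      simp [hf, Nat.choose_eq_zero_of_lt this]
  rw [this]
  exact mul_nonneg (by positivity) (disc_nonneg h0 h1 _ _)


lemma integrableOn_gam {a b : ℝ} (ha : 0 < a) (hb : 0 < b) :
    IntegrableOn (fun t : ℝ => t ^ (a - 1) * exp (-(b * t))) (Set.Ioi 0) := by
  have := integrableOn_rpow_mul_exp_neg_mul_rpow (p := 1) (s := a - 1) (by linarith) one_pos hb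
  refine this.congr_fun (fun t _ => ?_) measurableSet_Ioi
  simp

lemma complex_gamma_integral {a : ℝ} (ha : 0 < a) {w : ℂ} (hw : 0 < w.re) :
    ∫ t in Set.Ioi (0 : ℝ), ((t ^ (a - 1) : ℝ) : ℂ) * Complex.exp (-(w * t)) =
      (Real.Gamma a : ℂ) * w ^ (-(a : ℂ)) := by
  set μ : Measure ℝ := (volume.restrict (Set.Ioi (0 : ℝ))).withDensity
    (fun t => ENNReal.ofReal (t ^ (a - 1))) with hμ
  have hmeas : Measurable (fun t : ℝ => ENNReal.ofReal (t ^ (a - 1))) := by fun_prop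
  have hfin : ∀ᵐ x ∂(volume.restrict (Set.Ioi (0 : ℝ))), ENNReal.ofReal (x ^ (a - 1)) < ⊤ := by
    simp
  have hint : ∀ z : ℂ, ProbabilityTheory.complexMGF id μ z =
      ∫ t in Set.Ioi (0 : ℝ), ((t ^ (a - 1) : ℝ) : ℂ) * Complex.exp (z * t) := by
    intro z
    rw [ProbabilityTheory.complexMGF, hμ, integral_withDensity_eq_integral_toReal_smul hmeas hfin]
    refine setIntegral_congr_fun measurableSet_Ioi fun t ht => ?_
    have : 0 ≤ t ^ (a - 1) := rpow_nonneg (le_of_lt ht) _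
    simp [ENNReal.toReal_ofReal this]
  have hset : Set.Iio (0 : ℝ) ⊆ interior (ProbabilityTheory.integrableExpSet id μ) := by
    refine interior_maximal ?_ isOpen_Iio
    intro b hb
    rw [ProbabilityTheory.integrableExpSet, Set.mem_ofPred_eq, hμ,
      integrable_withDensity_iff_integrable_smul' hmeas hfin]
    have := integrableOn_gam ha (b := -b) (by simpa using hb)
    refine this.congr_fun (fun t ht => ?_) measurableSet_Ioi
    have : 0 ≤ t ^ (a - 1) := rpow_nonneg (le_of_lt ht) _
    simp [ENNReal.toReal_ofReal this]
  have hA : AnalyticOnNhd ℂ (ProbabilityTheory.complexMGF id μ) {z : ℂ | z.re < 0} :=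
    ProbabilityTheory.analyticOnNhd_complexMGF.mono fun z hz => hset hz
  have hopen : IsOpen {z : ℂ | z.re < 0} := isOpen_Iio.preimage Complex.continuous_re
  have hB : AnalyticOnNhd ℂ (fun z : ℂ => (Real.Gamma a : ℂ) * (-z) ^ (-(a : ℂ))) {z : ℂ | z.re < 0} := by
    refine DifferentiableOn.analyticOnNhd ?_ hopen
    intro z hz
    have hz' : z.re < 0 := hz
    refine DifferentiableAt.differentiableWithinAt ?_
    refine DifferentiableAt.const_mul ?_ _
    refine DifferentiableAt.cpow_const (by fun_prop) ?_
    left; simpa using hz'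
  have hconn : IsPreconnected {z : ℂ | z.re < 0} :=
    ((convex_Iio (0 : ℝ)).linear_preimage Complex.reLm).isPreconnected
  have hreal : ∀ x : ℝ, x < 0 → ProbabilityTheory.complexMGF id μ (x : ℂ) =
      (Real.Gamma a : ℂ) * (-(x : ℂ)) ^ (-(a : ℂ)) := by
    intro x hx
    rw [hint]
    have h := Real.integral_rpow_mul_exp_neg_mul_Ioi ha (neg_pos.2 hx)
    have h2 : (∫ t in Set.Ioi (0 : ℝ), ((t ^ (a - 1) : ℝ) : ℂ) * Complex.exp (x * t)) =
        ((∫ t in Set.Ioi (0 : ℝ), t ^ (a - 1) * exp (-(-x * t)) : ℝ) : ℂ) := by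
      rw [← integral_complex_ofReal]
      refine setIntegral_congr_fun measurableSet_Ioi fun t ht => ?_
      simp
    rw [h2, h, one_div, inv_rpow (by linarith), ← rpow_neg (by linarith)]
    rw [Complex.ofReal_mul, Complex.ofReal_cpow (by linarith)]
    push_cast
    ring
  have key := AnalyticOnNhd.eqOn_of_preconnected_of_frequently_eq hA hB hconn
    (z₀ := ((-1 : ℝ) : ℂ)) (by simp) (by
      have h_real : ∃ᶠ (x : ℝ) in 𝓝[≠] (-1 : ℝ), x < 0 := by
        apply Eventually.frequently
        exact nhdsWithin_le_nhds (Iio_mem_nhds (by norm_num))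
      rw [frequently_iff_seq_forall] at h_real ⊢
      obtain ⟨xs, hx_tendsto, hx_eq⟩ := h_real
      refine ⟨fun n ↦ xs n, ?_, fun n ↦ hreal _ (hx_eq n)⟩
      rw [tendsto_nhdsWithin_iff] at hx_tendsto ⊢
      constructor
      · refine (Complex.continuous_ofReal.tendsto _).comp ?_
        exact hx_tendsto.1
      · refine hx_tendsto.2.mono fun n hn => ?_
        simp only [Set.mem_compl_iff, Set.mem_singleton_iff] at hn ⊢
        exact_mod_cast hn)
  have := key (show -w ∈ {z : ℂ | z.re < 0} by simpa using hw)
  rw [hint] at this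
  simpa using this

/-- exponential dominates powers -/
lemma rpow_le_gamma_exp {p x : ℝ} (hp : 0 ≤ p) (hx : 0 ≤ x) :
    x ^ p ≤ Real.Gamma (p + 1) * exp x := by
  have h1 : exp (-x) * x ^ p ≤ Real.Gamma (p + 1) := by
    rw [Real.Gamma_eq_integral (by linarith)]
    have hI := Real.GammaIntegral_convergent (s := p + 1) (by linarith)
    have hsub : Set.Ioi x ⊆ Set.Ioi (0 : ℝ) := Set.Ioi_subset_Ioi hx
    calc exp (-x) * x ^ p = ∫ t in Set.Ioi x, exp (-t) * x ^ p := by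
          rw [integral_mul_const, integral_exp_neg_Ioi]
      _ ≤ ∫ t in Set.Ioi x, exp (-t) * t ^ (p + 1 - 1) := by
          refine setIntegral_mono_on ?_ (hI.mono_set hsub) measurableSet_Ioi fun t ht => ?_
          · exact (exp_neg_integrableOn_Ioi x one_pos |>.congr_fun (fun t _ => by simp) measurableSet_Ioi).mul_const _
          · rw [add_sub_cancel_right]
            have : x ≤ t := le_of_lt ht
            gcongr
      _ ≤ _ := by
          refine setIntegral_mono_set hI ?_ hsub.eventuallyLE
          refine (ae_restrict_iff' measurableSet_Ioi).2 (Eventually.of_forall fun t ht => ?_)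
          have : 0 ≤ t ^ (p + 1 - 1) := rpow_nonneg (le_of_lt ht) _
          positivity
  calc x ^ p = exp (-x) * x ^ p * exp x := by
        rw [mul_right_comm, ← exp_add]; simp
    _ ≤ _ := by gcongr

lemma rpow_le_exp_const (p : ℝ) (hp : 0 ≤ p) {e : ℝ} (he : 0 < e) :
    ∃ C : ℝ, 0 < C ∧ ∀ x : ℝ, 0 ≤ x → x ^ p ≤ C * exp (e * x) := by
  refine ⟨Real.Gamma (p + 1) * e ^ (-p), mul_pos (Gamma_pos_of_pos (by linarith)) (by positivity), fun x hx => ?_⟩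
  have := rpow_le_gamma_exp hp (show 0 ≤ e * x by positivity)
  rw [mul_rpow he.le hx] at this
  rw [rpow_neg he.le]
  have h2 : 0 < e ^ p := by positivity
  rw [mul_assoc, inv_mul_eq_div, ← mul_div_assoc, le_div_iff₀ h2]
  linarith

/-- L1 -/
lemma growth {α : ℝ} (h0 : 0 < α) (h1 : α < 1) (a : ℝ) {B l e : ℝ} (hB : 0 ≤ B) (hl : 0 < l) (he : 0 < e) :
    ∃ C : ℝ, 0 < C ∧ ∀ x : ℝ, l ≤ x → x ^ a * exp (B * x ^ α) ≤ C * exp (e * x) := by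
  obtain ⟨C1, hC1, h1'⟩ : ∃ C : ℝ, 0 < C ∧ ∀ x : ℝ, l ≤ x → x ^ a ≤ C * exp (e / 2 * x) := by
    rcases le_total 0 a with ha | ha
    · obtain ⟨C, hC, h⟩ := rpow_le_exp_const a ha (show 0 < e / 2 by positivity)
      exact ⟨C, hC, fun x hx => h x (hl.le.trans hx)⟩
    · refine ⟨l ^ a, by positivity, fun x hx => ?_⟩
      have : x ^ a ≤ l ^ a := rpow_le_rpow_of_nonpos hl hx ha
      have h2 : 1 ≤ exp (e / 2 * x) := one_le_exp (by have := hl.trans_le hx; positivity)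
      have h3 : 0 < l ^ a := by positivity
      nlinarith
  have h2' : ∃ D : ℝ, ∀ x : ℝ, 0 < x → B * x ^ α ≤ D + e / 2 * x := by
    set X := (2 * (B + 1) / e) ^ (1 / (1 - α)) with hX
    have hX0 : 0 < X := by positivity
    refine ⟨B * X ^ α, fun x hx => ?_⟩
    rcases le_total x X with h | h
    · have : x ^ α ≤ X ^ α := rpow_le_rpow hx.le h h0.le
      have : B * x ^ α ≤ B * X ^ α := by gcongr
      have : 0 < e / 2 * x := by positivity
      linarith
    · have h3 : 2 * (B + 1) / e ≤ x ^ (1 - α) := by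
        calc 2 * (B + 1) / e = X ^ (1 - α) := by
              rw [hX, ← rpow_mul (by positivity), one_div, inv_mul_cancel₀ (by linarith), rpow_one]
          _ ≤ _ := rpow_le_rpow hX0.le h (by linarith)
      have h4 : x = x ^ (1 - α) * x ^ α := by rw [← rpow_add hx]; simp
      have h5 : 0 < x ^ α := by positivity
      have h6 : B * x ^ α ≤ e / 2 * x := by
        rw [div_le_iff₀ he] at h3
        have : B ≤ e / 2 * x ^ (1 - α) := by linarith
        calc B * x ^ α ≤ e / 2 * x ^ (1 - α) * x ^ α := by gcongr
          _ = e / 2 * x := by rw [mul_assoc, ← h4]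
      have : 0 ≤ B * X ^ α := by positivity
      linarith
  obtain ⟨D, hD⟩ := h2'
  refine ⟨C1 * exp D, by positivity, fun x hx => ?_⟩
  have hx0 : 0 < x := hl.trans_le hx
  calc x ^ a * exp (B * x ^ α) ≤ (C1 * exp (e / 2 * x)) * exp (D + e / 2 * x) := by
        gcongr
        · exact h1' x hx
        · exact hD x hx0
    _ = _ := by
        rw [exp_add, show e * x = e / 2 * x + e / 2 * x by ring, exp_add]; ring


noncomputable def th (α : ℝ) : ℝ := π / (1 + α)
noncomputable def om (α : ℝ) : ℂ := Complex.exp ((th α : ℂ) * Complex.I)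
noncomputable def kap (α : ℝ) : ℝ := - cos (th α)
noncomputable def sg (α c y : ℝ) : ℂ := (c : ℂ) + (y : ℂ) * om α

lemma th_gt {α : ℝ} (h0 : 0 < α) (h1 : α < 1) : π / 2 < th α := by
  unfold th; have := pi_pos; exact div_lt_div_of_pos_left this (by linarith) (by linarith)
lemma th_lt {α : ℝ} (h0 : 0 < α) : th α < π := by
  unfold th; have := pi_pos; rw [div_lt_iff₀ (by linarith)]; nlinarith
lemma ath_lt {α : ℝ} (h0 : 0 < α) (h1 : α < 1) : α * th α < π / 2 := by
  have := th_gt h0 h1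
  have h : (1 + α) * th α = π := by unfold th; field_simp
  linarith
lemma kap_pos {α : ℝ} (h0 : 0 < α) (h1 : α < 1) : 0 < kap α := by
  unfold kap
  have := cos_neg_of_pi_div_two_lt_of_lt (th_gt h0 h1) (by have := th_lt h0; have := pi_pos; linarith)
  linarith
lemma sin_th_pos {α : ℝ} (h0 : 0 < α) (h1 : α < 1) : 0 < sin (th α) :=
  sin_pos_of_pos_of_lt_pi (by have := th_gt h0 h1; have := pi_pos; linarith) (th_lt h0)

lemma om_re (α : ℝ) : (om α).re = - kap α := by simp [om, kap, Complex.exp_ofReal_mul_I_re]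
lemma om_im (α : ℝ) : (om α).im = sin (th α) := by simp [om, Complex.exp_ofReal_mul_I_im]
lemma om_norm (α : ℝ) : ‖om α‖ = 1 := by simp [om, Complex.norm_exp_ofReal_mul_I]
lemma sg_re (α c y : ℝ) : (sg α c y).re = c - y * kap α := by simp [sg, om_re]; ring
lemma sg_im (α c y : ℝ) : (sg α c y).im = y * sin (th α) := by simp [sg, om_im]

lemma sg_slit {α : ℝ} (h0 : 0 < α) (h1 : α < 1) {c y : ℝ} (hc : 0 < c) (hy : 0 ≤ y) :
    sg α c y ∈ Complex.slitPlane := by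
  rw [Complex.mem_slitPlane_iff, sg_re, sg_im]
  rcases hy.eq_or_lt with rfl | hy
  · left; simpa
  · right; exact (mul_pos hy (sin_th_pos h0 h1)).ne'

lemma sg_norm_le {α c y : ℝ} (hc : 0 ≤ c) (hy : 0 ≤ y) : ‖sg α c y‖ ≤ c + y := by
  refine (norm_add_le _ _).trans ?_
  rw [norm_mul, om_norm, Complex.norm_real, Complex.norm_real, norm_of_nonneg hc, norm_of_nonneg hy]
  simp

lemma sg_norm_ge {α : ℝ} (h0 : 0 < α) (h1 : α < 1) {c y : ℝ} (hc : 0 ≤ c) :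
    c * sin (th α) ≤ ‖sg α c y‖ := by
  have hs := sin_th_pos h0 h1
  apply le_of_sq_le_sq ?_ (norm_nonneg _)
  rw [Complex.sq_norm, Complex.normSq_apply, sg_re, sg_im]
  have : kap α = - cos (th α) := rfl
  rw [this]
  have h := sin_sq_add_cos_sq (th α)
  have e : (c - y * -cos (th α)) * (c - y * -cos (th α)) + y * sin (th α) * (y * sin (th α)) =
     (c * sin (th α)) ^ 2 + (y + c * cos (th α)) ^ 2 := by
    linear_combination (y ^ 2 - c ^ 2) * h
  rw [e]; nlinarith [sq_nonneg (y + c * cos (th α))]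

lemma sg_arg {α : ℝ} (h0 : 0 < α) (h1 : α < 1) {c y : ℝ} (hc : 0 < c) (hy : 0 ≤ y) :
    0 ≤ (sg α c y).arg ∧ (sg α c y).arg ≤ th α := by
  have hs := sin_th_pos h0 h1
  have hA : 0 ≤ (sg α c y).arg := by
    rw [Complex.arg_nonneg_iff, sg_im]; positivity
  refine ⟨hA, ?_⟩
  by_contra! hlt
  have hpi := Complex.arg_le_pi (sg α c y)
  have hn : 0 < ‖sg α c y‖ := norm_pos_iff.2 (Complex.slitPlane_ne_zero (sg_slit h0 h1 hc hy))
  have h2 : 0 < sin ((sg α c y).arg - th α) := by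
    apply sin_pos_of_pos_of_lt_pi
    · linarith
    · have := th_gt h0 h1; have := pi_pos; linarith
  rw [sin_sub] at h2
  have e1 := Complex.norm_mul_cos_arg (sg α c y)
  have e2 := Complex.norm_mul_sin_arg (sg α c y)
  rw [sg_re] at e1
  rw [sg_im] at e2
  have h3 : ‖sg α c y‖ * (sin (sg α c y).arg * cos (th α) - cos (sg α c y).arg * sin (th α)) = - c * sin (th α) := by
    have : kap α = - cos (th α) := rfl
    rw [this] at e1
    linear_combination cos (th α) * e2 - sin (th α) * e1
  have := mul_pos hn h2
  rw [h3] at this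
  nlinarith

lemma sg_cpow_re {α : ℝ} (h0 : 0 < α) (h1 : α < 1) {c y : ℝ} (hc : 0 < c) (hy : 0 ≤ y) :
    (c * sin (th α)) ^ α * cos (α * th α) ≤ (sg α c y ^ (α : ℂ)).re := by
  have hs := sin_th_pos h0 h1
  have hne := Complex.slitPlane_ne_zero (sg_slit h0 h1 hc hy)
  obtain ⟨ha, hb⟩ := sg_arg h0 h1 hc hy
  have hre : (sg α c y ^ (α : ℂ)).re = ‖sg α c y‖ ^ α * cos (α * (sg α c y).arg) := by
    rw [Complex.cpow_def_of_ne_zero hne, Complex.exp_re]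
    simp only [Complex.mul_re, Complex.mul_im, Complex.ofReal_re, Complex.ofReal_im, mul_zero, sub_zero, zero_add]
    rw [Complex.log_re, Complex.log_im, rpow_def_of_pos (norm_pos_iff.2 hne), mul_comm α]
  rw [hre]
  have hath := ath_lt h0 h1
  have h3 : α * (sg α c y).arg ≤ α * th α := by gcongr
  have hc1 : cos (α * th α) ≤ cos (α * (sg α c y).arg) := by
    apply cos_le_cos_of_nonneg_of_le_pi
    · positivity
    · have := pi_pos; linarith
    · exact h3
  have hc2 : 0 ≤ cos (α * th α) := by
    apply cos_nonneg_of_neg_pi_div_two_le_of_le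
    · have := mul_nonneg h0.le (ha.trans hb); have := pi_pos; linarith
    · exact hath.le
  exact mul_le_mul (rpow_le_rpow (by positivity) (sg_norm_ge h0 h1 hc.le) h0.le) hc1 hc2 (by positivity)

lemma cos_ath_pos {α : ℝ} (h0 : 0 < α) (h1 : α < 1) : 0 < cos (α * th α) := by
  apply cos_pos_of_mem_Ioo
  have := th_gt h0 h1; have := pi_pos
  have : 0 < α * th α := by apply mul_pos h0; linarith
  exact ⟨by linarith, ath_lt h0 h1⟩

lemma sg_cont (α c : ℝ) : Continuous (fun y => sg α c y) := by unfold sg; fun_prop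
lemma sg_deriv (α c y : ℝ) : HasDerivAt (fun y : ℝ => sg α c y) (om α) y := by
  unfold sg
  have := (Complex.ofRealCLM.hasDerivAt (x := y)).mul_const (om α)
  simpa using this.const_add (c : ℂ)

/-- master majorant, uniform for c in a compact range -/
lemma majorant {α : ℝ} (h0 : 0 < α) (h1 : α < 1) {c : ℝ} (hc : 0 < c) (a : ℝ) {B : ℝ} (hB : 0 ≤ B) :
    ∃ C : ℝ, 0 < C ∧ ∀ y : ℝ, 0 ≤ y →
      exp (sg α c y).re * ‖sg α c y‖ ^ a * exp (B * ‖sg α c y‖ ^ α) ≤ C * exp (-(kap α / 2) * y) := by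
  have hs := sin_th_pos h0 h1
  have hk := kap_pos h0 h1
  obtain ⟨C, hC, h⟩ := growth h0 h1 a hB (show 0 < c * sin (th α) by positivity) (show 0 < kap α / 2 by positivity)
  refine ⟨C * exp (c + kap α / 2 * c), by positivity, fun y hy => ?_⟩
  have := h _ (sg_norm_ge h0 h1 (y := y) hc.le)
  have h2 := sg_norm_le (α := α) hc.le hy
  rw [mul_assoc]
  calc _ ≤ exp (sg α c y).re * (C * exp (kap α / 2 * (c + y))) := by
        refine mul_le_mul_of_nonneg_left (this.trans ?_) (exp_pos _).le
        gcongr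
    _ = _ := by
        rw [sg_re, mul_left_comm, ← exp_add, mul_assoc, ← exp_add]
        congr 2
        ring


noncomputable def Hf (α c s : ℝ) : ℝ :=
  (∫ y in Set.Ioi (0:ℝ), Complex.exp (sg α c y) * sg α c y ^ (-(s:ℂ)) * om α).im

lemma cpow_cont {α : ℝ} (h0 : 0 < α) (h1 : α < 1) {c : ℝ} (hc : 0 < c) (s : ℂ) :
    ContinuousOn (fun y : ℝ => sg α c y ^ s) (Set.Ici 0) := fun y hy =>
  (ContinuousAt.comp (x := y) (g := fun z : ℂ => z ^ s) (continuousAt_cpow_const (sg_slit h0 h1 hc hy))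
    (sg_cont α c).continuousAt).continuousWithinAt

lemma Hf_int {α : ℝ} (h0 : 0 < α) (h1 : α < 1) {c : ℝ} (hc : 0 < c) (s : ℝ) :
    IntegrableOn (fun y : ℝ => Complex.exp (sg α c y) * sg α c y ^ (-(s:ℂ)) * om α) (Set.Ioi 0) := by
  have hk := kap_pos h0 h1
  obtain ⟨C, hC, h⟩ := majorant h0 h1 hc (-s) le_rfl
  refine Integrable.mono' ((exp_neg_integrableOn_Ioi 0 (show 0 < kap α / 2 by positivity)).const_mul C) ?_ ?_
  · refine ContinuousOn.aestronglyMeasurable ?_ measurableSet_Ioi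
    refine ContinuousOn.mono ?_ Set.Ioi_subset_Ici_self
    have := cpow_cont h0 h1 hc (-(s:ℂ))
    have h2 := (sg_cont α c).cexp.continuousOn (s := Set.Ici 0)
    exact (h2.mul this).mul continuousOn_const
  · refine (ae_restrict_iff' measurableSet_Ioi).2 (Eventually.of_forall fun y hy => ?_)
    have := h y (le_of_lt hy)
    rw [norm_mul, norm_mul, om_norm, Complex.norm_exp, ← Complex.ofReal_neg, Complex.norm_cpow_real]
    simpa using this

lemma Hf_rec {α : ℝ} (h0 : 0 < α) (h1 : α < 1) {c : ℝ} (hc : 0 < c) (s : ℝ) :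
    Hf α c s = s * Hf α c (s + 1) := by
  have hk := kap_pos h0 h1
  have i1 := Hf_int h0 h1 hc s
  have i2 := Hf_int h0 h1 hc (s + 1)
  have key := integral_Ioi_of_hasDerivAt_of_tendsto' (a := 0) (m := 0)
    (f := fun y : ℝ => Complex.exp (sg α c y) * sg α c y ^ (-(s:ℂ)))
    (f' := fun y : ℝ => Complex.exp (sg α c y) * sg α c y ^ (-(s:ℂ)) * om α
      - s * (Complex.exp (sg α c y) * sg α c y ^ (-((s + 1 : ℝ):ℂ)) * om α)) ?_ ?_ ?_
  · rw [integral_sub i1 (i2.const_mul _), integral_const_mul] at key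
    have := congrArg Complex.im key
    simp only [Complex.sub_im, Complex.im_ofReal_mul] at this
    change Hf α c s - s * Hf α c (s + 1) = _ at this
    have e : (Complex.exp (sg α c 0) * sg α c 0 ^ (-(s:ℂ))).im = 0 := by
      have : sg α c 0 = c := by simp [sg]
      rw [this, ← Complex.ofReal_neg, ← Complex.ofReal_cpow hc.le, ← Complex.ofReal_exp, ← Complex.ofReal_mul, Complex.ofReal_im]
    rw [e] at this
    simp at this
    linarith
  · intro y hy
    have hd := sg_deriv α c y
    have hd2 := HasDerivAt.comp y ((hasDerivAt_id (sg α c y)).cpow_const (c := -(s:ℂ)) (sg_slit h0 h1 hc hy)) hd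
    have := hd.cexp.mul hd2
    simp only [id] at this
    refine (HasDerivAt.congr_deriv this ?_ : _)
    simp only [Function.comp]
    have : (-((s + 1 : ℝ):ℂ)) = -(s:ℂ) - 1 := by push_cast; ring
    rw [this]; ring
  · exact i1.sub (i2.const_mul _)
  · obtain ⟨C, hC, h⟩ := majorant h0 h1 hc (-s) le_rfl
    refine squeeze_zero_norm' (a := fun y => C * exp (-(kap α / 2) * y)) ?_ ?_
    · filter_upwards [eventually_ge_atTop 0] with y hy
      have := h y hy
      rw [norm_mul, Complex.norm_exp, ← Complex.ofReal_neg, Complex.norm_cpow_real]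
      simpa using this
    · have : Tendsto (fun y : ℝ => exp (-(kap α / 2) * y)) atTop (𝓝 0) :=
        tendsto_exp_atBot.comp (tendsto_id.const_mul_atTop_of_neg (by linarith))
      simpa using this.const_mul C

lemma om_ray {α : ℝ} (h0 : 0 < α) (h1 : α < 1) {a : ℝ} (ha : 0 < a) :
    IntegrableOn (fun y : ℝ => Complex.exp (sg α 0 y) * sg α 0 y ^ (a:ℂ) * om α) (Set.Ioi 0) ∧
    (∫ y in Set.Ioi (0:ℝ), Complex.exp (sg α 0 y) * sg α 0 y ^ (a:ℂ) * om α).im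
      = Real.Gamma (a + 1) * sin (π * (a + 1)) := by
  have hk := kap_pos h0 h1
  have hth := th_gt h0 h1
  have hth2 := th_lt h0
  have hpi := pi_pos
  have hne : om α ≠ 0 := Complex.exp_ne_zero _
  have hlog : Complex.log (om α) = th α * Complex.I := by
    unfold om; rw [Complex.log_exp] <;> simp <;> linarith
  have hom' : - om α = Complex.exp (((th α - π : ℝ) : ℂ) * Complex.I) := by
    unfold om; push_cast; rw [sub_mul, Complex.exp_sub, Complex.exp_pi_mul_I, div_neg, div_one]
  have hlog' : Complex.log (-om α) = ((th α - π : ℝ) : ℂ) * Complex.I := by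
    rw [hom', Complex.log_exp]
    · rw [Complex.im_ofReal_mul, Complex.I_im]; linarith
    · rw [Complex.im_ofReal_mul, Complex.I_im]; linarith
  have heq : ∀ y ∈ Set.Ioi (0:ℝ), Complex.exp (sg α 0 y) * sg α 0 y ^ (a:ℂ) * om α =
      (((y ^ ((a + 1) - 1) : ℝ) : ℂ) * Complex.exp (-((-om α) * y))) * (om α ^ (a:ℂ) * om α) := by
    intro y hy
    have hy' : 0 < y := hy
    have hy2 : (y : ℂ) ≠ 0 := by exact_mod_cast hy'.ne'
    have : sg α 0 y = y * om α := by simp [sg]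
    have h3 : (y * om α) ^ (a:ℂ) = (y:ℂ) ^ (a:ℂ) * om α ^ (a:ℂ) := by
      rw [Complex.cpow_def_of_ne_zero (mul_ne_zero hy2 hne), Complex.cpow_def_of_ne_zero hy2,
        Complex.cpow_def_of_ne_zero hne, Complex.log_ofReal_mul hy' hne, Complex.ofReal_log hy'.le, add_mul, Complex.exp_add]
    rw [this, h3, add_sub_cancel_right, Complex.ofReal_cpow hy'.le]
    ring_nf
  constructor
  · have hi : IntegrableOn (fun y : ℝ => ((y ^ ((a + 1) - 1) : ℝ) : ℂ) * Complex.exp (-((-om α) * y))) (Set.Ioi 0) := by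
      refine Integrable.mono' (integrableOn_gam (a := a + 1) (b := kap α) (by linarith) hk) ?_ ?_
      · refine Measurable.aestronglyMeasurable ?_
        fun_prop
      · refine (ae_restrict_iff' measurableSet_Ioi).2 (Eventually.of_forall fun y hy => ?_)
        have : 0 ≤ y ^ (a + 1 - 1) := rpow_nonneg (le_of_lt hy) _
        rw [norm_mul, Complex.norm_real, norm_of_nonneg this, Complex.norm_exp]
        simp [om_re]
    have hi2 : IntegrableOn _ (Set.Ioi (0:ℝ)) volume := hi.mul_const (om α ^ (a:ℂ) * om α)
    exact hi2.congr_fun (fun y hy => (heq y hy).symm) measurableSet_Ioi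
  · rw [setIntegral_congr_fun measurableSet_Ioi heq, integral_mul_const,
      complex_gamma_integral (by linarith) (by simpa [om_re] using hk), mul_assoc, Complex.im_ofReal_mul]
    congr 1
    have : (-om α) ^ (-((a + 1 : ℝ) : ℂ)) * (om α ^ (a:ℂ) * om α) = Complex.exp (((π * (a + 1) : ℝ) : ℂ) * Complex.I) := by
      rw [Complex.cpow_def_of_ne_zero (neg_ne_zero.2 hne), Complex.cpow_def_of_ne_zero hne, hlog, hlog']
      nth_rewrite 1 [om]
      rw [← Complex.exp_add, ← Complex.exp_add]
      congr 1
      push_cast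
      ring
    rw [this, Complex.exp_ofReal_mul_I_im]


lemma rect {α : ℝ} (h0 : 0 < α) (h1 : α < 1) {a c Y : ℝ} (ha : 0 < a) (hc : 0 < c) (hY : 0 < Y)
    (h : ℂ → ℂ) (hh : h = fun z => Complex.exp z * z ^ (a:ℂ)) :
    (∫ y in (0:ℝ)..Y, h (sg α c y) * om α) - (∫ y in (0:ℝ)..Y, h (sg α 0 y) * om α)
     = (∫ x in (0:ℝ)..c, h (sg α x Y)) - ∫ x in (0:ℝ)..c, h (sg α x 0) := by
  have hs := sin_th_pos h0 h1
  set L : ℝ × ℝ →L[ℝ] ℂ := Complex.ofRealCLM.comp (ContinuousLinearMap.fst ℝ ℝ ℝ) +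
    om α • Complex.ofRealCLM.comp (ContinuousLinearMap.snd ℝ ℝ ℝ) with hL
  have hLs : ∀ p : ℝ × ℝ, L p = sg α p.1 p.2 := by
    intro p; simp [hL, sg, mul_comm]
  have hcontz : ∀ x y : ℝ, 0 ≤ x → 0 ≤ y → ContinuousAt h (sg α x y) := by
    intro x y hx hy
    rw [hh]
    refine Complex.continuous_exp.continuousAt.mul ?_
    apply Complex.continuousAt_cpow_const_of_re_pos
    · rw [sg_re, sg_im]
      rcases hy.eq_or_lt with rfl | hy
      · left; simpa
      · right; exact (mul_pos hy hs).ne'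
    · simpa using ha
  have hcont : ContinuousOn (fun p : ℝ × ℝ => h (L p)) (Set.uIcc 0 c ×ˢ Set.uIcc 0 Y) := by
    intro p hp
    rw [Set.uIcc_of_le hc.le, Set.uIcc_of_le hY.le] at hp
    refine ContinuousAt.continuousWithinAt ?_
    refine ContinuousAt.comp (g := h) ?_ L.continuous.continuousAt
    rw [hLs]
    exact hcontz _ _ hp.1.1 hp.2.1
  have hder : ∀ p ∈ Set.Ioo (min 0 c) (max 0 c) ×ˢ Set.Ioo (min 0 Y) (max 0 Y),
      HasFDerivAt (fun p : ℝ × ℝ => h (L p)) (deriv h (L p) • L) p := by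
    intro p hp
    rw [min_eq_left hc.le, min_eq_left hY.le] at hp
    have hsl : L p ∈ Complex.slitPlane := by
      rw [hLs]; exact sg_slit h0 h1 hp.1.1 hp.2.1.le
    have hd : DifferentiableAt ℂ h (L p) := by
      rw [hh]
      exact Complex.differentiableAt_exp.mul (differentiableAt_id.cpow_const hsl)
    have h2 := hd.hasDerivAt.complexToReal_fderiv
    have h3 := HasFDerivAt.comp p h2 L.hasFDerivAt
    refine (HasFDerivAt.congr_fderiv h3 ?_ : _)
    ext <;> simp
  have key := integral2_divergence_prod_of_hasFDerivAt (fun p : ℝ × ℝ => om α • h (L p)) (fun p => -h (L p))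
    (fun p => om α • (deriv h (L p) • L)) (fun p => -(deriv h (L p) • L)) 0 0 c Y
    (hcont.fun_const_smul (om α)) hcont.fun_neg (fun p hp => (hder p hp).fun_const_smul (om α)) (fun p hp => (hder p hp).fun_neg) ?_
  · have hz : ∀ x y : ℝ, (om α • (deriv h (L (x,y)) • L)) (1,0) + (-(deriv h (L (x,y)) • L)) (0,1) = 0 := by
      intro x y
      have e1 : L (1,0) = 1 := by rw [hLs]; simp [sg]
      have e2 : L (0,1) = om α := by rw [hLs]; simp [sg]
      simp only [smul_apply, neg_apply, e1, e2, smul_eq_mul]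
      ring
    simp only [hz, intervalIntegral.integral_zero] at key
    simp only [hLs, intervalIntegral.integral_neg, smul_eq_mul] at key
    simp only [mul_comm _ (om α)]
    linear_combination -key
  · refine IntegrableOn.congr_fun (f := fun _ => 0) integrableOn_zero (fun p _ => ?_) (measurableSet_uIcc.prod measurableSet_uIcc)
    have e1 : L (1,0) = 1 := by rw [hLs]; simp [sg]
    have e2 : L (0,1) = om α := by rw [hLs]; simp [sg]
    simp only [smul_apply, neg_apply, e1, e2, smul_eq_mul]
    ring

lemma Hf_base {α : ℝ} (h0 : 0 < α) (h1 : α < 1) {c : ℝ} (hc : 0 < c) {s : ℝ} (hs : s < 0) :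
    Hf α c s = π / Real.Gamma s := by
  have hk := kap_pos h0 h1
  set a := -s with hadef
  have ha : 0 < a := by linarith
  set h : ℂ → ℂ := fun z => Complex.exp z * z ^ (a:ℂ) with hh
  obtain ⟨i0, v0⟩ := om_ray h0 h1 ha
  have ic := Hf_int h0 h1 hc s
  have hca : -(s:ℂ) = (a:ℂ) := by simp [hadef]
  rw [Hf, hca]
  rw [hca] at ic
  have t1 := (intervalIntegral_tendsto_integral_Ioi 0 ic tendsto_id).sub
    (intervalIntegral_tendsto_integral_Ioi 0 i0 tendsto_id)
  have t2 : Tendsto (fun Y : ℝ => ∫ x in (0:ℝ)..c, h (sg α x Y)) atTop (𝓝 0) := by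
    obtain ⟨C, hC, hg⟩ := rpow_le_exp_const a ha.le (show 0 < kap α / 2 by positivity)
    refine squeeze_zero_norm' (a := fun Y => exp c * (C * exp (kap α / 2 * c)) * exp (-(kap α / 2) * Y) * |c - 0|) ?_ ?_
    · filter_upwards [eventually_gt_atTop 0] with Y hY
      refine intervalIntegral.norm_integral_le_of_norm_le_const fun x hx => ?_
      rw [Set.uIoc_of_le hc.le] at hx
      rw [hh, norm_mul, Complex.norm_exp, Complex.norm_cpow_real, sg_re]
      have hn := sg_norm_le (α := α) hx.1.le hY.le
      have := hg _ (norm_nonneg (sg α x Y))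
      calc exp (x - Y * kap α) * ‖sg α x Y‖ ^ a ≤ exp (c - Y * kap α) * (C * exp (kap α / 2 * (c + Y))) := by
            have : ‖sg α x Y‖ ^ a ≤ C * exp (kap α / 2 * (c + Y)) := by
              refine this.trans ?_
              have := hx.2
              gcongr
              linarith
            have h4 : x - Y * kap α ≤ c - Y * kap α := by linarith [hx.2]
            have := exp_le_exp.2 h4
            gcongr
        _ = _ := by
            rw [show exp c * (C * exp (kap α / 2 * c)) * exp (-(kap α / 2) * Y) = C * (exp c * exp (kap α / 2 * c) * exp (-(kap α / 2) * Y)) by ring,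
              mul_left_comm, ← exp_add, ← exp_add, ← exp_add]
            ring_nf
    · have : Tendsto (fun y : ℝ => exp (-(kap α / 2) * y)) atTop (𝓝 0) :=
        tendsto_exp_atBot.comp (tendsto_id.const_mul_atTop_of_neg (by linarith))
      simpa using (this.const_mul (exp c * (C * exp (kap α / 2 * c)))).mul_const (|c - 0|)
  have t3 := t2.sub_const (∫ x in (0:ℝ)..c, h (sg α x 0))
  have heq := tendsto_nhds_unique (t1.congr' (by
    filter_upwards [eventually_gt_atTop 0] with Y hY
    exact rect h0 h1 ha hc hY h hh)) t3
  have him := congrArg Complex.im heq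
  have e0 : (∫ x in (0:ℝ)..c, h (sg α x 0)).im = 0 := by
    have : ∫ x in (0:ℝ)..c, h (sg α x 0) = ∫ x in (0:ℝ)..c, ((exp x * x ^ a : ℝ) : ℂ) := by
      refine intervalIntegral.integral_congr fun x hx => ?_
      rw [Set.uIcc_of_le hc.le] at hx
      have : sg α x 0 = x := by simp [sg]
      simp only [hh, this]
      rw [Complex.ofReal_mul, Complex.ofReal_cpow hx.1, Complex.ofReal_exp]
    rw [this, intervalIntegral.integral_ofReal, Complex.ofReal_im]
  rw [Complex.sub_im, Complex.sub_im, v0, e0, Complex.zero_im, sub_zero] at him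
  have hres : (∫ y in Set.Ioi (0:ℝ), Complex.exp (sg α c y) * sg α c y ^ (a:ℂ) * om α).im
     = Real.Gamma (a + 1) * sin (π * (a + 1)) := by linarith
  rw [hres]
  have hr := Real.Gamma_mul_Gamma_one_sub s
  have hG : 0 < Real.Gamma (1 - s) := Gamma_pos_of_pos (by linarith)
  have e3 : a + 1 = 1 - s := by rw [hadef]; ring
  have e4 : sin (π * (1 - s)) = sin (π * s) := by rw [mul_sub, mul_one, sin_pi_sub]
  rw [e3, e4]
  by_cases hsin : sin (π * s) = 0
  · rw [hsin, div_zero] at hr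
    have : Real.Gamma s = 0 := by
      rcases mul_eq_zero.1 hr with h | h
      · exact h
      · exact absurd h hG.ne'
    simp [hsin, this]
  · have hpi := pi_pos.ne'
    have hGs : Real.Gamma s ≠ 0 := by
      intro h; rw [h, zero_mul] at hr
      exact (div_ne_zero hpi hsin) hr.symm
    rw [eq_div_iff hsin] at hr
    rw [eq_div_iff hGs]; linarith

lemma Hf_eq {α : ℝ} (h0 : 0 < α) (h1 : α < 1) {c : ℝ} (hc : 0 < c) {s : ℝ}
    (hs : ∀ n : ℕ, s ≠ n + 1) : Hf α c s = π / Real.Gamma s := by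
  have main : ∀ n : ℕ, ∀ s : ℝ, s < n → (∀ n : ℕ, s ≠ n + 1) → Hf α c s = π / Real.Gamma s := by
    intro n
    induction n with
    | zero => intro s hs _; exact Hf_base h0 h1 hc (by simpa using hs)
    | succ n ih =>
      intro s hs hn
      by_cases hz : s < 0
      · exact Hf_base h0 h1 hc hz
      have hn1 : s - 1 ≠ 0 := by have := hn 0; simp at this; exact sub_ne_zero.2 this
      have h2 := ih (s - 1) (by push_cast at hs; linarith) (fun k hk => hn (k + 1) (by push_cast; linarith))
      rw [Hf_rec h0 h1 hc (s - 1), sub_add_cancel] at h2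
      have hG := Real.Gamma_add_one hn1
      rw [sub_add_cancel] at hG
      rw [hG]
      rw [mul_comm] at h2
      rw [eq_div_of_mul_eq hn1 h2, div_div, mul_comm]
  obtain ⟨n, hn⟩ := exists_nat_gt s
  exact main n s hn hs


lemma M_rep {α : ℝ} (h0 : 0 < α) (h1 : α < 1) {c : ℝ} (hc : 0 < c) {r : ℝ} (hr : 0 ≤ r) :
    π * wrightFn (-α) (1 - α) (-r) =
      (∫ y in Set.Ioi (0:ℝ), Complex.exp (-(sg α c y ^ (α:ℂ) * r)) *
        (Complex.exp (sg α c y) * sg α c y ^ (-((1 - α : ℝ):ℂ)) * om α)).im := by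
  have hk := kap_pos h0 h1
  have hpi := pi_pos.ne'
  have hsum : HasSum (fun n : ℕ => ∫ y in Set.Ioi (0:ℝ), (((-r) ^ n / n.factorial : ℝ) : ℂ) *
      (Complex.exp (sg α c y) * sg α c y ^ (-((-α * n + (1 - α) : ℝ):ℂ)) * om α))
      (∫ y in Set.Ioi (0:ℝ), Complex.exp (-(sg α c y ^ (α:ℂ) * r)) *
        (Complex.exp (sg α c y) * sg α c y ^ (-((1 - α : ℝ):ℂ)) * om α)) := by
    have hbs : ∀ y : ℝ, HasSum (fun n : ℕ => exp (sg α c y).re * ‖sg α c y‖ ^ (-(1 - α)) * ((r * ‖sg α c y‖ ^ α) ^ n / n.factorial))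
        (exp (sg α c y).re * ‖sg α c y‖ ^ (-(1 - α)) * exp (r * ‖sg α c y‖ ^ α)) := by
      intro y
      have := NormedSpace.expSeries_div_hasSum_exp (r * ‖sg α c y‖ ^ α)
      rw [← Real.exp_eq_exp_ℝ] at this
      exact this.mul_left _
    have hpow : ∀ y : ℝ, 0 < y → ∀ n : ℕ, sg α c y ^ (-((-α * n + (1 - α) : ℝ):ℂ)) =
        (sg α c y ^ (α:ℂ)) ^ n * sg α c y ^ (-((1 - α : ℝ):ℂ)) := by
      intro y hy n
      have hne := Complex.slitPlane_ne_zero (sg_slit h0 h1 hc hy.le)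
      rw [← Complex.cpow_mul_nat, ← Complex.cpow_add _ _ hne]
      congr 1
      push_cast
      ring
    refine hasSum_integral_of_dominated_convergence
      (fun n y => exp (sg α c y).re * ‖sg α c y‖ ^ (-(1 - α)) * ((r * ‖sg α c y‖ ^ α) ^ n / n.factorial)) ?_ ?_ ?_ ?_ ?_
    · intro n
      exact ((Hf_int h0 h1 hc (-α * n + (1 - α))).const_mul _).aestronglyMeasurable
    · intro n
      refine (ae_restrict_iff' measurableSet_Ioi).2 (Eventually.of_forall fun y hy => ?_)
      rw [hpow y hy, norm_mul, norm_mul, norm_mul, norm_mul, om_norm, Complex.norm_exp, norm_pow, Complex.norm_cpow_real,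
        ← Complex.ofReal_neg, Complex.norm_cpow_real, Complex.norm_real, norm_div, norm_pow, norm_neg, norm_of_nonneg hr, mul_pow]
      simp only [RCLike.norm_natCast]
      apply le_of_eq; ring
    · exact Eventually.of_forall fun y => (hbs y).summable
    · obtain ⟨C, hC, h⟩ := majorant h0 h1 hc (-(1 - α)) hr
      simp only [fun y => (hbs y).tsum_eq]
      refine Integrable.mono' ((exp_neg_integrableOn_Ioi 0 (show 0 < kap α / 2 by positivity)).const_mul C) ?_ ?_
      · refine Measurable.aestronglyMeasurable ?_
        have := (sg_cont α c).measurable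
        fun_prop
      · refine (ae_restrict_iff' measurableSet_Ioi).2 (Eventually.of_forall fun y hy => ?_)
        rw [norm_of_nonneg (by positivity)]
        exact h y (le_of_lt hy)
    · refine (ae_restrict_iff' measurableSet_Ioi).2 (Eventually.of_forall fun y hy => ?_)
      have := NormedSpace.expSeries_div_hasSum_exp (-(sg α c y ^ (α:ℂ) * r))
      rw [← Complex.exp_eq_exp_ℂ] at this
      have := this.mul_right (Complex.exp (sg α c y) * sg α c y ^ (-((1 - α : ℝ):ℂ)) * om α)
      refine (iff_of_eq (congrArg (fun f => HasSum f _) (funext fun n => ?_))).2 this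
      rw [hpow y hy]
      push_cast
      rw [neg_pow (_ * _), mul_pow, neg_pow (r : ℂ)]
      ring
  have h2 := Complex.hasSum_im hsum
  rw [← h2.tsum_eq, wrightFn, ← tsum_mul_left]
  congr 1
  ext n
  rw [integral_const_mul, Complex.im_ofReal_mul]
  change _ = _ * Hf α c (-α * n + (1 - α))
  rw [Hf_eq h0 h1 hc]
  · rw [div_mul_div_comm]; ring
  · intro k hk
    have : 0 ≤ α * n := by positivity
    have : (0:ℝ) ≤ k := by positivity
    linarith

lemma wM {α : ℝ} (h0 : 0 < α) (h1 : α < 1) {c : ℝ} (hc : 0 < c) (w : ℝ → ℝ) (hw : Measurable w)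
    (hi : IntegrableOn (fun r => w r * exp (-((c * sin (th α)) ^ α * cos (α * th α) * r))) (Set.Ioi 0)) :
    IntegrableOn (fun r => w r * wrightFn (-α) (1 - α) (-r)) (Set.Ioi 0) ∧
    π * ∫ r in Set.Ioi (0:ℝ), w r * wrightFn (-α) (1 - α) (-r) =
      (∫ y in Set.Ioi (0:ℝ), (∫ r in Set.Ioi (0:ℝ), (w r : ℂ) * Complex.exp (-(sg α c y ^ (α:ℂ) * r))) *
        (Complex.exp (sg α c y) * sg α c y ^ (-((1 - α : ℝ):ℂ)) * om α)).im := by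
  have hsm := (sg_cont α c).measurable
  have hG : Integrable (fun p : ℝ × ℝ => ((w p.1 : ℂ) * Complex.exp (-(sg α c p.2 ^ (α:ℂ) * p.1))) *
        (Complex.exp (sg α c p.2) * sg α c p.2 ^ (-((1 - α : ℝ):ℂ)) * om α))
      ((volume.restrict (Set.Ioi (0:ℝ))).prod (volume.restrict (Set.Ioi (0:ℝ)))) := by
    have hm := hi.norm.mul_prod (Hf_int h0 h1 hc (1 - α)).norm
    refine Integrable.mono' hm ?_ ?_
    · refine Measurable.aestronglyMeasurable ?_
      fun_prop
    · rw [Measure.prod_restrict]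
      refine (ae_restrict_iff' (measurableSet_Ioi.prod measurableSet_Ioi)).2 (Eventually.of_forall fun p hp => ?_)
      rw [norm_mul]
      have hp1 : 0 < p.1 := hp.1
      have := sg_cpow_re h0 h1 hc (le_of_lt hp.2)
      refine mul_le_mul_of_nonneg_right ?_ (norm_nonneg _)
      rw [norm_mul, norm_mul, Complex.norm_real]
      refine mul_le_mul_of_nonneg_left ?_ (norm_nonneg _)
      rw [Complex.norm_exp, norm_of_nonneg (exp_pos _).le, exp_le_exp]
      simp only [Complex.neg_re, Complex.mul_re, Complex.ofReal_re, Complex.ofReal_im, mul_zero, sub_zero]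
      have := mul_le_mul_of_nonneg_right this hp1.le
      linarith
  have hin : ∀ r ∈ Set.Ioi (0:ℝ), w r * wrightFn (-α) (1 - α) (-r) =
      π⁻¹ * (∫ y in Set.Ioi (0:ℝ), ((w r : ℂ) * Complex.exp (-(sg α c y ^ (α:ℂ) * r))) *
        (Complex.exp (sg α c y) * sg α c y ^ (-((1 - α : ℝ):ℂ)) * om α)).im := by
    intro r hr
    have := M_rep h0 h1 hc (le_of_lt hr)
    simp only [mul_assoc (w r : ℂ)]
    rw [integral_const_mul, Complex.im_ofReal_mul, ← this]
    field_simp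
  have hI := hG.integral_prod_left
  constructor
  · have h2 : IntegrableOn _ (Set.Ioi (0:ℝ)) volume := hI.im.const_mul π⁻¹
    exact h2.congr_fun (fun r hr => (hin r hr).symm) measurableSet_Ioi
  · rw [setIntegral_congr_fun measurableSet_Ioi hin, integral_const_mul, ← mul_assoc, mul_inv_cancel₀ pi_pos.ne', one_mul]
    have h3 := integral_im hI
    refine Eq.trans h3 ?_
    change Complex.im _ = _
    rw [integral_integral_swap hG]
    congr 1
    refine integral_congr_ae (Eventually.of_forall fun y => ?_)
    simp only []
    rw [integral_mul_const]


lemma expM_int {α : ℝ} (h0 : 0 < α) (h1 : α < 1) (z : ℝ) :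
    IntegrableOn (fun r => exp (z * r) * wrightFn (-α) (1 - α) (-r)) (Set.Ioi 0) := by
  have hs := sin_th_pos h0 h1
  have hcos := cos_ath_pos h0 h1
  set c := ((|z| + 1) / cos (α * th α)) ^ (1 / α) / sin (th α) with hcdef
  have hc : 0 < c := by positivity
  have hb : (c * sin (th α)) ^ α * cos (α * th α) = |z| + 1 := by
    rw [hcdef, div_mul_cancel₀ _ hs.ne', ← rpow_mul (by positivity), one_div, inv_mul_cancel₀ h0.ne', rpow_one,
      div_mul_cancel₀ _ hcos.ne']
  refine (wM h0 h1 hc (fun r => exp (z * r)) (by fun_prop) ?_).1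
  rw [hb]
  have : 0 < |z| + 1 - z := by have := le_abs_self z; linarith
  refine (exp_neg_integrableOn_Ioi 0 this).congr_fun (fun r _ => ?_) measurableSet_Ioi
  simp only []
  rw [← exp_add]; ring_nf

lemma moment {α : ℝ} (h0 : 0 < α) (h1 : α < 1) {p : ℝ} (hp : 0 < p) (hpk : ∀ k : ℕ, α * p ≠ k) :
    IntegrableOn (fun r => r ^ p * wrightFn (-α) (1 - α) (-r)) (Set.Ioi 0) ∧
    ∫ r in Set.Ioi (0:ℝ), r ^ p * wrightFn (-α) (1 - α) (-r) = Real.Gamma (p + 1) / Real.Gamma (α * p + 1) := by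
  have hs := sin_th_pos h0 h1
  have hcos := cos_ath_pos h0 h1
  have hth := th_gt h0 h1
  have hath := ath_lt h0 h1
  have hpi := pi_pos
  have hb : 0 < (1 * sin (th α)) ^ α * cos (α * th α) := by positivity
  obtain ⟨hi, he⟩ := wM h0 h1 one_pos (fun r => r ^ p) (by fun_prop) (by
    have := integrableOn_gam (a := p + 1) (by linarith) hb
    simpa using this)
  refine ⟨hi, ?_⟩
  have hy : ∀ y ∈ Set.Ioi (0:ℝ), (∫ r in Set.Ioi (0:ℝ), ((r ^ p : ℝ) : ℂ) * Complex.exp (-(sg α 1 y ^ (α:ℂ) * r))) *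
        (Complex.exp (sg α 1 y) * sg α 1 y ^ (-((1 - α : ℝ):ℂ)) * om α) =
        (Real.Gamma (p + 1) : ℂ) * (Complex.exp (sg α 1 y) * sg α 1 y ^ (-((α * p + 1 : ℝ):ℂ)) * om α) := by
    intro y hy
    have hy' : 0 < y := hy
    have hne := Complex.slitPlane_ne_zero (sg_slit h0 h1 one_pos hy'.le)
    have := complex_gamma_integral (a := p + 1) (by linarith) (w := sg α 1 y ^ (α:ℂ))
      (hb.trans_le (sg_cpow_re h0 h1 one_pos hy'.le))
    rw [add_sub_cancel_right] at this
    rw [this]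
    obtain ⟨ha, hb⟩ := sg_arg h0 h1 one_pos hy'.le
    have him : (Complex.log (sg α 1 y) * (α:ℂ)).im = (sg α 1 y).arg * α := by
      rw [Complex.im_mul_ofReal, Complex.log_im]
    have h3 : (sg α 1 y).arg * α ≤ α * th α := by rw [mul_comm]; gcongr
    rw [← Complex.cpow_mul]
    · have : sg α 1 y ^ (-((α * p + 1 : ℝ):ℂ)) = sg α 1 y ^ ((α:ℂ) * (-((p + 1 : ℝ):ℂ))) * sg α 1 y ^ (-((1 - α : ℝ):ℂ)) := by
        rw [← Complex.cpow_add _ _ hne]; congr 1; push_cast; ring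
      rw [this]; ring
    · rw [him]; have := mul_nonneg ha h0.le; linarith
    · rw [him]; linarith
  rw [setIntegral_congr_fun measurableSet_Ioi hy, integral_const_mul, Complex.im_ofReal_mul] at he
  change _ = _ * Hf α 1 (α * p + 1) at he
  rw [Hf_eq h0 h1 one_pos (fun n h => hpk n (by linarith))] at he
  have e2 : Real.Gamma (p + 1) * (π / Real.Gamma (α * p + 1)) = π * (Real.Gamma (p + 1) / Real.Gamma (α * p + 1)) := by ring
  rw [e2] at he
  exact mul_left_cancel₀ hpi.ne' he

/-- Lower bound for the Laplace transform -/
lemma lap_lower {α : ℝ} (h0 : 0 < α) (h1 : α < 1) {T : ℝ} (hT : 1 ≤ T) {K : ℕ} (hK : 1 ≤ K) :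
    T ^ K / (K + 1).factorial ≤ ∫ r in Set.Ioi (0:ℝ), exp (T ^ α * r) * wrightFn (-α) (1 - α) (-r) := by
  have hT0 : 0 < T := by linarith
  set p := (K + 1 / 2 : ℝ) / α with hpdef
  have hp : 0 < p := by positivity
  have hap : α * p = K + 1 / 2 := by rw [hpdef]; field_simp
  obtain ⟨hi, he⟩ := moment h0 h1 hp (by
    intro k hk
    rw [hap] at hk
    have : (2 * K + 1 : ℝ) = 2 * k := by linarith
    have : 2 * K + 1 = 2 * k := by exact_mod_cast this
    omega)
  have hG : 0 < Real.Gamma (p + 1) := Gamma_pos_of_pos (by linarith)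
  have step : T ^ (K + 1 / 2 : ℝ) / Real.Gamma (K + 1 / 2 + 1) ≤
      ∫ r in Set.Ioi (0:ℝ), exp (T ^ α * r) * wrightFn (-α) (1 - α) (-r) := by
    calc T ^ (K + 1 / 2 : ℝ) / Real.Gamma (K + 1 / 2 + 1)
        = ∫ r in Set.Ioi (0:ℝ), (T ^ (K + 1 / 2 : ℝ) / Real.Gamma (p + 1)) * (r ^ p * wrightFn (-α) (1 - α) (-r)) := by
          rw [integral_const_mul, he, hap]; field_simp
      _ ≤ _ := by
          refine setIntegral_mono_on (hi.const_mul _) (expM_int h0 h1 _) measurableSet_Ioi fun r hr => ?_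
          have hr' : 0 < r := hr
          rw [← mul_assoc]
          refine mul_le_mul_of_nonneg_right ?_ (wright_nonneg h0 h1 hr')
          have := rpow_le_gamma_exp hp.le (show 0 ≤ T ^ α * r by positivity)
          rw [mul_rpow (by positivity) hr'.le, ← rpow_mul hT0.le, hap] at this
          rw [div_mul_eq_mul_div, div_le_iff₀ hG]; linarith
  refine le_trans ?_ step
  have hK' : (1:ℝ) ≤ K := by exact_mod_cast hK
  have hG2 : Real.Gamma (K + 1 / 2 + 1) ≤ (K + 1).factorial := by
    rw [← Real.Gamma_nat_eq_factorial]
    apply Real.Gamma_strictMonoOn_Ici.monotoneOn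
    · simp only [Set.mem_Ici]; linarith
    · simp only [Set.mem_Ici]; push_cast; linarith
    · push_cast; linarith
  have hGp : 0 < Real.Gamma (K + 1 / 2 + 1) := Gamma_pos_of_pos (by linarith)
  have : T ^ K ≤ T ^ (K + 1 / 2 : ℝ) := by
    rw [← rpow_natCast]; exact rpow_le_rpow_of_exponent_le hT (by linarith)
  gcongr

lemma lap_lower2 {α : ℝ} (h0 : 0 < α) (h1 : α < 1) {T q : ℝ} (hT : 2 ≤ T) (hq0 : 0 < q) (hq : q < 1) :
    (1 - q) * exp (q * T) ≤ T * ∫ r in Set.Ioi (0:ℝ), exp (T ^ α * r) * wrightFn (-α) (1 - α) (-r) := by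
  set X := ∫ r in Set.Ioi (0:ℝ), exp (T ^ α * r) * wrightFn (-α) (1 - α) (-r) with hX
  have hk : ∀ k : ℕ, 2 ≤ k → T ^ k / k.factorial ≤ T * X := by
    intro k hk
    obtain ⟨K, rfl⟩ : ∃ K, k = K + 1 := ⟨k - 1, by omega⟩
    have := lap_lower h0 h1 (show 1 ≤ T by linarith) (show 1 ≤ K by omega)
    rw [pow_succ, mul_comm, mul_div_assoc]
    gcongr
  have h2 := hk 2 le_rfl
  have hall : ∀ k : ℕ, T ^ k / k.factorial ≤ T * X := by
    intro k
    match k with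
    | 0 => norm_num at h2 ⊢; nlinarith
    | 1 => norm_num at h2 ⊢; nlinarith
    | k + 2 => exact hk _ (by omega)
  have s1 := NormedSpace.expSeries_div_hasSum_exp (q * T)
  rw [← Real.exp_eq_exp_ℝ] at s1
  have s2 := (hasSum_geometric_of_lt_one hq0.le hq).mul_right (T * X)
  have := hasSum_le (fun k => ?_) s1 s2
  · rw [inv_mul_eq_div, le_div_iff₀ (by linarith)] at this; linarith
  · rw [mul_pow, mul_div_assoc]
    have := hall k
    gcongr


lemma fund_eq {α m t : ℝ} {d : ℕ} (ht : 0 < t) (hm : 0 < m) (v : EuclideanSpace ℝ (Fin d)) (hv : ‖v‖ = 1) :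
    fundSol α d t ((m * t) • v) = ∫ r in Set.Ioi (0:ℝ),
      (exp (-(m * t) ^ 2 / (4 * (t ^ α * r))) / (4 * π * (t ^ α * r)) ^ ((d:ℝ) / 2)) *
        (exp (t ^ α * r) * wrightFn (-α) (1 - α) (-r)) := by
  have hn : ‖(m * t) • v‖ = m * t := by rw [norm_smul, hv, norm_of_nonneg (by positivity), mul_one]
  have hz : 0 < t ^ (-α) := by positivity
  have := integral_comp_mul_left_Ioi (fun r => (exp (-(m * t) ^ 2 / (4 * (t ^ α * r))) / (4 * π * (t ^ α * r)) ^ ((d:ℝ) / 2)) *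
        (exp (t ^ α * r) * wrightFn (-α) (1 - α) (-r))) 0 hz
  rw [mul_zero, smul_eq_mul] at this
  rw [fundSol, hn, ← mul_right_inj' (inv_ne_zero hz.ne'), ← this, ← mul_assoc, inv_mul_cancel₀ hz.ne', one_mul]
  refine setIntegral_congr_fun measurableSet_Ioi fun s _ => ?_
  have e : t ^ α * (t ^ (-α) * s) = s := by
    rw [← mul_assoc, ← rpow_add ht]; simp
  simp only [e]
  ring

lemma F_int {α : ℝ} (h0 : 0 < α) (h1 : α < 1) {z b : ℝ} (hz : 0 < z) (hb : 0 < b) (d : ℕ) :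
    IntegrableOn (fun r => (exp (-b ^ 2 / (4 * (z * r))) / (4 * π * (z * r)) ^ ((d:ℝ) / 2)) *
        (exp (z * r) * wrightFn (-α) (1 - α) (-r))) (Set.Ioi 0) := by
  have hpi := pi_pos
  obtain ⟨C, hC, h⟩ := rpow_le_exp_const ((d:ℝ) / 2) (by positivity) (show 0 < b ^ 2 * π by positivity)
  refine Integrable.bdd_mul (c := C) (expM_int h0 h1 z) ?_ ?_
  · refine Measurable.aestronglyMeasurable ?_
    fun_prop
  · refine (ae_restrict_iff' measurableSet_Ioi).2 (Eventually.of_forall fun r hr => ?_)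
    have hr' : 0 < r := hr
    have hs : 0 < z * r := by positivity
    generalize z * r = s at hs
    rw [norm_of_nonneg (by positivity)]
    have h2 := h (4 * π * s)⁻¹ (by positivity)
    rw [inv_rpow (by positivity)] at h2
    have e1 : b ^ 2 * π * (4 * π * s)⁻¹ = b ^ 2 / (4 * s) := by field_simp
    rw [e1] at h2
    rw [div_eq_mul_inv, neg_div, exp_neg]
    rw [inv_mul_le_iff₀ (exp_pos _)]
    linarith

lemma F_lower {α : ℝ} (h0 : 0 < α) (h1 : α < 1) {ρ : ℝ} (hρ : 0 < ρ) (d : ℕ) {A : ℝ} (hA0 : 0 < A) (hA : A < 1) :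
    ∃ C : ℝ, 0 < C ∧ ∀ t : ℝ, 0 < t → ∀ r : ℝ, 0 < r →
      C * ((exp (-(ρ * t)) * exp (A * t ^ α * r) - 1) * wrightFn (-α) (1 - α) (-r)) ≤
      (exp (-(2 * ρ * t) ^ 2 / (4 * (t ^ α * r))) / (4 * π * (t ^ α * r)) ^ ((d:ℝ) / 2)) *
        (exp (t ^ α * r) * wrightFn (-α) (1 - α) (-r)) := by
  have hpi := pi_pos
  obtain ⟨C, hC, h⟩ := rpow_le_exp_const ((d:ℝ) / 2) (by positivity) (show 0 < (1 - A) / (4 * π) by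
    have : 0 < 1 - A := by linarith
    positivity)
  refine ⟨C⁻¹, by positivity, fun t ht r hr => ?_⟩
  have hM := wright_nonneg h0 h1 hr
  rw [← mul_assoc, ← mul_assoc, mul_assoc A]
  refine mul_le_mul_of_nonneg_right ?_ hM
  have hs : 0 < t ^ α * r := by positivity
  generalize t ^ α * r = s at hs
  rcases lt_or_ge s (ρ * t) with hlt | hge
  · have : exp (-(ρ * t)) * exp (A * s) ≤ 1 := by
      rw [← exp_add, exp_le_one_iff]; nlinarith
    have h3 : C⁻¹ * (exp (-(ρ * t)) * exp (A * s) - 1) ≤ 0 :=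
      mul_nonpos_of_nonneg_of_nonpos (by positivity) (by linarith)
    refine h3.trans ?_
    positivity
  · have h2 := h (4 * π * s) (by positivity)
    have e1 : (1 - A) / (4 * π) * (4 * π * s) = s - A * s := by field_simp
    rw [e1] at h2
    have h5 : 0 < (4 * π * s) ^ ((d:ℝ) / 2) := by positivity
    have h4 : -(ρ * t) ≤ -(2 * ρ * t) ^ 2 / (4 * s) := by
      rw [neg_div, neg_le_neg_iff, div_le_iff₀ (by positivity)]
      have : 0 < ρ * t := by positivity
      nlinarith
    have h6 : C⁻¹ * exp (A * s) ≤ exp s / (4 * π * s) ^ ((d:ℝ) / 2) := by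
      rw [le_div_iff₀ h5, mul_assoc, inv_mul_le_iff₀ hC]
      calc _ ≤ exp (A * s) * (C * exp (s - A * s)) := by gcongr
        _ = _ := by rw [mul_left_comm, ← exp_add]; ring_nf
    calc C⁻¹ * (exp (-(ρ * t)) * exp (A * s) - 1) ≤ exp (-(ρ * t)) * (C⁻¹ * exp (A * s)) := by
          have : 0 < C⁻¹ := by positivity
          nlinarith
      _ ≤ exp (-(2 * ρ * t) ^ 2 / (4 * s)) * (exp s / (4 * π * s) ^ ((d:ℝ) / 2)) := by
          gcongr
      _ = _ := by ring

theorem stmt2 (d : ℕ) (hd : 1 ≤ d) (α m : ℝ) (hα : α ∈ Set.Ioo (0 : ℝ) 1)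
    (hm0 : 0 < m) (hm : m < 2 * Real.sqrt (1 - gammaAlpha α))
    (v : EuclideanSpace ℝ (Fin d)) (hv : ‖v‖ = 1) :
    Tendsto (fun t : ℝ => fundSol α d t ((m * t) • v)) atTop atTop := by
  obtain ⟨h0, h1⟩ := hα
  obtain ⟨ρ, rfl⟩ : ∃ ρ, m = 2 * ρ := ⟨m / 2, by ring⟩
  have hρ : 0 < ρ := by linarith
  have hρ1 : ρ < 1 := by
    have hg : 0 ≤ gammaAlpha α := mul_nonneg (by linarith) (by positivity)
    have : √(1 - gammaAlpha α) ≤ 1 := Real.sqrt_le_iff.2 ⟨zero_le_one, by linarith⟩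
    linarith
  set q := √(√ρ) with hq
  have hsq : √ρ ^ 2 = ρ := Real.sq_sqrt hρ.le
  have hq2 : q ^ 2 = √ρ := Real.sq_sqrt (Real.sqrt_nonneg _)
  have hs0 : 0 < √ρ := Real.sqrt_pos.2 hρ
  have hq0 : 0 < q := Real.sqrt_pos.2 hs0
  have hs1 : √ρ < 1 := by nlinarith
  have hq1 : q < 1 := by nlinarith
  have hgap : 0 < √ρ - ρ := by nlinarith
  obtain ⟨C, hC, hlow⟩ := F_lower h0 h1 hρ d (A := q ^ α) (by positivity) (rpow_lt_one hq0.le hq1 h0)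
  set M0 := ∫ r in Set.Ioi (0:ℝ), wrightFn (-α) (1 - α) (-r) with hM0
  have hMi : IntegrableOn (fun r => wrightFn (-α) (1 - α) (-r)) (Set.Ioi 0) := by
    simpa using expM_int h0 h1 0
  have hlim : Tendsto (fun t : ℝ => C * ((1 - q) / q * (exp ((√ρ - ρ) * t) / t) - M0)) atTop atTop := by
    refine Tendsto.const_mul_atTop hC ?_
    refine tendsto_atTop_add_const_right _ _ ?_
    refine Tendsto.const_mul_atTop (div_pos (by linarith) hq0) ?_
    have := tendsto_exp_mul_div_rpow_atTop 1 _ hgap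
    simpa using this
  refine tendsto_atTop_mono' _ ?_ hlim
  filter_upwards [eventually_ge_atTop (2 / q)] with t ht
  have hT : 2 ≤ q * t := by rw [div_le_iff₀ hq0] at ht; linarith
  have ht0 : 0 < t := lt_of_lt_of_le (by positivity) ht
  have hX := lap_lower2 h0 h1 hT hq0 hq1
  rw [mul_rpow hq0.le ht0.le] at hX
  set X := ∫ r in Set.Ioi (0:ℝ), exp (q ^ α * t ^ α * r) * wrightFn (-α) (1 - α) (-r) with hXd
  rw [fund_eq ht0 hm0 v hv]
  calc C * ((1 - q) / q * (exp ((√ρ - ρ) * t) / t) - M0) ≤ C * (exp (-(ρ * t)) * X - M0) := by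
        have : (1 - q) / q * (exp ((√ρ - ρ) * t) / t) ≤ exp (-(ρ * t)) * X := by
          have e : exp ((√ρ - ρ) * t) = exp (-(ρ * t)) * exp (q * (q * t)) := by
            rw [← exp_add, ← hq2]; congr 1; ring
          rw [e, div_mul_div_comm, div_le_iff₀ (by positivity)]
          have := mul_le_mul_of_nonneg_left hX (exp_pos (-(ρ * t))).le
          linarith
        gcongr
    _ = ∫ r in Set.Ioi (0:ℝ), C * ((exp (-(ρ * t)) * exp (q ^ α * t ^ α * r) - 1) * wrightFn (-α) (1 - α) (-r)) := by
        rw [integral_const_mul]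
        congr 1
        simp only [sub_mul, one_mul, mul_assoc (exp (-(ρ * t)))]
        rw [integral_sub ((expM_int h0 h1 _).const_mul _) hMi, integral_const_mul]
    _ ≤ _ := by
        refine setIntegral_mono_on ?_ (F_int h0 h1 (by positivity) (by positivity) d) measurableSet_Ioi
          fun r hr => hlow t ht0 r hr
        refine Integrable.const_mul ?_ C
        simp only [sub_mul, one_mul, mul_assoc (exp (-(ρ * t)))]
        exact ((expM_int h0 h1 _).const_mul _).sub hMi
end

section
/- Let d ≥ 1 be an integer, α ∈ (0,1), and let v ∈ ℝ^d be a unit vector. Let M_α be the least natural number n satisfying n > (2/γ_α)^{(1-α)/α}. If m > 2 M_α √(1 − γ_α/M_α), then u_{α,1}(t, m t v) → 0 as t → ∞. -/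
open Real MeasureTheory Filter Topology

/-- `M_α` is the least natural number `n` with `n > (2/γ_α)^{(1-α)/α}`. -/
noncomputable def Malpha (α : ℝ) : ℕ :=
  sInf {n : ℕ | (2 / gammaAlpha α) ^ ((1 - α) / α) < (n : ℝ)}


lemma aux_summable (α : ℝ) (h0 : 0 < α) (h1 : α < 1) (z : ℝ) (hz : 0 ≤ z) :
    Summable (fun n : ℕ => z ^ n / n.factorial * Real.Gamma (α * (n + 1))) := by
  have hb : ∀ n : ℕ, Real.Gamma (α * (n + 1)) ≤ ((n + 1).factorial : ℝ) ^ α / α := by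
    intro n
    have h2 := Real.Gamma_mul_add_mul_le_rpow_Gamma_mul_rpow_Gamma (s := (n : ℝ) + 2) (t := 1)
      (a := α) (b := 1 - α) (by positivity) one_pos h0 (by linarith) (by ring)
    rw [Real.Gamma_one, Real.one_rpow, mul_one, mul_one,
      show α * ((n : ℝ) + 2) + (1 - α) = α * (n + 1) + 1 by ring,
      Real.Gamma_add_one (by positivity),
      show (n : ℝ) + 2 = ((n + 1 : ℕ) : ℝ) + 1 by push_cast; ring, Real.Gamma_nat_eq_factorial] at h2
    rw [le_div_iff₀ h0]
    have hG : 0 < Real.Gamma (α * (n + 1)) := Real.Gamma_pos_of_pos (by positivity)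
    refine le_trans ?_ h2
    have : 0 ≤ α * n * Real.Gamma (α * (n + 1)) := by positivity
    nlinarith
  have hs : Summable (fun n : ℕ => z ^ n / n.factorial * (((n + 1).factorial : ℝ) ^ α / α)) := by
    rcases hz.eq_or_lt with rfl | hz
    · apply summable_of_ne_finset_zero (s := {0})
      intro b hb
      have : b ≠ 0 := by simpa using hb
      simp [this]
    apply summable_of_ratio_test_tendsto_lt_one (l := 0) one_pos
    · refine Eventually.of_forall fun n => ?_
      have : (0:ℝ) < ((n + 1).factorial : ℝ) := by positivity
      positivity
    · have key : ∀ n : ℕ, ‖z ^ (n+1) / (n+1).factorial * (((n + 1+1).factorial : ℝ) ^ α / α)‖ /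
          ‖z ^ n / n.factorial * (((n + 1).factorial : ℝ) ^ α / α)‖ =
          z * (((n:ℝ) + 2) ^ α / ((n:ℝ) + 1)) := by
        intro n
        rw [Real.norm_of_nonneg (by positivity), Real.norm_of_nonneg (by positivity),
          Nat.factorial_succ (n + 1)]
        push_cast
        rw [Real.mul_rpow (by positivity) (by positivity)]
        have e1 : ((n + 1).factorial : ℝ) = (n + 1) * n.factorial := by
          rw [Nat.factorial_succ]; push_cast; ring
        have : (0:ℝ) < ((n + 1).factorial : ℝ) ^ α := by positivity
        generalize ((n + 1).factorial : ℝ) ^ α = X at *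
        rw [e1, show (n:ℝ) + 1 + 1 = n + 2 by ring]
        field_simp
        ring
      simp_rw [key]
      rw [show (0:ℝ) = z * 0 by simp]
      apply Tendsto.const_mul
      have t1 : Tendsto (fun n : ℕ => 2 * ((n:ℝ) + 2) ^ (-(1 - α))) atTop (𝓝 (2 * 0)) :=
        ((tendsto_rpow_neg_atTop (by linarith)).comp
          (tendsto_atTop_add_const_right _ 2 tendsto_natCast_atTop_atTop)).const_mul 2
      rw [mul_zero] at t1
      refine squeeze_zero (fun n => by positivity) (fun n => ?_) t1
      have h2 : (0:ℝ) < (n:ℝ) + 2 := by positivity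
      rw [show -(1 - α) = α - 1 by ring, Real.rpow_sub_one h2.ne', div_le_iff₀ (by positivity)]
      have : 0 < ((n:ℝ) + 2) ^ α := by positivity
      rw [mul_div_assoc', div_mul_eq_mul_div, le_div_iff₀ h2]
      have : 0 ≤ ((n:ℝ) + 2) ^ α * n := by positivity
      nlinarith
  refine Summable.of_nonneg_of_le (fun n => ?_) (fun n => ?_) hs
  · have : 0 < Real.Gamma (α * (n + 1)) := Real.Gamma_pos_of_pos (by positivity)
    positivity
  · exact mul_le_mul_of_nonneg_left (hb n) (by positivity)

lemma aux_refl (s : ℝ) (hs : 0 < s) :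
    (Real.Gamma (1 - s))⁻¹ = Real.Gamma s * Real.sin (π * s) / π := by
  have h := Real.Gamma_mul_Gamma_one_sub s
  have hG : Real.Gamma s ≠ 0 := (Real.Gamma_pos_of_pos hs).ne'
  have : Real.Gamma (1 - s) = π / (Real.sin (π * s) * Real.Gamma s) := by
    rw [← div_div, ← h]; field_simp
  rw [this, inv_div, mul_comm]

lemma aux_cos (α θ : ℝ) (h0 : 0 < α) (h1 : α < 1) (hθ : 0 ≤ θ) (hθ2 : θ < π / 2) :
    Real.cos θ ^ α ≤ Real.cos (α * θ) := by
  have hc : ∀ x ∈ Set.Icc 0 θ, 0 < Real.cos x := fun x hx =>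
    Real.cos_pos_of_mem_Ioo ⟨by linarith [hx.1, Real.pi_pos], by linarith [hx.2]⟩
  have hαx : ∀ x ∈ Set.Icc 0 θ, α * x ∈ Set.Icc 0 x := fun x hx =>
    ⟨mul_nonneg h0.le hx.1, by nlinarith [hx.1]⟩
  have hc' : ∀ x ∈ Set.Icc 0 θ, 0 < Real.cos (α * x) := fun x hx =>
    hc _ ⟨(hαx x hx).1, (hαx x hx).2.trans hx.2⟩
  have hd : ∀ x ∈ Set.Icc 0 θ, HasDerivAt
      (fun x => Real.log (Real.cos (α * x)) - α * Real.log (Real.cos x))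
      ((-Real.sin (α * x) * (α * 1)) / Real.cos (α * x) - α * (-Real.sin x / Real.cos x)) x := by
    intro x hx
    exact ((((hasDerivAt_id x).const_mul α).cos).log (hc' x hx).ne').sub
      (((Real.hasDerivAt_cos x).log (hc x hx).ne').const_mul α)
  have hmono : MonotoneOn (fun x => Real.log (Real.cos (α * x)) - α * Real.log (Real.cos x))
      (Set.Icc 0 θ) := by
    apply monotoneOn_of_deriv_nonneg (convex_Icc 0 θ)
    · exact fun x hx => (hd x hx).continuousAt.continuousWithinAt
    · exact fun x hx => (hd x (interior_subset hx)).differentiableAt.differentiableWithinAt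
    · intro x hx
      have hx := interior_subset hx
      rw [(hd x hx).deriv]
      have ht : Real.tan (α * x) ≤ Real.tan x := by
        apply Real.strictMonoOn_tan.monotoneOn
        · exact ⟨by linarith [(hαx x hx).1, Real.pi_pos], by linarith [(hαx x hx).2, hx.2]⟩
        · exact ⟨by linarith [hx.1, Real.pi_pos], by linarith [hx.2]⟩
        · exact (hαx x hx).2
      rw [Real.tan_eq_sin_div_cos, Real.tan_eq_sin_div_cos] at ht
      have := mul_le_mul_of_nonneg_left ht h0.le
      have e : (-Real.sin (α * x) * (α * 1)) / Real.cos (α * x) - α * (-Real.sin x / Real.cos x) =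
        α * (Real.sin x / Real.cos x) - α * (Real.sin (α * x) / Real.cos (α * x)) := by ring
      rw [e]; linarith
  have := hmono ⟨le_rfl, hθ⟩ ⟨hθ, le_rfl⟩ hθ
  simp only [mul_zero, Real.cos_zero, Real.log_one, sub_zero] at this
  have hm : θ ∈ Set.Icc 0 θ := ⟨hθ, le_rfl⟩
  rw [Real.rpow_def_of_pos (hc θ hm), ← Real.le_log_iff_exp_le (hc' θ hm)]
  linarith

lemma aux_re_pow (α a y : ℝ) (h0 : 0 < α) (h1 : α < 1) (ha : 0 < a) (hy : 0 < y) :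
    a ^ α ≤ (((a : ℂ) + y * Complex.I) ^ (α : ℂ)).re ∧
    Real.cos (α * (π / 2)) * y ^ α ≤ (((a : ℂ) + y * Complex.I) ^ (α : ℂ)).re := by
  set s : ℂ := (a : ℂ) + y * Complex.I with hs
  have hre : s.re = a := by simp [hs]
  have him : s.im = y := by simp [hs]
  rw [Complex.cpow_ofReal_re]
  have harg0 : 0 ≤ s.arg := Complex.arg_nonneg_iff.2 (by rw [him]; exact hy.le)
  have harg1 : s.arg < π / 2 := by
    have := Complex.abs_arg_lt_pi_div_two_iff.2 (Or.inl (by rw [hre]; exact ha) : 0 < s.re ∨ s = 0)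
    rwa [abs_of_nonneg harg0] at this
  have hn : 0 ≤ ‖s‖ := norm_nonneg _
  rw [mul_comm s.arg α]
  constructor
  · have : a = ‖s‖ * Real.cos s.arg := by rw [Complex.norm_mul_cos_arg, hre]
    have hcp : 0 ≤ Real.cos s.arg :=
      Real.cos_nonneg_of_mem_Icc ⟨by linarith [Real.pi_pos], harg1.le⟩
    conv_lhs => rw [this]
    rw [Real.mul_rpow hn hcp]
    exact mul_le_mul_of_nonneg_left (aux_cos α _ h0 h1 harg0 harg1) (by positivity)
  · rw [mul_comm]
    have hys : y ≤ ‖s‖ := by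
      have := Complex.abs_im_le_norm s
      rw [him, abs_of_pos hy] at this
      exact this
    have hp := Real.pi_pos
    apply mul_le_mul (Real.rpow_le_rpow hy.le hys h0.le)
    · apply Real.cos_le_cos_of_nonneg_of_le_pi
      · positivity
      · nlinarith
      · exact mul_le_mul_of_nonneg_left harg1.le h0.le
    · exact Real.cos_nonneg_of_mem_Icc ⟨by nlinarith, by nlinarith⟩
    · positivity

lemma aux_int1 (w r : ℝ) (hw : 0 < w) (hr : 0 < r) :
    IntegrableOn (fun t : ℝ => t ^ (w - 1) * Real.exp (-(r * t))) (Set.Ioi 0) := by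
  refine Integrable.of_integral_ne_zero ?_
  rw [Real.integral_rpow_mul_exp_neg_mul_Ioi hw hr]
  have := Real.Gamma_pos_of_pos hw
  positivity

lemma aux_meas (w : ℝ) (r : ℂ) : AEStronglyMeasurable
    (fun t : ℝ => ((t ^ (w - 1) : ℝ) : ℂ) * Complex.exp (-(r * t)))
    (volume.restrict (Set.Ioi 0)) := by
  apply Measurable.aestronglyMeasurable
  fun_prop

lemma aux_norm (w : ℝ) (r : ℂ) (t : ℝ) (ht : 0 < t) :
    ‖((t ^ (w - 1) : ℝ) : ℂ) * Complex.exp (-(r * t))‖ =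
      t ^ (w - 1) * Real.exp (-(r.re * t)) := by
  rw [norm_mul, Complex.norm_exp, Complex.norm_real, Real.norm_of_nonneg (by positivity)]
  simp

lemma aux_int1c (w : ℝ) (r : ℂ) (hw : 0 < w) (hr : 0 < r.re) :
    IntegrableOn (fun t : ℝ => ((t ^ (w - 1) : ℝ) : ℂ) * Complex.exp (-(r * t))) (Set.Ioi 0) := by
  refine Integrable.mono' (aux_int1 w r.re hw hr) (aux_meas w r) ?_
  refine (ae_restrict_iff' measurableSet_Ioi).2 (ae_of_all _ fun t ht => ?_)
  exact (aux_norm w r t ht).le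

lemma aux_gamma_diff (w : ℝ) (r : ℂ) (hw : 0 < w) (hr : 0 < r.re) :
    DifferentiableAt ℂ (fun r : ℂ => ∫ t : ℝ in Set.Ioi 0,
      ((t ^ (w - 1) : ℝ) : ℂ) * Complex.exp (-(r * t))) r := by
  have hbr : ∀ x ∈ Metric.ball r (r.re / 2), r.re / 2 < x.re := by
    intro x hx
    rw [Metric.mem_ball, dist_eq_norm] at hx
    have := (Complex.abs_re_le_norm (x - r)).trans_lt hx
    rw [Complex.sub_re, abs_lt] at this
    linarith [this.1]
  have := hasDerivAt_integral_of_dominated_loc_of_deriv_le (μ := volume.restrict (Set.Ioi (0:ℝ)))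
    (F := fun (r : ℂ) (t : ℝ) => ((t ^ (w - 1) : ℝ) : ℂ) * Complex.exp (-(r * t)))
    (F' := fun (r : ℂ) (t : ℝ) => ((t ^ (w - 1) : ℝ) : ℂ) * (Complex.exp (-(r * t)) * (-(1 * t))))
    (bound := fun t : ℝ => t ^ ((w + 1) - 1) * Real.exp (-(r.re / 2 * t)))
    (x₀ := r) (s := Metric.ball r (r.re / 2))
    (Metric.ball_mem_nhds r (by positivity))
    (Eventually.of_forall fun x => aux_meas w x) (aux_int1c w r hw hr)
    (by apply Measurable.aestronglyMeasurable; fun_prop)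
    (by
      refine (ae_restrict_iff' measurableSet_Ioi).2 (ae_of_all _ fun t ht x hx => ?_)
      have ht : 0 < t := ht
      rw [← mul_assoc, norm_mul, aux_norm w x t ht, add_sub_cancel_right]
      simp only [one_mul, norm_neg, Complex.norm_real, Real.norm_of_nonneg ht.le]
      rw [mul_right_comm, ← Real.rpow_add_one ht.ne', sub_add_cancel]
      gcongr
      exact (hbr x hx).le)
    (aux_int1 (w + 1) _ (by linarith) (by linarith))
    (by
      refine ae_of_all _ fun t x hx => ?_
      exact ((((hasDerivAt_id x).mul_const (t : ℂ)).neg).cexp).const_mul _)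
  exact this.2.differentiableAt

lemma aux_gamma (w : ℝ) (r : ℂ) (hw : 0 < w) (hr : 0 < r.re) :
    ∫ t : ℝ in Set.Ioi 0, ((t ^ (w - 1) : ℝ) : ℂ) * Complex.exp (-(r * t)) =
      (1 / r) ^ (w : ℂ) * Real.Gamma w := by
  have ho : IsOpen {z : ℂ | 0 < z.re} := isOpen_lt continuous_const Complex.continuous_re
  have hconv : IsPreconnected {z : ℂ | 0 < z.re} := (convex_halfSpace_re_gt 0).isPreconnected
  have hf : AnalyticOnNhd ℂ (fun r : ℂ => ∫ t : ℝ in Set.Ioi 0,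
      ((t ^ (w - 1) : ℝ) : ℂ) * Complex.exp (-(r * t))) {z : ℂ | 0 < z.re} :=
    DifferentiableOn.analyticOnNhd
      (fun x hx => (aux_gamma_diff w x hw hx).differentiableWithinAt) ho
  have hg : AnalyticOnNhd ℂ (fun r : ℂ => (1 / r) ^ (w : ℂ) * Real.Gamma w) {z : ℂ | 0 < z.re} := by
    refine DifferentiableOn.analyticOnNhd (fun x hx => DifferentiableAt.differentiableWithinAt ?_) ho
    have hx : 0 < x.re := hx
    have hx0 : x ≠ 0 := by rintro rfl; simp at hx
    refine DifferentiableAt.mul_const (DifferentiableAt.cpow_const ?_ ?_) _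
    · exact (differentiableAt_const _).fun_div differentiableAt_id hx0
    · left
      rw [one_div, Complex.inv_re]
      have : 0 < Complex.normSq x := Complex.normSq_pos.2 hx0
      positivity
  refine hf.eqOn_of_preconnected_of_frequently_eq hg hconv (z₀ := 1) (by simp) ?_ hr
  have ht : Tendsto (fun n : ℕ => ((1 + 1 / ((n : ℝ) + 1) : ℝ) : ℂ)) atTop (𝓝[≠] 1) := by
    apply tendsto_nhdsWithin_of_tendsto_nhds_of_eventually_within
    · have : Tendsto (fun n : ℕ => (1 + 1 / ((n : ℝ) + 1) : ℝ)) atTop (𝓝 (1 + 0)) :=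
        tendsto_one_div_add_atTop_nhds_zero_nat.const_add 1
      rw [add_zero] at this
      exact (Complex.continuous_ofReal.tendsto' 1 1 (by simp)).comp this
    · refine Eventually.of_forall fun n => ?_
      have : (0:ℝ) < 1 / ((n : ℝ) + 1) := by positivity
      simp only [Set.mem_compl_iff, Set.mem_singleton_iff]
      intro h
      have : (1 + 1 / ((n : ℝ) + 1) : ℝ) = 1 := by exact_mod_cast h
      linarith
  refine ht.frequently (Frequently.of_forall fun n => ?_)
  have hp : (0:ℝ) < 1 + 1 / ((n : ℝ) + 1) := by positivity
  generalize (1 + 1 / ((n : ℝ) + 1) : ℝ) = x at hp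
  have := Real.integral_rpow_mul_exp_neg_mul_Ioi hw hp
  have h2 := congrArg (fun x : ℝ => (x : ℂ)) this
  rw [← integral_complex_ofReal] at h2
  push_cast [Complex.ofReal_cpow (by positivity : 0 ≤ 1 / x)] at h2
  convert h2 using 2

noncomputable def cW (α : ℝ) : ℂ := Complex.exp (((α * (π / 2) : ℝ) : ℂ) * Complex.I)

lemma cW_norm (α : ℝ) : ‖cW α‖ = 1 := Complex.norm_exp_ofReal_mul_I _

lemma cW_re (α : ℝ) : (cW α).re = Real.cos (α * (π / 2)) := Complex.exp_ofReal_mul_I_re _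

lemma aux_series (α : ℝ) (h0 : 0 < α) (h1 : α < 1) (z : ℝ) (hz : 0 < z) (ε : ℝ) (hε : 0 < ε) :
    HasSum (fun n : ℕ => (-(z : ℂ)) ^ n / n.factorial * cW α ^ (n + 1) *
        ((1 / ((ε : ℂ) - Complex.I)) ^ ((α * (n + 1) : ℝ) : ℂ) * Real.Gamma (α * (n + 1))))
      (∫ t : ℝ in Set.Ioi 0, cW α * ((t ^ (α - 1) : ℝ) : ℂ) *
        Complex.exp (-(z * cW α * ((t ^ α : ℝ) : ℂ))) *
        Complex.exp (-(((ε : ℂ) - Complex.I) * t))) := by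
  have hre : 0 < ((ε : ℂ) - Complex.I).re := by simpa using hε
  have hw : ∀ n : ℕ, 0 < α * ((n : ℝ) + 1) := fun n => by positivity
  have hnc : ∀ n : ℕ, ‖(-(z : ℂ)) ^ n / n.factorial * cW α ^ (n + 1)‖ = z ^ n / n.factorial := by
    intro n
    rw [norm_mul, norm_div, norm_pow, norm_pow, cW_norm, norm_neg, Complex.norm_real,
      Real.norm_of_nonneg hz.le, Complex.norm_natCast, one_pow, mul_one]
  have key := hasSum_integral_of_summable_integral_norm (μ := volume.restrict (Set.Ioi (0:ℝ)))
    (F := fun (n : ℕ) (t : ℝ) => (-(z : ℂ)) ^ n / n.factorial * cW α ^ (n + 1) *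
      (((t ^ (α * ((n:ℝ) + 1) - 1) : ℝ) : ℂ) * Complex.exp (-(((ε : ℂ) - Complex.I) * t))))
    (fun n => (aux_int1c _ _ (hw n) hre).const_mul _)
    (by
      have hs := (aux_summable α h0 h1 (z * (1 / ε) ^ α) (by positivity)).mul_right ((1 / ε) ^ α)
      refine hs.congr fun n => ?_
      have : ∀ t ∈ Set.Ioi (0:ℝ), ‖(-(z : ℂ)) ^ n / n.factorial * cW α ^ (n + 1) *
        (((t ^ (α * ((n:ℝ) + 1) - 1) : ℝ) : ℂ) * Complex.exp (-(((ε : ℂ) - Complex.I) * t)))‖ =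
        z ^ n / n.factorial * (t ^ (α * ((n:ℝ) + 1) - 1) * Real.exp (-(ε * t))) := by
        intro t ht
        rw [norm_mul, hnc, aux_norm _ _ _ ht]
        simp
      rw [setIntegral_congr_fun measurableSet_Ioi this, integral_const_mul,
        Real.integral_rpow_mul_exp_neg_mul_Ioi (hw n) hε, mul_add, mul_one,
        Real.rpow_add (by positivity), Real.rpow_mul (by positivity), Real.rpow_natCast, mul_pow]
      ring)
  have e1 : ∀ n : ℕ, ∫ t : ℝ in Set.Ioi 0, (-(z : ℂ)) ^ n / n.factorial * cW α ^ (n + 1) *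
      (((t ^ (α * ((n:ℝ) + 1) - 1) : ℝ) : ℂ) * Complex.exp (-(((ε : ℂ) - Complex.I) * t))) =
      (-(z : ℂ)) ^ n / n.factorial * cW α ^ (n + 1) *
        ((1 / ((ε : ℂ) - Complex.I)) ^ ((α * (n + 1) : ℝ) : ℂ) * Real.Gamma (α * (n + 1))) := by
    intro n
    rw [integral_const_mul, aux_gamma _ _ (hw n) hre]
  simp_rw [e1] at key
  refine (?_ : HasSum _ _ = HasSum _ _).mpr key
  congr 1
  refine setIntegral_congr_fun (measurableSet_Ioi (a := (0:ℝ))) fun t ht => ?_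
  have ht : 0 < t := ht
  have hexp : HasSum (fun n : ℕ => (-(z * cW α * ((t ^ α : ℝ) : ℂ))) ^ n / n.factorial)
      (Complex.exp (-(z * cW α * ((t ^ α : ℝ) : ℂ)))) := by
    rw [Complex.exp_eq_exp_ℂ]
    exact NormedSpace.expSeries_div_hasSum_exp _
  have := (hexp.mul_left (cW α * ((t ^ (α - 1) : ℝ) : ℂ))).mul_right
    (Complex.exp (-(((ε : ℂ) - Complex.I) * t)))
  rw [← this.tsum_eq]
  congr 1
  funext n
  have e2 : t ^ (α * ((n:ℝ) + 1) - 1) = t ^ (α - 1) * (t ^ α) ^ n := by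
    rw [← Real.rpow_natCast, ← Real.rpow_mul ht.le, ← Real.rpow_add ht]
    congr 1; ring
  rw [e2]
  push_cast
  rw [show -((z : ℂ) * cW α * ((t ^ α : ℝ) : ℂ)) = (-(z:ℂ)) * cW α * ((t ^ α : ℝ) : ℂ) by ring,
    mul_pow, mul_pow]
  ring

lemma aux_int2 (α k : ℝ) (h0 : 0 < α) (hk : 0 < k) :
    IntegrableOn (fun t : ℝ => t ^ (α - 1) * Real.exp (-k * t ^ α)) (Set.Ioi 0) ∧
    ∫ t in Set.Ioi (0:ℝ), t ^ (α - 1) * Real.exp (-k * t ^ α) = 1 / (k * α) := by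
  have h : ∫ t in Set.Ioi (0:ℝ), t ^ (α - 1) * Real.exp (-k * t ^ α) = 1 / (k * α) := by
    rw [integral_rpow_mul_exp_neg_mul_rpow h0 (by linarith) hk]
    rw [show -(α - 1 + 1) / α = -1 by field_simp; ring, show (α - 1 + 1) / α = 1 by field_simp; ring,
      Real.Gamma_one, Real.rpow_neg_one]
    field_simp
  refine ⟨Integrable.of_integral_ne_zero ?_, h⟩
  rw [h]; positivity

lemma aux_cospos (α : ℝ) (h0 : 0 < α) (h1 : α < 1) : 0 < Real.cos (α * (π / 2)) := by
  have := Real.pi_pos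
  exact Real.cos_pos_of_mem_Ioo ⟨by nlinarith, by nlinarith⟩

lemma aux_wright (α : ℝ) (h0 : 0 < α) (h1 : α < 1) (z : ℝ) (hz : 0 < z) :
    π * wrightFn (-α) (1 - α) (-z) = (∫ t : ℝ in Set.Ioi 0, cW α * ((t ^ (α - 1) : ℝ) : ℂ) *
        Complex.exp (-(z * cW α * ((t ^ α : ℝ) : ℂ))) * Complex.exp (Complex.I * t)).im := by
  have hcp := aux_cospos α h0 h1
  have T1 : Tendsto (fun ε : ℝ => ∫ t : ℝ in Set.Ioi 0, cW α * ((t ^ (α - 1) : ℝ) : ℂ) *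
        Complex.exp (-(z * cW α * ((t ^ α : ℝ) : ℂ))) *
        Complex.exp (-(((ε : ℂ) - Complex.I) * t))) (𝓝[>] 0)
      (𝓝 (∫ t : ℝ in Set.Ioi 0, cW α * ((t ^ (α - 1) : ℝ) : ℂ) *
        Complex.exp (-(z * cW α * ((t ^ α : ℝ) : ℂ))) * Complex.exp (Complex.I * t))) := by
    refine tendsto_integral_filter_of_dominated_convergence
      (fun t : ℝ => t ^ (α - 1) * Real.exp (-(z * Real.cos (α * (π / 2))) * t ^ α)) ?_ ?_
      (aux_int2 α _ h0 (by positivity)).1 ?_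
    · refine Eventually.of_forall fun ε => ?_
      apply Measurable.aestronglyMeasurable
      fun_prop
    · filter_upwards [self_mem_nhdsWithin] with ε hε
      have hε : 0 < ε := hε
      refine (ae_restrict_iff' measurableSet_Ioi).2 (ae_of_all _ fun t ht => ?_)
      have ht : 0 < t := ht
      rw [norm_mul, norm_mul, norm_mul, cW_norm, Complex.norm_exp, Complex.norm_exp,
        Complex.norm_real, Real.norm_of_nonneg (by positivity)]
      have e1 : (-(z * cW α * ((t ^ α : ℝ) : ℂ))).re = -(z * Real.cos (α * (π / 2))) * t ^ α := by
        rw [Complex.neg_re, Complex.re_mul_ofReal, Complex.re_ofReal_mul, cW_re]; ring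
      rw [e1, one_mul]
      have e2 : (-(((ε : ℂ) - Complex.I) * t)).re = -(ε * t) := by simp
      rw [e2]
      apply mul_le_of_le_one_right (by positivity)
      rw [Real.exp_le_one_iff]
      have := mul_pos hε ht
      linarith
    · refine ae_of_all _ fun t => ?_
      refine Tendsto.mono_left ?_ nhdsWithin_le_nhds
      have : Continuous (fun ε : ℝ => cW α * ((t ^ (α - 1) : ℝ) : ℂ) *
        Complex.exp (-(z * cW α * ((t ^ α : ℝ) : ℂ))) *
        Complex.exp (-(((ε : ℂ) - Complex.I) * t))) := by fun_prop
      convert this.tendsto 0 using 3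
      simp
  set g : ℕ → ℂ := fun n : ℕ => (-(z : ℂ)) ^ n / n.factorial * cW α ^ (n + 1) *
        ((1 / (((0:ℝ) : ℂ) - Complex.I)) ^ ((α * (n + 1) : ℝ) : ℂ) * Real.Gamma (α * (n + 1))) with hg
  have hbd : ∀ (n : ℕ) (ε : ℝ), ‖(-(z : ℂ)) ^ n / n.factorial * cW α ^ (n + 1) *
        ((1 / ((ε : ℂ) - Complex.I)) ^ ((α * (n + 1) : ℝ) : ℂ) * Real.Gamma (α * (n + 1)))‖ ≤
        z ^ n / n.factorial * Real.Gamma (α * (n + 1)) := by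
    intro n ε
    have hw : 0 < α * ((n : ℝ) + 1) := by positivity
    have hG : 0 < Real.Gamma (α * (n + 1)) := Real.Gamma_pos_of_pos hw
    rw [norm_mul, norm_mul, norm_div, norm_pow, norm_pow, cW_norm, norm_neg, Complex.norm_real,
      Real.norm_of_nonneg hz.le, Complex.norm_natCast, one_pow, mul_one]
    refine mul_le_mul_of_nonneg_left ?_ (by positivity)
    rw [norm_mul, Complex.norm_real, Real.norm_of_nonneg hG.le, Complex.norm_cpow_real]
    apply mul_le_of_le_one_left hG.le
    apply Real.rpow_le_one (norm_nonneg _) _ hw.le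
    rw [norm_div, norm_one]
    have h2 : 1 ≤ ‖(ε : ℂ) - Complex.I‖ := by
      have := Complex.abs_im_le_norm ((ε : ℂ) - Complex.I)
      simpa using this
    exact div_le_one_of_le₀ h2 (norm_nonneg _)
  have hsum := aux_summable α h0 h1 z hz.le
  have T2 : Tendsto (fun ε : ℝ => ∑' n : ℕ, (-(z : ℂ)) ^ n / n.factorial * cW α ^ (n + 1) *
        ((1 / ((ε : ℂ) - Complex.I)) ^ ((α * (n + 1) : ℝ) : ℂ) * Real.Gamma (α * (n + 1))))
      (𝓝[>] 0) (𝓝 (∑' n, g n)) := by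
    refine tendsto_tsum_of_dominated_convergence hsum (fun n => ?_)
      (Eventually.of_forall fun ε n => hbd n ε)
    refine Tendsto.mono_left ?_ nhdsWithin_le_nhds
    have hc : ContinuousAt (fun ε : ℝ => (-(z : ℂ)) ^ n / n.factorial * cW α ^ (n + 1) *
        ((1 / ((ε : ℂ) - Complex.I)) ^ ((α * (n + 1) : ℝ) : ℂ) * Real.Gamma (α * (n + 1)))) 0 := by
      refine ContinuousAt.mul continuousAt_const (ContinuousAt.mul ?_ continuousAt_const)
      refine ContinuousAt.cpow ?_ continuousAt_const ?_
      · refine ContinuousAt.div continuousAt_const (by fun_prop) (by simp)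
      · right; simp
    exact hc
  have hEq : ∑' n, g n = ∫ t : ℝ in Set.Ioi 0, cW α * ((t ^ (α - 1) : ℝ) : ℂ) *
        Complex.exp (-(z * cW α * ((t ^ α : ℝ) : ℂ))) * Complex.exp (Complex.I * t) := by
    refine tendsto_nhds_unique T2 (T1.congr' ?_)
    filter_upwards [self_mem_nhdsWithin] with ε hε
    exact (aux_series α h0 h1 z hz ε hε).tsum_eq.symm
  rw [← hEq]
  have hgs : Summable g := Summable.of_norm_bounded hsum (fun n => hbd n 0)
  rw [Complex.im_tsum hgs, wrightFn, ← tsum_mul_left]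
  congr 1
  funext n
  have hw : 0 < α * ((n : ℝ) + 1) := by positivity
  have e1 : -α * (n : ℝ) + (1 - α) = 1 - α * (n + 1) := by ring
  rw [e1, ← div_div, div_eq_mul_inv _ (Real.Gamma _), aux_refl _ hw]
  have e2 : g n = (((-z) ^ n / n.factorial * Real.Gamma (α * (n + 1)) : ℝ) : ℂ) *
      Complex.exp (((π * (α * (n + 1)) : ℝ) : ℂ) * Complex.I) := by
    rw [hg]
    simp only
    have e3 : (1 / (((0:ℝ) : ℂ) - Complex.I)) = Complex.I := by simp
    rw [e3, Complex.cpow_def_of_ne_zero Complex.I_ne_zero, Complex.log_I, cW, ← Complex.exp_nat_mul]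
    push_cast
    have : Complex.exp ((π * (α * (n + 1))) * Complex.I) =
      Complex.exp ((n + 1) * (α * (π / 2) * Complex.I)) *
        Complex.exp ((π / 2 * Complex.I) * (α * (n + 1))) := by
      rw [← Complex.exp_add]; congr 1; ring
    rw [this]; ring
  rw [e2, Complex.im_ofReal_mul, Complex.exp_ofReal_mul_I_im]
  have := Real.pi_ne_zero
  field_simp

noncomputable def FW (α z : ℝ) (s : ℂ) : ℂ :=
  Complex.exp (s - z * s ^ (α : ℂ)) * s ^ ((α - 1 : ℝ) : ℂ)

lemma FW_diff (α z : ℝ) (s : ℂ) (hs : s ∈ Complex.slitPlane) : DifferentiableAt ℂ (FW α z) s := by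
  unfold FW
  refine DifferentiableAt.mul (DifferentiableAt.cexp (differentiableAt_id.sub
    (DifferentiableAt.const_mul ?_ _))) ?_
  · exact differentiableAt_id.cpow_const hs
  · exact differentiableAt_id.cpow_const hs

lemma FW_norm (α z a y δ : ℝ) (h0 : 0 < α) (h1 : α < 1) (hz : 0 < z) (ha : 0 < a) (hy : 0 < y)
    (hδ0 : 0 ≤ δ) (hδ1 : δ ≤ 1) :
    ‖FW α z (a + y * Complex.I)‖ ≤ Real.exp (a - (1 - δ) * z * a ^ α) *
      (y ^ (α - 1) * Real.exp (-(z * δ * Real.cos (α * (π / 2))) * y ^ α)) := by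
  obtain ⟨b1, b2⟩ := aux_re_pow α a y h0 h1 ha hy
  unfold FW
  rw [norm_mul, Complex.norm_exp, Complex.norm_cpow_real, Complex.sub_re, Complex.re_ofReal_mul]
  set R := (((a : ℂ) + y * Complex.I) ^ (α : ℂ)).re
  have hre : ((a : ℂ) + y * Complex.I).re = a := by simp
  have hys : y ≤ ‖(a : ℂ) + y * Complex.I‖ := by
    have := Complex.abs_im_le_norm ((a : ℂ) + y * Complex.I)
    have him : ((a : ℂ) + y * Complex.I).im = y := by simp
    rw [him, abs_of_pos hy] at this
    exact this
  have h3 := Real.rpow_le_rpow_of_nonpos hy hys (by linarith : α - 1 ≤ 0)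
  have h4 : (1 - δ) * a ^ α + δ * (Real.cos (α * (π / 2)) * y ^ α) ≤ R := by
    nlinarith [mul_le_mul_of_nonneg_left b1 (by linarith : 0 ≤ 1 - δ),
      mul_le_mul_of_nonneg_left b2 hδ0]
  have h5 := mul_le_mul_of_nonneg_left h4 hz.le
  rw [hre, mul_left_comm, ← Real.exp_add, mul_comm]
  refine mul_le_mul h3 (Real.exp_le_exp.2 ?_) (Real.exp_pos _).le (by positivity)
  linarith

lemma slit_of_pos (a y : ℝ) (ha : 0 < a) : (a : ℂ) + y * Complex.I ∈ Complex.slitPlane := by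
  left; simpa using ha

lemma FW_cont (α z a : ℝ) (ha : 0 < a) : Continuous (fun y : ℝ => FW α z (a + y * Complex.I)) := by
  rw [continuous_iff_continuousAt]
  intro y
  exact ContinuousAt.comp (f := fun y : ℝ => (a : ℂ) + y * Complex.I) (g := FW α z)
    (FW_diff α z _ (slit_of_pos a y ha)).continuousAt (by fun_prop)

lemma FW_int (α z a : ℝ) (h0 : 0 < α) (h1 : α < 1) (hz : 0 < z) (ha : 0 < a) :
    IntegrableOn (fun y : ℝ => FW α z (a + y * Complex.I)) (Set.Ioi 0) := by
  have hcp := aux_cospos α h0 h1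
  refine Integrable.mono' ((aux_int2 α (z * 1 * Real.cos (α * (π / 2))) h0
    (by positivity)).1.const_mul (Real.exp (a - (1 - 1) * z * a ^ α)))
    (FW_cont α z a ha).aestronglyMeasurable ?_
  refine (ae_restrict_iff' measurableSet_Ioi).2 (ae_of_all _ fun y hy => ?_)
  exact FW_norm α z a y 1 h0 h1 hz ha hy zero_le_one le_rfl

lemma FW_real (α z x : ℝ) (hx : 0 < x) : (FW α z (x : ℂ)).im = 0 := by
  unfold FW
  rw [← Complex.ofReal_cpow hx.le, ← Complex.ofReal_cpow hx.le, ← Complex.ofReal_mul,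
    ← Complex.ofReal_sub, ← Complex.ofReal_exp, ← Complex.ofReal_mul, Complex.ofReal_im]

lemma FW_shift (α z a ε : ℝ) (h0 : 0 < α) (h1 : α < 1) (hz : 0 < z) (hε : 0 < ε) (ha : ε ≤ a) :
    (∫ y : ℝ in Set.Ioi 0, FW α z (a + y * Complex.I)).re =
    (∫ y : ℝ in Set.Ioi 0, FW α z (ε + y * Complex.I)).re := by
  have ha0 : 0 < a := hε.trans_le ha
  have hcp := aux_cospos α h0 h1
  have t1 := (Complex.continuous_re.tendsto _).comp (intervalIntegral_tendsto_integral_Ioi (0:ℝ)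
    (FW_int α z a h0 h1 hz ha0) (tendsto_id (α := ℝ) (x := atTop)))
  have t2 := (Complex.continuous_re.tendsto _).comp (intervalIntegral_tendsto_integral_Ioi (0:ℝ)
    (FW_int α z ε h0 h1 hz hε) (tendsto_id (α := ℝ) (x := atTop)))
  have t3 := t1.sub t2
  have hrect : ∀ T : ℝ, 0 < T → (∫ y : ℝ in (0:ℝ)..T, FW α z (a + y * Complex.I)).re -
      (∫ y : ℝ in (0:ℝ)..T, FW α z (ε + y * Complex.I)).re =
      (∫ x : ℝ in ε..a, FW α z (x + T * Complex.I)).im := by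
    intro T hT
    have h := Complex.integral_boundary_rect_eq_zero_of_differentiableOn (FW α z)
      (ε : ℂ) ((a : ℂ) + T * Complex.I) (by
        intro s hs
        refine (FW_diff α z s ?_).differentiableWithinAt
        have := hs.1
        simp only [Set.mem_preimage, Complex.ofReal_re, Complex.add_re, Complex.mul_re,
          Complex.I_re, mul_zero, Complex.ofReal_im, Complex.I_im, mul_one, sub_self,
          add_zero, Set.uIcc_of_le ha] at this
        left
        exact hε.trans_le this.1)
    have him := congrArg Complex.im h
    have hb : (∫ x : ℝ in ε..a, FW α z x).im = 0 := by
      have : ∫ x : ℝ in ε..a, FW α z x = ∫ x : ℝ in ε..a, (((FW α z x).re : ℝ) : ℂ) := by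
        apply intervalIntegral.integral_congr
        intro x hx
        rw [Set.uIcc_of_le ha] at hx
        apply Complex.ext
        · simp
        · rw [FW_real α z x (hε.trans_le hx.1)]; simp
      rw [this, intervalIntegral.integral_ofReal, Complex.ofReal_im]
    simp [hb] at him
    linarith
  have t4 : Tendsto (fun T : ℝ => (∫ x : ℝ in ε..a, FW α z (x + T * Complex.I)).im) atTop (𝓝 0) := by
    set k := z * 1 * Real.cos (α * (π / 2)) with hk
    have hk0 : 0 < k := by positivity
    have hb : ∀ᶠ T : ℝ in atTop, ‖(∫ x : ℝ in ε..a, FW α z (x + T * Complex.I)).im‖ ≤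
        Real.exp a * (T ^ (-(1 - α))) * |a - ε| := by
      filter_upwards [eventually_gt_atTop 0] with T hT
      refine (Complex.abs_im_le_norm _).trans ?_
      refine intervalIntegral.norm_integral_le_of_norm_le_const fun x hx => ?_
      rw [Set.uIoc_of_le ha] at hx
      refine (FW_norm α z x T 1 h0 h1 hz (hε.trans hx.1) hT zero_le_one le_rfl).trans ?_
      rw [show -(1 - α) = α - 1 by ring]
      refine mul_le_mul (Real.exp_le_exp.2 ?_) ?_ (by positivity) (Real.exp_pos _).le
      · simpa using hx.2
      · apply mul_le_of_le_one_right (by positivity)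
        rw [Real.exp_le_one_iff]
        have : 0 ≤ k * T ^ α := by positivity
        linarith
    refine squeeze_zero_norm' hb ?_
    have := ((tendsto_rpow_neg_atTop (by linarith : 0 < 1 - α)).const_mul (Real.exp a)).mul_const
      |a - ε|
    simpa using this
  have := tendsto_nhds_unique t3 (t4.congr' (by
    filter_upwards [eventually_gt_atTop 0] with T hT
    exact (hrect T hT).symm))
  linarith

lemma FW_imag (α z y : ℝ) (hy : 0 < y) : FW α z (((0:ℝ) : ℂ) + y * Complex.I) =
    -Complex.I * (cW α * ((y ^ (α - 1) : ℝ) : ℂ) *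
        Complex.exp (-(z * cW α * ((y ^ α : ℝ) : ℂ))) * Complex.exp (Complex.I * y)) := by
  have hne : ((y : ℂ) * Complex.I) ≠ 0 := by simp [hy.ne']
  have hp : ∀ w : ℝ, ((y : ℂ) * Complex.I) ^ (w : ℂ) = cW w * ((y ^ w : ℝ) : ℂ) := by
    intro w
    rw [Complex.cpow_def_of_ne_zero hne, Complex.log_ofReal_mul hy Complex.I_ne_zero,
      Complex.log_I, Real.rpow_def_of_pos hy, cW, Complex.ofReal_exp, ← Complex.exp_add]
    congr 1
    push_cast
    ring
  have hc : cW (α - 1) = -Complex.I * cW α := by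
    rw [cW, cW, show (((α - 1) * (π / 2) : ℝ) : ℂ) * Complex.I =
      ((α * (π / 2) : ℝ) : ℂ) * Complex.I - π / 2 * Complex.I by push_cast; ring,
      Complex.exp_sub, Complex.exp_pi_div_two_mul_I, div_eq_mul_inv, Complex.inv_I]
    ring
  unfold FW
  rw [Complex.ofReal_zero, zero_add, hp, hp, hc,
    show (y : ℂ) * Complex.I - z * (cW α * ((y ^ α : ℝ) : ℂ)) =
      -(z * cW α * ((y ^ α : ℝ) : ℂ)) + Complex.I * y by ring, Complex.exp_add]
  ring

lemma FW_lim (α z : ℝ) (h0 : 0 < α) (h1 : α < 1) (hz : 0 < z) :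
    Tendsto (fun ε : ℝ => ∫ y : ℝ in Set.Ioi 0, FW α z (ε + y * Complex.I)) (𝓝[>] 0)
      (𝓝 (∫ y : ℝ in Set.Ioi 0, FW α z (((0:ℝ) : ℂ) + y * Complex.I))) := by
  have hcp := aux_cospos α h0 h1
  refine tendsto_integral_filter_of_dominated_convergence
      (fun y : ℝ => Real.exp 1 *
        (y ^ (α - 1) * Real.exp (-(z * 1 * Real.cos (α * (π / 2))) * y ^ α))) ?_ ?_
      ((aux_int2 α _ h0 (by positivity)).1.const_mul _) ?_
  · filter_upwards [self_mem_nhdsWithin] with ε hε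
    exact (FW_cont α z ε hε).aestronglyMeasurable
  · filter_upwards [self_mem_nhdsWithin, nhdsWithin_le_nhds (gt_mem_nhds (zero_lt_one' ℝ))] with ε hε hε1
    refine (ae_restrict_iff' measurableSet_Ioi).2 (ae_of_all _ fun y hy => ?_)
    have hy : 0 < y := hy
    refine (FW_norm α z ε y 1 h0 h1 hz hε hy zero_le_one le_rfl).trans ?_
    refine mul_le_mul_of_nonneg_right (Real.exp_le_exp.2 ?_) (by positivity)
    simpa using hε1.le
  · refine (ae_restrict_iff' measurableSet_Ioi).2 (ae_of_all _ fun y hy => ?_)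
    have hy : 0 < y := hy
    refine Tendsto.mono_left ?_ nhdsWithin_le_nhds
    have : ContinuousAt (fun ε : ℝ => FW α z (ε + y * Complex.I)) 0 := by
      refine ContinuousAt.comp (f := fun ε : ℝ => (ε : ℂ) + y * Complex.I) (g := FW α z)
        (FW_diff α z _ ?_).continuousAt (by fun_prop)
      right; simpa using hy.ne'
    exact this

lemma aux_wright_line (α z a : ℝ) (h0 : 0 < α) (h1 : α < 1) (hz : 0 < z) (ha : 0 < a) :
    π * wrightFn (-α) (1 - α) (-z) = (∫ y : ℝ in Set.Ioi 0, FW α z (a + y * Complex.I)).re := by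
  have t := (Complex.continuous_re.tendsto _).comp (FW_lim α z h0 h1 hz)
  have e : (∫ y : ℝ in Set.Ioi 0, FW α z (((0:ℝ) : ℂ) + y * Complex.I)).re =
      π * wrightFn (-α) (1 - α) (-z) := by
    rw [aux_wright α h0 h1 z hz,
      setIntegral_congr_fun measurableSet_Ioi (fun y hy => FW_imag α z y hy), integral_const_mul]
    simp
  rw [← e]
  refine tendsto_nhds_unique t (tendsto_const_nhds.congr' ?_)
  filter_upwards [self_mem_nhdsWithin, nhdsWithin_le_nhds (gt_mem_nhds ha)] with ε hε hε1
  exact FW_shift α z a ε h0 h1 hz hε hε1.le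

lemma aux_wright_bound (α z a δ : ℝ) (h0 : 0 < α) (h1 : α < 1) (hz : 0 < z) (ha : 0 < a)
    (hδ0 : 0 < δ) (hδ1 : δ ≤ 1) :
    |wrightFn (-α) (1 - α) (-z)| ≤ Real.exp (a - (1 - δ) * z * a ^ α) *
      (1 / (z * δ * Real.cos (α * (π / 2)) * α)) := by
  have hcp := aux_cospos α h0 h1
  have hk : 0 < z * δ * Real.cos (α * (π / 2)) := by positivity
  have e := aux_wright_line α z a h0 h1 hz ha
  have h2 : ‖∫ y : ℝ in Set.Ioi 0, FW α z (a + y * Complex.I)‖ ≤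
      Real.exp (a - (1 - δ) * z * a ^ α) * (1 / (z * δ * Real.cos (α * (π / 2)) * α)) := by
    rw [← (aux_int2 α _ h0 hk).2, ← integral_const_mul]
    refine norm_integral_le_of_norm_le ((aux_int2 α _ h0 hk).1.const_mul _) ?_
    refine (ae_restrict_iff' measurableSet_Ioi).2 (ae_of_all _ fun y hy => ?_)
    exact FW_norm α z a y δ h0 h1 hz ha hy hδ0.le hδ1
  have h3 := (Complex.abs_re_le_norm _).trans h2
  rw [← e, abs_mul, abs_of_pos Real.pi_pos] at h3
  refine le_trans ?_ h3
  have := Real.pi_gt_three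
  nlinarith [abs_nonneg (wrightFn (-α) (1 - α) (-z))]

lemma aux_choice (α m : ℝ) (h0 : 0 < α) (h1 : α < 1)
    (hm : m > 2 * (Malpha α : ℝ) * Real.sqrt (1 - gammaAlpha α / (Malpha α : ℝ))) :
    0 < m ∧ ∃ b : ℝ, 0 < b ∧ b ^ 2 < m ^ 2 * (b ^ α - 1) := by
  have hα1 : 0 < 1 - α := by linarith
  set g := gammaAlpha α with hg
  set p := α ^ (α / (1 - α)) with hp
  have hp0 : 0 < p := by positivity
  have hgp : g = (1 - α) * p := rfl
  have hp1 : p ≤ 1 := Real.rpow_le_one h0.le h1.le (by positivity)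
  have hg0 : 0 < g := by rw [hgp]; positivity
  have hg1 : g ≤ 1 := by rw [hgp]; nlinarith
  have hM : (2 / g) ^ ((1 - α) / α) < (Malpha α : ℝ) :=
    Nat.sInf_mem (s := {n : ℕ | (2 / gammaAlpha α) ^ ((1 - α) / α) < (n : ℝ)}) 
      (exists_nat_gt ((2 / gammaAlpha α) ^ ((1 - α) / α)))
  set M : ℝ := (Malpha α : ℝ) with hMdef
  set B : ℝ := 2 / (2 - α) with hB
  have h2α : 0 < 2 - α := by linarith
  have hB0 : 0 < B := by positivity
  have hB1 : 1 ≤ B := by rw [hB, le_div_iff₀ h2α]; linarith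
  set b : ℝ := B ^ (1 / α) with hb
  have hb0 : 0 < b := by positivity
  have hbα : b ^ α = B := by
    rw [hb, ← Real.rpow_mul hB0.le]; field_simp; simp
  set q : ℝ := B ^ ((1 - α) / α) with hq
  have hq1 : 1 ≤ q := Real.one_le_rpow hB1 (by positivity)
  have hbq : b = q * B := by
    rw [hb, hq, ← Real.rpow_add_one hB0.ne']; congr 1; field_simp; ring
  have hβ : 0 < α / (1 - α) := by positivity
  have hqβ : q ^ (α / (1 - α)) = B := by
    rw [hq, ← Real.rpow_mul hB0.le]
    rw [show (1 - α) / α * (α / (1 - α)) = 1 by field_simp, Real.rpow_one]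
  set σ : ℝ := q / α with hσ
  have hσ1 : 1 ≤ σ := by rw [hσ, le_div_iff₀ h0]; linarith
  have hσ0 : 0 < σ := by linarith
  have hσβ : σ ^ (α / (1 - α)) = B / p := by
    rw [hσ, Real.div_rpow (by linarith) h0.le, hqβ]
  have hgσ : g * σ ^ (α / (1 - α)) = (1 - α) * B := by
    rw [hσβ, hgp]; field_simp
  have hσM : σ ≤ M := by
    refine le_trans ?_ hM.le
    have h3 : σ ^ (α / (1 - α)) ≤ 2 / g := by
      rw [le_div_iff₀ hg0, mul_comm, hgσ, hB, mul_div_assoc', div_le_iff₀ h2α]; linarith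
    have := Real.rpow_le_rpow (by positivity) h3 (by positivity : 0 ≤ (1 - α) / α)
    rwa [← Real.rpow_mul hσ0.le, show α / (1 - α) * ((1 - α) / α) = 1 by field_simp,
      Real.rpow_one] at this
  have hX1 : 1 ≤ σ ^ (α / (1 - α)) := Real.one_le_rpow hσ1 hβ.le
  have hM0 : 0 < M := by linarith
  have hsq : 0 ≤ 1 - g / M := by
    rw [sub_nonneg, div_le_one hM0]; linarith
  have hm0 : 0 < m := lt_of_le_of_lt (by positivity) hm
  refine ⟨hm0, b, hb0, ?_⟩
  have hm2 : 4 * (M ^ 2 - g * M) < m ^ 2 := by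
    have := pow_lt_pow_left₀ hm (by positivity) (two_ne_zero)
    rw [mul_pow, Real.sq_sqrt hsq] at this
    have e : (2 * M) ^ 2 * (1 - g / M) = 4 * (M ^ 2 - g * M) := by field_simp; ring
    linarith
  have h5 : σ ^ 2 * (1 - (1 - α) * B) ≤ M ^ 2 - g * M := by
    have h6 : σ ^ 2 * (1 - (1 - α) * B) ≤ σ ^ 2 - g * σ := by
      rw [← hgσ]
      have : σ ≤ σ ^ 2 * σ ^ (α / (1 - α)) := by nlinarith [mul_le_mul hσ1 hX1 zero_le_one hσ0.le]
      nlinarith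
    have h7 : 0 ≤ (M - σ) * (M + σ - g) := mul_nonneg (by linarith) (by linarith)
    nlinarith
  have h8 : b ^ 2 = 4 * (σ ^ 2 * (1 - (1 - α) * B)) * (B - 1) := by
    rw [hbq, hσ, hB]; field_simp; ring
  rw [hbα, h8]
  have hBp : 0 < B - 1 := by
    rw [sub_pos, hB, lt_div_iff₀ h2α]; linarith
  exact mul_lt_mul_of_pos_right (by linarith) hBp

lemma aux_delta (α m b : ℝ) (h : b ^ 2 < m ^ 2 * (b ^ α - 1)) :
    ∃ δ : ℝ, 0 < δ ∧ δ < 1 ∧ b ^ 2 < ((1 - δ) * m) ^ 2 * ((1 - δ) * b ^ α - 1) := by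
  have hc : Continuous (fun δ : ℝ => ((1 - δ) * m) ^ 2 * ((1 - δ) * b ^ α - 1)) := by fun_prop
  have h1 : ∀ᶠ δ in 𝓝 (0:ℝ), b ^ 2 < ((1 - δ) * m) ^ 2 * ((1 - δ) * b ^ α - 1) :=
    hc.tendsto 0 |>.eventually (lt_mem_nhds (by simpa using h))
  have h2 : ∀ᶠ δ in 𝓝[>] (0:ℝ), 0 < δ ∧ δ < 1 ∧
      b ^ 2 < ((1 - δ) * m) ^ 2 * ((1 - δ) * b ^ α - 1) := by
    filter_upwards [self_mem_nhdsWithin, nhdsWithin_le_nhds (gt_mem_nhds (zero_lt_one' ℝ)),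
      nhdsWithin_le_nhds h1] with δ a1 a2 a3 using ⟨a1, a2, a3⟩
  exact h2.exists

lemma aux_pow_exp (q B s : ℝ) (hq : 0 < q) (hB : 0 < B) (hs : 0 < s) :
    s ^ (-q) * Real.exp (-(B / s)) ≤ (q / B) ^ q := by
  have h1 : B / s / q ≤ Real.exp (B / s / q) := by
    have := Real.add_one_le_exp (B / s / q); linarith
  have h2 := Real.rpow_le_rpow (by positivity) h1 hq.le
  rw [← Real.exp_mul, div_mul_cancel₀ _ hq.ne'] at h2
  rw [Real.exp_neg, ← div_eq_mul_inv, div_le_iff₀ (Real.exp_pos _)]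
  calc s ^ (-q) = (q / B) ^ q * (B / s / q) ^ q := by
        rw [← Real.mul_rpow (by positivity) (by positivity), Real.rpow_neg hs.le,
          ← Real.inv_rpow hs.le]
        congr 1; field_simp
    _ ≤ _ := mul_le_mul_of_nonneg_left h2 (by positivity)

set_option maxHeartbeats 1000000 in
theorem stmt3 (d : ℕ) (hd : 1 ≤ d) (α m : ℝ) (hα : α ∈ Set.Ioo (0 : ℝ) 1)
    (hm : m > 2 * (Malpha α : ℝ) * Real.sqrt (1 - gammaAlpha α / (Malpha α : ℝ)))
    (v : EuclideanSpace ℝ (Fin d)) (hv : ‖v‖ = 1) :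
    Tendsto (fun t : ℝ => fundSol α d t ((m * t) • v)) atTop (nhds 0) := by
  obtain ⟨h0, h1⟩ := hα
  obtain ⟨hm0, b, hb0, hb⟩ := aux_choice α m h0 h1 hm
  obtain ⟨δ, hδ0, hδ1, hδ⟩ := aux_delta α m b hb
  have hcp := aux_cospos α h0 h1
  have hδ1' : 0 < 1 - δ := by linarith
  set A := (1 - δ) * b ^ α - 1 with hA
  have hA0 : 0 < A := by
    by_contra hn
    push Not at hn
    nlinarith [mul_nonneg (sq_nonneg ((1 - δ) * m)) (neg_nonneg.2 hn), pow_pos hb0 2]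
  -- the exponential rate
  set r := Real.sqrt A with hr
  have hr0 : 0 < r := Real.sqrt_pos.2 hA0
  have hr2 : r ^ 2 = A := Real.sq_sqrt hA0.le
  set η := (1 - δ) * m * r - b with hη
  have hη0 : 0 < η := by
    rw [hη, sub_pos]
    refine lt_of_pow_lt_pow_left₀ 2 (by positivity) ?_
    rw [mul_pow, hr2]; exact hδ
  set q : ℝ := (d : ℝ) / 2 + 1 with hq
  have hq0 : 0 < q := by positivity
  set K : ℝ := 1 / (δ * Real.cos (α * (π / 2)) * α) * (1 / (4 * π) ^ ((d : ℝ) / 2)) *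
    (q / (δ * (m ^ 2 / 4))) ^ q with hK
  have hpi := Real.pi_pos
  have hK0 : 0 ≤ K := by positivity
  have hint : IntegrableOn (fun s : ℝ => Real.exp (-(δ * A) * s)) (Set.Ioi 0) :=
    integrableOn_exp_mul_Ioi (by have := mul_pos hδ0 hA0; linarith) 0
  set J := ∫ s in Set.Ioi (0:ℝ), Real.exp (-(δ * A) * s) with hJ
  have hbound : ∀ t : ℝ, 1 ≤ t → ‖fundSol α d t ((m * t) • v)‖ ≤ (K * J) * Real.exp (-η * t) := by
    intro t ht
    have ht0 : 0 < t := by linarith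
    have hnorm : ‖(m * t) • v‖ = m * t := by
      rw [norm_smul, hv, mul_one, Real.norm_of_nonneg (by positivity)]
    unfold fundSol
    rw [hnorm, ← integral_const_mul]
    have e : (K * J) * Real.exp (-η * t) =
        ∫ s in Set.Ioi (0:ℝ), (K * Real.exp (-η * t)) * Real.exp (-(δ * A) * s) := by
      rw [integral_const_mul]; ring
    rw [e]
    refine norm_integral_le_of_norm_le (hint.const_mul _) ?_
    refine (ae_restrict_iff' measurableSet_Ioi).2 (ae_of_all _ fun s hs => ?_)
    have hs : 0 < s := hs
    have hW := aux_wright_bound α (t ^ (-α) * s) (b * t) δ h0 h1 (by positivity) (by positivity)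
      hδ0 hδ1.le
    have htα : t ^ (-α) * t ^ α = 1 := by
      rw [← Real.rpow_add ht0]; simp
    have e2 : b * t - (1 - δ) * (t ^ (-α) * s) * (b * t) ^ α = b * t - (A + 1) * s := by
      rw [Real.mul_rpow hb0.le ht0.le, hA]
      linear_combination (-(1 - δ) * s * b ^ α) * htα
    rw [e2] at hW
    rw [norm_mul, norm_mul, Real.norm_of_nonneg (by positivity), Real.norm_of_nonneg (by positivity),
      Real.norm_eq_abs]
    have step1 : t ^ (-α) * (Real.exp s *
        (Real.exp (-(m * t) ^ 2 / (4 * s)) / (4 * π * s) ^ ((d : ℝ) / 2)) *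
        |wrightFn (-α) (1 - α) (-(t ^ (-α) * s))|) ≤
        t ^ (-α) * (Real.exp s *
        (Real.exp (-(m * t) ^ 2 / (4 * s)) / (4 * π * s) ^ ((d : ℝ) / 2)) *
        (Real.exp (b * t - (A + 1) * s) *
          (1 / (t ^ (-α) * s * δ * Real.cos (α * (π / 2)) * α)))) := by gcongr
    refine step1.trans ?_
    have hsq : s ^ (-q) = 1 / (s ^ ((d : ℝ) / 2) * s) := by
      rw [hq, Real.rpow_neg hs.le, Real.rpow_add_one hs.ne', one_div]
    have step2 : t ^ (-α) * (Real.exp s *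
        (Real.exp (-(m * t) ^ 2 / (4 * s)) / (4 * π * s) ^ ((d : ℝ) / 2)) *
        (Real.exp (b * t - (A + 1) * s) *
          (1 / (t ^ (-α) * s * δ * Real.cos (α * (π / 2)) * α)))) =
        (1 / (δ * Real.cos (α * (π / 2)) * α) * (1 / (4 * π) ^ ((d : ℝ) / 2))) * (s ^ (-q) *
        Real.exp (b * t - A * s - (m * t) ^ 2 / (4 * s))) := by
      have : Real.exp (b * t - A * s - (m * t) ^ 2 / (4 * s)) =
          Real.exp s * Real.exp (-(m * t) ^ 2 / (4 * s)) * Real.exp (b * t - (A + 1) * s) := by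
        rw [← Real.exp_add, ← Real.exp_add]; congr 1; ring
      rw [this, hsq, Real.mul_rpow (by positivity) hs.le]
      have : 0 < t ^ (-α) := by positivity
      have : 0 < s ^ ((d : ℝ) / 2) := by positivity
      have : 0 < (4 * π) ^ ((d : ℝ) / 2) := by positivity
      field_simp
    rw [step2]
    have hexp : b * t - A * s - (m * t) ^ 2 / (4 * s) ≤
        -(δ * (m ^ 2 / 4) / s) + (-η * t) + (-(δ * A) * s) := by
      have amgm : m * t * r ≤ A * s + (m * t) ^ 2 / (4 * s) := by
        have : A * s + (m * t) ^ 2 / (4 * s) - m * t * r = (2 * r * s - m * t) ^ 2 / (4 * s) := by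
          rw [← hr2]; field_simp; ring
        have h3 : 0 ≤ (2 * r * s - m * t) ^ 2 / (4 * s) := by positivity
        linarith
      have h4 := mul_le_mul_of_nonneg_left amgm hδ1'.le
      have h5 : δ * (m ^ 2 / 4) / s ≤ δ * ((m * t) ^ 2 / (4 * s)) := by
        have : δ * ((m * t) ^ 2 / (4 * s)) = δ * (m ^ 2 / 4) / s * t ^ 2 := by
          field_simp
        rw [this]
        apply le_mul_of_one_le_right (by positivity)
        nlinarith
      rw [hη]
      generalize (m * t) ^ 2 / (4 * s) = X at h4 h5 ⊢
      generalize δ * (m ^ 2 / 4) / s = Y at h5 ⊢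
      clear_value A r
      linarith
    calc _ ≤ (1 / (δ * Real.cos (α * (π / 2)) * α) * (1 / (4 * π) ^ ((d : ℝ) / 2))) * (s ^ (-q) *
        Real.exp (-(δ * (m ^ 2 / 4) / s) + (-η * t) + (-(δ * A) * s))) := by gcongr
      _ = (1 / (δ * Real.cos (α * (π / 2)) * α) * (1 / (4 * π) ^ ((d : ℝ) / 2))) *
        (s ^ (-q) * Real.exp (-(δ * (m ^ 2 / 4) / s))) *
          (Real.exp (-η * t) * Real.exp (-(δ * A) * s)) := by
          rw [Real.exp_add, Real.exp_add]; ring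
      _ ≤ (1 / (δ * Real.cos (α * (π / 2)) * α) * (1 / (4 * π) ^ ((d : ℝ) / 2))) *
        ((q / (δ * (m ^ 2 / 4))) ^ q) * (Real.exp (-η * t) * Real.exp (-(δ * A) * s)) := by
          have := aux_pow_exp q (δ * (m ^ 2 / 4)) s hq0 (by positivity) hs
          gcongr
      _ = _ := by rw [hK]; ring
  refine squeeze_zero_norm' (a := fun t => (K * J) * Real.exp (-η * t)) ?_ ?_
  · filter_upwards [eventually_ge_atTop 1] with t ht using hbound t ht
  · have : Tendsto (fun t : ℝ => Real.exp (-η * t)) atTop (𝓝 0) :=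
      Real.tendsto_exp_atBot.comp (tendsto_id.const_mul_atTop_of_neg (by linarith))
    simpa using this.const_mul (K * J)
end

section
/- Let α ∈ (0,1) and β > 0. Then for every z ∈ ℝ, E_{α,β}(z) = ∫_0^∞ e^{z s} W_{-α,β-α}(-s) ds. In particular, for α ∈ (0,1) and z ≥ 0, E_α(-z) = ∫_0^∞ e^{-z s} W_{-α,1-α}(-s) ds. -/
open Real MeasureTheory Filter Topology

/-- The two-parameter Mittag-Leffler function `E_{α,β}(z) = ∑ z^n / Γ(αn+β)`. -/
noncomputable def ML (a b z : ℝ) : ℝ :=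
  ∑' n : ℕ, z ^ n / Real.Gamma (a * n + b)

noncomputable def tt (θ c r : ℝ) : ℂ := c + r * Complex.exp (θ * Complex.I)

lemma norm_u (θ : ℝ) : ‖Complex.exp (θ * Complex.I)‖ = 1 := Complex.norm_exp_ofReal_mul_I θ

lemma tt_re (θ c r : ℝ) : (tt θ c r).re = c + r * cos θ := by
  simp [tt, Complex.exp_ofReal_mul_I_re]

lemma tt_im (θ c r : ℝ) : (tt θ c r).im = r * sin θ := by
  simp [tt, Complex.exp_ofReal_mul_I_im]

lemma tt_le (θ c r : ℝ) (hr : 0 ≤ r) : ‖tt θ c r‖ ≤ |c| + r := by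
  unfold tt
  refine (norm_add_le _ _).trans ?_
  rw [norm_mul, norm_u]
  simp [abs_of_nonneg hr]

lemma tt_norm_sq (θ c r : ℝ) : ‖tt θ c r‖ ^ 2 = (c + r * cos θ) ^ 2 + (r * sin θ) ^ 2 := by
  rw [← Complex.normSq_eq_norm_sq, Complex.normSq_apply, tt_re, tt_im]; ring

lemma tt_ge (θ c r : ℝ) : c * sin θ ≤ ‖tt θ c r‖ := by
  refine le_of_abs_le (abs_le_of_sq_le_sq ?_ (norm_nonneg _))
  rw [tt_norm_sq]
  nlinarith [sq_nonneg (r + c * cos θ), sin_sq_add_cos_sq θ, congrArg (fun x => r ^ 2 * x) (sin_sq_add_cos_sq θ),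
    congrArg (fun x => c ^ 2 * x) (sin_sq_add_cos_sq θ)]

lemma norm_exp_tt (θ c r : ℝ) : ‖Complex.exp (tt θ c r)‖ = exp c * exp (r * cos θ) := by
  rw [Complex.norm_exp, tt_re, Real.exp_add]

lemma tt_arg (θ c r : ℝ) (h0 : 0 ≤ θ) (hθ : θ ≤ π) (hcos : cos θ ≤ 0) (hc : 0 < c) (hr : 0 ≤ r)
    (hne : tt θ c r ≠ 0) : |(tt θ c r).arg| ≤ θ := by
  have h1 : cos θ ≤ cos (|(tt θ c r).arg|) := by
    rw [Real.cos_abs, Complex.cos_arg hne, tt_re, le_div_iff₀ (norm_pos_iff.2 hne)]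
    have h2 : r - c ≤ ‖tt θ c r‖ := by
      have := norm_sub_le (tt θ c r) c
      have h3 : tt θ c r - c = r * Complex.exp (θ * Complex.I) := by simp [tt]
      rw [h3, norm_mul, norm_u] at this
      simp [abs_of_nonneg hr, abs_of_pos hc] at this
      linarith
    nlinarith [neg_one_le_cos θ]
  by_contra h
  push Not at h
  have := Real.strictAntiOn_cos ⟨h0, hθ⟩ ⟨abs_nonneg _, Complex.abs_arg_le_pi _⟩ h
  linarith

lemma tt_slit (θ c r : ℝ) (hs : 0 < sin θ) (hr : 0 < r) : tt θ c r ∈ Complex.slitPlane := by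
  right
  rw [tt_im]; positivity

lemma growth_s6 (p s α ε m : ℝ) (hα : α < 1) (hα0 : 0 < α) (hε : 0 < ε) (hm : 0 < m ∨ 0 ≤ p) (hm0 : 0 ≤ m) :
    ∃ K, 0 ≤ K ∧ ∀ y, m ≤ y → y ^ p * exp (s * y ^ α) ≤ K * exp (ε * y) := by
  have h1 := (isLittleO_rpow_exp_pos_mul_atTop p (half_pos hε)).bound one_pos
  have h2 : ∀ᶠ y : ℝ in atTop, |s| * y ^ α ≤ ε / 2 * y := by
    have := (tendsto_rpow_neg_atTop (sub_pos.2 hα)).eventually_le_const (u := ε / 2 / (|s| + 1)) (by positivity)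
    filter_upwards [this, eventually_gt_atTop 0] with y hy h0
    have hy : y ^ α ≤ ε / 2 / (|s| + 1) * y := by
      have e : y ^ α = y ^ (-(1 - α)) * y := by
        nth_rw 3 [← Real.rpow_one y]
        rw [← Real.rpow_add h0]; ring_nf
      rw [e]; gcongr
    calc |s| * y ^ α ≤ (|s| + 1) * y ^ α := by gcongr; linarith
      _ ≤ (|s| + 1) * (ε / 2 / (|s| + 1) * y) := by gcongr
      _ = _ := by field_simp
  obtain ⟨N, hN⟩ := eventually_atTop.1 (h1.and (h2.and (eventually_ge_atTop 0)))
  have hcont : ContinuousOn (fun y : ℝ => y ^ p * exp (s * y ^ α)) (Set.Icc m N) := by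
    apply ContinuousOn.mul
    · apply continuousOn_id.rpow_const
      intro x hx
      rcases hm with h | h
      · left; exact (lt_of_lt_of_le h hx.1).ne'
      · exact Or.inr h
    · apply Continuous.continuousOn
      exact Real.continuous_exp.comp (continuous_const.mul (Real.continuous_rpow_const hα0.le))
  obtain ⟨C, hC⟩ := isCompact_Icc.exists_bound_of_continuousOn hcont
  refine ⟨max C 1, by positivity, fun y hy => ?_⟩
  by_cases hyN : y ≤ N
  · have := hC y ⟨hy, hyN⟩
    have h3 : (1:ℝ) ≤ exp (ε * y) := Real.one_le_exp (by have := hm0.trans hy; positivity)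
    calc _ ≤ C := (le_abs_self _).trans this
      _ ≤ max C 1 := le_max_left _ _
      _ ≤ _ := le_mul_of_one_le_right (by positivity) h3
  · obtain ⟨a1, a2, a3⟩ := hN y (not_le.1 hyN).le
    rw [Real.norm_of_nonneg (by positivity), Real.norm_of_nonneg (by positivity), one_mul] at a1
    have a4 : s * y ^ α ≤ ε / 2 * y := le_trans (by gcongr; exact le_abs_self s) a2
    calc _ ≤ exp (ε / 2 * y) * exp (ε / 2 * y) := by gcongr
      _ = 1 * exp (ε * y) := by rw [← Real.exp_add]; ring_nf
      _ ≤ _ := by gcongr; exact le_max_right _ _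

lemma meas_tt (θ c : ℝ) : Measurable (tt θ c) := by unfold tt; fun_prop

/-- real dominating integrand -/
lemma dom_bound (θ C p s α m : ℝ) (hcos : cos θ < 0) (hα : α < 1) (hα0 : 0 < α)
    (hm : 0 < m ∨ 0 ≤ p) (hm0 : 0 ≤ m) :
    ∃ K, 0 ≤ K ∧ ∀ c r, |c| ≤ C → 0 ≤ r → m ≤ ‖tt θ c r‖ →
     exp (r * cos θ) * (‖tt θ c r‖ ^ p * exp (s * ‖tt θ c r‖ ^ α)) ≤ K * exp (cos θ / 2 * r) := by
  obtain ⟨K, hK, h⟩ := growth_s6 p s α (- cos θ / 2) m hα hα0 (by linarith) hm hm0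
  refine ⟨K * exp (-cos θ / 2 * C), by positivity, fun c r hc hr hmm => ?_⟩
  calc _ ≤ exp (r * cos θ) * (K * exp (-cos θ / 2 * (C + r))) := by
        refine mul_le_mul_of_nonneg_left ?_ (exp_pos _).le
        refine (h _ hmm).trans ?_
        have := tt_le θ c r hr
        gcongr
        · linarith
        · linarith
    _ = _ := by
      rw [mul_assoc, ← Real.exp_add, mul_left_comm, ← Real.exp_add]; ring_nf

lemma int_exp (θ : ℝ) (hcos : cos θ < 0) : IntegrableOn (fun r => exp (cos θ / 2 * r)) (Set.Ioi 0) :=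
  integrableOn_exp_mul_Ioi (by linarith) 0

lemma int_dom (θ c p s α m : ℝ) (hcos : cos θ < 0) (hα : α < 1) (hα0 : 0 < α)
    (hm : 0 < m ∨ 0 ≤ p) (hm0 : 0 ≤ m) (hmm : ∀ r, m ≤ ‖tt θ c r‖) :
    IntegrableOn (fun r => exp (r * cos θ) * (‖tt θ c r‖ ^ p * exp (s * ‖tt θ c r‖ ^ α))) (Set.Ioi 0) := by
  obtain ⟨K, hK, h⟩ := dom_bound θ |c| p s α m hcos hα hα0 hm hm0
  refine Integrable.mono' ((int_exp θ hcos).const_mul K) ?_ ?_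
  · have := meas_tt θ c
    exact Measurable.aestronglyMeasurable (by fun_prop)
  · refine (ae_restrict_mem measurableSet_Ioi).mono fun r hr => ?_
    rw [Real.norm_of_nonneg (by positivity)]
    exact h c r le_rfl (le_of_lt hr) (hmm r)

lemma int_f (θ c p m : ℝ) (hcos : cos θ < 0) 
    (hm : 0 < m ∨ 0 ≤ p) (hm0 : 0 ≤ m) (hmm : ∀ r, m ≤ ‖tt θ c r‖) :
    IntegrableOn (fun r => Complex.exp (tt θ c r) * tt θ c r ^ (p : ℂ)) (Set.Ioi 0) := by
  have := meas_tt θ c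
  refine Integrable.mono' ((int_dom θ c p 0 (1/2) m hcos (by norm_num) (by norm_num) hm hm0 hmm).const_mul (exp c)) 
    (Measurable.aestronglyMeasurable (by fun_prop)) (Eventually.of_forall fun r => ?_)
  rw [norm_mul, norm_exp_tt, Complex.norm_cpow_real]
  simp [mul_assoc]
lemma int_rk (k b : ℝ) (hk : -1 < k) (hb : 0 < b) :
    IntegrableOn (fun r : ℝ => r ^ k * exp (r * -b)) (Set.Ioi 0) := by
  have := integrableOn_rpow_mul_exp_neg_mul_rpow (p := 1) hk one_pos hb
  simpa [mul_comm] using this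

noncomputable def FF (k θ r : ℝ) : ℂ :=
  ((r ^ k : ℝ) : ℂ) * (Complex.exp (r * Complex.exp (θ * Complex.I)) * Complex.exp (θ * ((k + 1) * Complex.I)))

lemma norm_FF (k θ r : ℝ) (hr : 0 < r) : ‖FF k θ r‖ = r ^ k * exp (r * cos θ) := by
  unfold FF
  rw [norm_mul, norm_mul, Complex.norm_exp, Complex.norm_exp, Complex.norm_of_nonneg (by positivity)]
  simp [Complex.exp_ofReal_mul_I_re]

lemma meas_FF (k θ : ℝ) : Measurable (FF k θ) := by unfold FF; fun_prop

lemma int_FF (k θ : ℝ) (hk : 0 < k) (hcos : cos θ < 0) : IntegrableOn (FF k θ) (Set.Ioi 0) := by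
  refine Integrable.mono' (int_rk k (-cos θ) (by linarith) (by linarith)) (meas_FF k θ).aestronglyMeasurable ?_
  refine (ae_restrict_mem measurableSet_Ioi).mono fun r hr => ?_
  rw [norm_FF k θ r hr]; simp

noncomputable def FF' (k θ r : ℝ) : ℂ :=
  FF k θ r * (r * Complex.exp (θ * Complex.I) * Complex.I + (k + 1) * Complex.I)

lemma deriv_FF (k θ r : ℝ) : HasDerivAt (fun θ => FF k θ r) (FF' k θ r) θ := by
  have h0 : HasDerivAt (fun θ : ℝ => (θ : ℂ)) 1 θ := Complex.ofRealCLM.hasDerivAt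
  have h1 := (((h0.mul_const Complex.I).cexp.const_mul (r:ℂ)).cexp.mul ((h0.mul_const ((k + 1) * Complex.I)).cexp)).const_mul ((r ^ k : ℝ) : ℂ)
  refine HasDerivAt.congr_deriv (f := fun θ => FF k θ r) h1 ?_
  unfold FF' FF
  ring

lemma rot_zero (k θ : ℝ) (hk : 0 < k) (hcos : cos θ < 0) (hint : IntegrableOn (FF' k θ) (Set.Ioi 0)) :
    ∫ r in Set.Ioi (0:ℝ), FF' k θ r = 0 := by
  have key := integral_Ioi_of_hasDerivAt_of_tendsto (f := fun r => FF (k+1) θ r * (Complex.exp (-(θ * Complex.I)) * Complex.I)) (f' := FF' k θ) (a := 0) (m := 0) ?_ ?_ hint ?_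
  · rw [key]; simp [FF, Real.zero_rpow (by linarith : k + 1 ≠ 0)]
  · apply Continuous.continuousWithinAt
    unfold FF
    have := Real.continuous_rpow_const (by linarith : 0 ≤ k + 1)
    fun_prop
  · intro r hr
    have hr : 0 < r := hr
    have h0 : HasDerivAt (fun r : ℝ => (r : ℂ)) 1 r := Complex.ofRealCLM.hasDerivAt
    have h1 : HasDerivAt (fun r : ℝ => ((r ^ (k+1) : ℝ) : ℂ)) (((k+1) * r ^ k : ℝ) : ℂ) r := by
      have := (Real.hasDerivAt_rpow_const (x := r) (p := k + 1) (Or.inl hr.ne')).ofReal_comp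
      simpa using this
    have h2 := (h1.mul ((h0.mul_const (Complex.exp (θ * Complex.I))).cexp.mul_const (Complex.exp (θ * (((k+1:ℝ) + 1) * Complex.I))))).mul_const  (Complex.exp (-(θ * Complex.I)) * Complex.I)
    refine HasDerivAt.congr_deriv (f := fun r => FF (k+1) θ r * (Complex.exp (-(θ * Complex.I)) * Complex.I)) h2 ?_
    unfold FF' FF
    have e1 : Complex.exp (θ * (((k+1:ℝ) + 1) * Complex.I)) = Complex.exp (θ * ((k + 1) * Complex.I)) * Complex.exp (θ * Complex.I) := by
      rw [← Complex.exp_add]; push_cast; ring_nf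
    have e2 : Complex.exp (θ * Complex.I) * Complex.exp (-(θ * Complex.I)) = 1 := by
      rw [← Complex.exp_add]; simp
    have e3 : ((r ^ (k+1) : ℝ) : ℂ) = (r ^ k : ℝ) * r := by
      rw [Real.rpow_add_one hr.ne']; push_cast; rfl
    rw [e1, e3]
    push_cast
    linear_combination (((r ^ k : ℝ) : ℂ) * Complex.exp (r * Complex.exp (θ * Complex.I)) * Complex.exp (θ * ((k + 1) * Complex.I)) * (r * Complex.exp (θ * Complex.I) * Complex.I + (k + 1) * Complex.I)) * e2
  · rw [tendsto_zero_iff_norm_tendsto_zero]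
    have := tendsto_rpow_mul_exp_neg_mul_atTop_nhds_zero (k+1) (-cos θ) (by linarith)
    refine this.congr' ?_
    filter_upwards [eventually_gt_atTop 0] with r hr
    rw [norm_mul, norm_FF _ _ _ hr, norm_mul, Complex.norm_exp]
    simp [mul_comm]

lemma rot_deriv (k θ : ℝ) (hk : 0 < k) (hcos : cos θ < 0) :
    HasDerivAt (fun θ => ∫ r in Set.Ioi (0:ℝ), FF k θ r) 0 θ := by
  have hs : {x : ℝ | cos x < cos θ / 2} ∈ 𝓝 θ :=
    (isOpen_lt Real.continuous_cos continuous_const).mem_nhds (by simp; linarith)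
  have := hasDerivAt_integral_of_dominated_loc_of_deriv_le (μ := volume.restrict (Set.Ioi (0:ℝ)))
    (F := FF k) (F' := FF' k) (x₀ := θ) (bound := fun r => r ^ (k+1) * exp (r * - (-(cos θ / 2))) + (k+1) * (r ^ k * exp (r * - (- (cos θ / 2))))) hs
    (Eventually.of_forall fun x => (meas_FF k x).aestronglyMeasurable) (int_FF k θ hk hcos)
    (Measurable.aestronglyMeasurable (by unfold FF'; have := meas_FF k θ; fun_prop)) ?_ ?_ ?_
  · have h2 := this.2
    rwa [rot_zero k θ hk hcos this.1] at h2
  · refine (ae_restrict_mem measurableSet_Ioi).mono fun r hr x hx => ?_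
    have hr : 0 < r := hr
    have hx : cos x < cos θ / 2 := hx
    have n1 : ‖(r * Complex.exp (x * Complex.I) * Complex.I + (k + 1) * Complex.I : ℂ)‖ ≤ r + (k+1) := by
      refine (norm_add_le _ _).trans ?_
      have : ‖(k + 1 : ℂ)‖ = k + 1 := by
        rw [← Complex.ofReal_one, ← Complex.ofReal_add, Complex.norm_of_nonneg (by linarith)]
      simp [this, Complex.norm_exp_ofReal_mul_I, abs_of_pos hr]
    unfold FF'
    rw [norm_mul, norm_FF _ _ _ hr]
    calc _ ≤ r ^ k * exp (r * (cos θ / 2)) * (r + (k+1)) := by gcongr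
      _ = _ := by rw [Real.rpow_add_one hr.ne']; simp only [neg_neg]; ring
  · exact (int_rk _ _ (by linarith) (by linarith)).add ((int_rk _ _ (by linarith) (by linarith)).const_mul _)
  · exact Eventually.of_forall fun r x _ => deriv_FF k x r

lemma rot (k θ : ℝ) (hk : 0 < k) (h1 : π / 2 < θ) (h2 : θ < π) :
    ∫ r in Set.Ioi (0:ℝ), FF k θ r = Real.Gamma (k + 1) * Complex.exp (π * ((k + 1) * Complex.I)) := by
  have hc : ∀ x ∈ Set.Icc θ π, cos x < 0 := fun x hx =>
    Real.cos_neg_of_pi_div_two_lt_of_lt (by linarith [hx.1]) (by linarith [hx.2, pi_pos])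
  have := constant_of_has_deriv_right_zero (f := fun θ => ∫ r in Set.Ioi (0:ℝ), FF k θ r) (a := θ) (b := π)
    (fun x hx => (rot_deriv k x hk (hc x hx)).continuousAt.continuousWithinAt)
    (fun x hx => (rot_deriv k x hk (hc x ⟨hx.1, hx.2.le⟩)).hasDerivWithinAt) π ⟨h2.le, le_rfl⟩
  rw [← this, Real.Gamma_eq_integral (by linarith), ← integral_complex_ofReal, ← integral_mul_const]
  refine setIntegral_congr_fun measurableSet_Ioi fun r hr => ?_
  simp only [FF]
  rw [Complex.exp_pi_mul_I]
  push_cast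
  simp
  ring

noncomputable def HH (θ c p : ℝ) : ℂ :=
  ∫ r in Set.Ioi (0:ℝ), Complex.exp (tt θ c r) * tt θ c r ^ (p : ℂ) * Complex.exp (θ * Complex.I)

noncomputable def HD (θ c p r : ℝ) : ℂ :=
  Complex.exp (tt θ c r) * tt θ c r ^ (p : ℂ) + p * (Complex.exp (tt θ c r) * tt θ c r ^ ((p - 1 : ℝ) : ℂ))

lemma HD_deriv (p : ℝ) (t : ℂ) (ht : t ∈ Complex.slitPlane) :
    HasDerivAt (fun t : ℂ => Complex.exp t * t ^ (p : ℂ))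
      (Complex.exp t * t ^ (p : ℂ) + p * (Complex.exp t * t ^ ((p - 1 : ℝ) : ℂ))) t := by
  have := (Complex.hasDerivAt_exp t).mul (Complex.hasStrictDerivAt_cpow_const (c := (p:ℂ)) ht).hasDerivAt
  refine HasDerivAt.congr_deriv this ?_
  push_cast; ring

lemma tt_zero (θ c : ℝ) : tt θ c 0 = c := by simp [tt]

lemma tt_ge0 (θ c r : ℝ) : c * sin θ ≤ ‖tt θ c r‖ := tt_ge θ c r

lemma int_f' (θ c p : ℝ) (hcos : cos θ < 0) (hsin : 0 < sin θ) (hc : 0 ≤ c) (h : 0 < c ∨ 0 ≤ p) :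
    IntegrableOn (fun r => Complex.exp (tt θ c r) * tt θ c r ^ (p : ℂ)) (Set.Ioi 0) :=
  int_f θ c p (c * sin θ) hcos (h.imp (fun h => by positivity) id) (by positivity) (tt_ge θ c)

lemma int_HD (θ c p : ℝ) (hcos : cos θ < 0) (hsin : 0 < sin θ) (hc : 0 ≤ c) (h : 0 < c ∨ 1 < p) :
    IntegrableOn (HD θ c p) (Set.Ioi 0) :=
  (int_f' θ c p hcos hsin hc (h.imp id (fun h => by linarith))).add
    ((int_f' θ c (p-1) hcos hsin hc (h.imp id (fun h => by linarith))).const_mul _)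

lemma ftc (θ c p : ℝ) (hcos : cos θ < 0) (hsin : 0 < sin θ) (hc : 0 ≤ c) (h : 0 < c ∨ 1 < p) :
    ∫ r in Set.Ioi (0:ℝ), HD θ c p r * Complex.exp (θ * Complex.I) = ((-(exp c * c ^ p) : ℝ) : ℂ) := by
  have key := integral_Ioi_of_hasDerivAt_of_tendsto (f := fun r => Complex.exp (tt θ c r) * tt θ c r ^ (p : ℂ))
    (f' := fun r => HD θ c p r * Complex.exp (θ * Complex.I)) (a := 0) (m := 0) ?_ ?_ ((int_HD θ c p hcos hsin hc h).mul_const _) ?_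
  · rw [key, tt_zero, ← Complex.ofReal_cpow hc]; push_cast; simp
  · apply ContinuousAt.continuousWithinAt
    have h1 : Continuous (tt θ c) := by unfold tt; fun_prop
    apply ContinuousAt.mul (by fun_prop)
    have h2 : ContinuousAt (fun t : ℂ => t ^ (p:ℂ)) (tt θ c 0) := by
      rw [tt_zero]
      rcases h with h | h
      · exact continuousAt_cpow_const (by left; simpa using h)
      · exact Complex.continuousAt_cpow_const_of_re_pos (by left; simpa using hc) (by simp; linarith)
    exact ContinuousAt.comp (f := tt θ c) h2 h1.continuousAt
  · intro r hr
    have h1 : HasDerivAt (tt θ c) (Complex.exp (θ * Complex.I)) r := by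
      have h0 : HasDerivAt (fun r : ℝ => (r : ℂ)) 1 r := Complex.ofRealCLM.hasDerivAt
      have := (h0.mul_const (Complex.exp (θ * Complex.I))).const_add (c : ℂ)
      exact HasDerivAt.congr_deriv this (by simp)
    exact HasDerivAt.comp r (HD_deriv p (tt θ c r) (tt_slit θ c r hsin hr)) h1
  · rw [tendsto_zero_iff_norm_tendsto_zero]
    obtain ⟨K, hK, hb⟩ := dom_bound θ |c| p 0 (1/2) (c * sin θ) hcos (by norm_num) (by norm_num)
      (h.imp (fun h => by positivity) (fun h => by linarith)) (by positivity)
    have hl : Tendsto (fun r => exp c * (K * exp (cos θ / 2 * r))) atTop (𝓝 0) := by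
      have : Tendsto (fun r => exp (cos θ / 2 * r)) atTop (𝓝 0) :=
        Real.tendsto_exp_atBot.comp ((tendsto_const_mul_atBot_of_neg (by linarith)).2 tendsto_id)
      simpa using (this.const_mul K).const_mul (exp c)
    refine squeeze_zero' (Eventually.of_forall fun _ => norm_nonneg _) ?_ hl
    filter_upwards [eventually_ge_atTop 0] with r hr
    have := hb c r le_rfl hr (tt_ge θ c r)
    rw [norm_mul, norm_exp_tt, Complex.norm_cpow_real, mul_assoc]
    refine mul_le_mul_of_nonneg_left ?_ (exp_pos _).le
    simpa using this

lemma base_deriv (θ c k : ℝ) (hcos : cos θ < 0) (hsin : 0 < sin θ) (hc : 0 ≤ c) (hk : 1 < k) :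
    HasDerivAt (fun c => (HH θ c k).im) 0 c := by
  obtain ⟨K1, hK1, hb1⟩ := dom_bound θ (c + 1) k 0 (1/2) 0 hcos (by norm_num) (by norm_num)
      (Or.inr (by linarith)) le_rfl
  obtain ⟨K2, hK2, hb2⟩ := dom_bound θ (c + 1) (k-1) 0 (1/2) 0 hcos (by norm_num) (by norm_num)
      (Or.inr (by linarith)) le_rfl
  have main : HasDerivAt (fun c => HH θ c k) (∫ r in Set.Ioi (0:ℝ), HD θ c k r * Complex.exp (θ * Complex.I)) c := by
    refine (hasDerivAt_integral_of_dominated_loc_of_deriv_le (μ := volume.restrict (Set.Ioi (0:ℝ)))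
      (F := fun c r => Complex.exp (tt θ c r) * tt θ c r ^ (k : ℂ) * Complex.exp (θ * Complex.I))
      (F' := fun c r => HD θ c k r * Complex.exp (θ * Complex.I)) (x₀ := c)
      (bound := fun r => exp (c + 1) * (K1 * exp (cos θ / 2 * r)) + k * (exp (c + 1) * (K2 * exp (cos θ / 2 * r))))
      (Metric.ball_mem_nhds c one_pos) (Eventually.of_forall fun x => ?_) ?_ ?_ ?_ ?_ ?_).2
    · have := meas_tt θ x
      exact Measurable.aestronglyMeasurable (by fun_prop)
    · exact (int_f' θ c k hcos hsin hc (Or.inr (by linarith))).mul_const _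
    · exact ((int_HD θ c k hcos hsin hc (Or.inr hk)).mul_const _).aestronglyMeasurable
    · refine (ae_restrict_mem measurableSet_Ioi).mono fun r hr x hx => ?_
      have hr : 0 < r := hr
      rw [Metric.mem_ball, Real.dist_eq, abs_lt] at hx
      have hx' : |x| ≤ c + 1 := abs_le.2 ⟨by linarith, by linarith⟩
      have a1 := hb1 x r hx' hr.le (norm_nonneg _)
      have a2 := hb2 x r hx' hr.le (norm_nonneg _)
      simp only [zero_mul, Real.exp_zero, mul_one] at a1 a2
      have hxc : x ≤ c + 1 := by linarith
      rw [norm_mul, norm_u, mul_one]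
      unfold HD
      refine (norm_add_le _ _).trans ?_
      rw [norm_mul, norm_mul, norm_mul, norm_exp_tt, Complex.norm_cpow_real, Complex.norm_cpow_real, Complex.norm_of_nonneg (by linarith), mul_assoc, mul_assoc]
      gcongr
    · have := int_exp θ hcos
      exact ((this.const_mul K1).const_mul _).add (((this.const_mul K2).const_mul _).const_mul _)
    · refine (ae_restrict_mem measurableSet_Ioi).mono fun r hr x hx => ?_
      have h1 : HasDerivAt (fun c => tt θ c r) 1 x := by
        have h0 : HasDerivAt (fun r : ℝ => (r : ℂ)) 1 x := Complex.ofRealCLM.hasDerivAt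
        exact h0.add_const _
      have := (HasDerivAt.comp x (HD_deriv k (tt θ x r) (tt_slit θ x r hsin hr)) h1).mul_const (Complex.exp (θ * Complex.I))
      exact HasDerivAt.congr_deriv this (by simp [HD])
  rw [ftc θ c k hcos hsin hc (Or.inr hk)] at main
  have := Complex.imCLM.hasFDerivAt.comp_hasDerivAt c main
  refine HasDerivAt.congr_deriv this ?_
  exact Complex.ofReal_im (-(exp c * c ^ k))

lemma inv_Gamma_refl (x : ℝ) (hx : 0 < x) : (Real.Gamma (1 - x))⁻¹ = 1 / π * (Real.Gamma x * sin (π * x)) := by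
  have h := Real.Gamma_mul_Gamma_one_sub x
  have hG := (Real.Gamma_pos_of_pos hx).ne'
  have : Real.Gamma (1 - x) = π / sin (π * x) / Real.Gamma x := by rw [← h]; field_simp
  rw [this]; simp; field_simp

lemma base (θ c k : ℝ) (h1 : π / 2 < θ) (h2 : θ < π) (hc : 0 ≤ c) (hk : 1 < k) :
    1 / π * (HH θ c k).im = (Real.Gamma (-k))⁻¹ := by
  have hcos : cos θ < 0 := Real.cos_neg_of_pi_div_two_lt_of_lt h1 (by linarith [pi_pos])
  have hsin : 0 < sin θ := Real.sin_pos_of_pos_of_lt_pi (by linarith [pi_pos]) h2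
  have hconst := constant_of_has_deriv_right_zero (f := fun c => (HH θ c k).im) (a := 0) (b := c)
    (fun x hx => (base_deriv θ x k hcos hsin hx.1 hk).continuousAt.continuousWithinAt)
    (fun x hx => (base_deriv θ x k hcos hsin hx.1 hk).hasDerivWithinAt) c ⟨hc, le_rfl⟩
  have hconst : (HH θ c k).im = (HH θ 0 k).im := hconst
  have h0 : HH θ 0 k = ∫ r in Set.Ioi (0:ℝ), FF k θ r := by
    refine setIntegral_congr_fun measurableSet_Ioi fun r hr => ?_
    have hr : 0 < r := hr
    have e : tt θ 0 r = r * Complex.exp (θ * Complex.I) := by simp [tt]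
    have e2 : (r * Complex.exp (θ * Complex.I)) ^ (k : ℂ) = ((r ^ k : ℝ) : ℂ) * Complex.exp (θ * (k * Complex.I)) := by
      rw [Complex.cpow_def_of_ne_zero (by simp [hr.ne']), Complex.log_ofReal_mul hr (Complex.exp_ne_zero _),
        Complex.log_exp (by simp; linarith [pi_pos]) (by simp; linarith), Real.rpow_def_of_pos hr, add_mul, Complex.exp_add]
      push_cast; ring_nf
    have e3 : Complex.exp (θ * ((k + 1) * Complex.I)) = Complex.exp (θ * (k * Complex.I)) * Complex.exp (θ * Complex.I) := by
      rw [← Complex.exp_add]; ring_nf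
    simp only [FF]
    rw [e, e2, e3]; ring
  rw [hconst, h0, rot k θ (by linarith) h1 h2]
  have := inv_Gamma_refl (k + 1) (by linarith)
  rw [show 1 - (k + 1) = -k by ring] at this
  rw [this, Complex.im_ofReal_mul]
  congr 2
  rw [show (π * ((k + 1) * Complex.I) : ℂ) = ((π * (k + 1) : ℝ) : ℂ) * Complex.I by push_cast; ring, Complex.exp_ofReal_mul_I_im]

lemma recur (θ c p : ℝ) (hcos : cos θ < 0) (hsin : 0 < sin θ) (hc : 0 < c) :
    (HH θ c p).im + p * (HH θ c (p - 1)).im = 0 := by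
  have h := ftc θ c p hcos hsin hc.le (Or.inl hc)
  have h2 : ∫ r in Set.Ioi (0:ℝ), HD θ c p r * Complex.exp (θ * Complex.I) = HH θ c p + p * HH θ c (p - 1) := by
    unfold HH
    rw [← integral_const_mul, ← integral_add]
    · congr 1; ext r; simp only [HD]; ring
    · exact (int_f' θ c p hcos hsin hc.le (Or.inl hc)).mul_const _
    · exact ((int_f' θ c (p-1) hcos hsin hc.le (Or.inl hc)).mul_const _).const_mul _
  rw [h2] at h
  have := congrArg Complex.im h
  rw [Complex.ofReal_im, Complex.add_im, Complex.im_ofReal_mul] at this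
  exact this

lemma HH_cont (θ c p : ℝ) (hcos : cos θ < 0) (hsin : 0 < sin θ) (hc : 0 < c) :
    ContinuousAt (fun p => HH θ c p) p := by
  have i1 := int_f' θ c (p - 1) hcos hsin hc.le (Or.inl hc)
  have i2 := int_f' θ c (p + 1) hcos hsin hc.le (Or.inl hc)
  refine continuousAt_of_dominated (bound := fun r => ‖Complex.exp (tt θ c r) * tt θ c r ^ ((p - 1 : ℝ) : ℂ)‖ + ‖Complex.exp (tt θ c r) * tt θ c r ^ ((p + 1 : ℝ) : ℂ)‖) (Eventually.of_forall fun q => ?_) ?_ (i1.norm.add i2.norm) ?_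
  · have := meas_tt θ c
    exact Measurable.aestronglyMeasurable (by fun_prop)
  · filter_upwards [Metric.ball_mem_nhds p one_pos] with q hq
    rw [Metric.mem_ball, Real.dist_eq, abs_lt] at hq
    refine Eventually.of_forall fun r => ?_
    have hpos : 0 < ‖tt θ c r‖ := lt_of_lt_of_le (by positivity) (tt_ge θ c r)
    simp only [norm_mul, norm_u, mul_one, Complex.norm_cpow_real]
    rw [← mul_add]
    gcongr
    rcases le_total 1 ‖tt θ c r‖ with h | h
    · have := Real.rpow_le_rpow_of_exponent_le h (by linarith : q ≤ p + 1)
      have : 0 ≤ ‖tt θ c r‖ ^ (p - 1) := by positivity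
      linarith
    · have := Real.rpow_le_rpow_of_exponent_ge hpos h (by linarith : p - 1 ≤ q)
      have : 0 ≤ ‖tt θ c r‖ ^ (p + 1) := by positivity
      linarith
  · refine Eventually.of_forall fun r => ?_
    have hpos : 0 < ‖tt θ c r‖ := lt_of_lt_of_le (by positivity) (tt_ge θ c r)
    have hne : tt θ c r ≠ 0 := norm_pos_iff.1 hpos
    have : ContinuousAt (fun q : ℝ => tt θ c r ^ (q:ℂ)) p :=
      (continuousAt_const_cpow hne).comp (f := fun q : ℝ => (q : ℂ)) Complex.continuous_ofReal.continuousAt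
    fun_prop

/-- Hankel representation of the reciprocal Gamma function on a wedge contour. -/
lemma hankel (θ c w : ℝ) (h1 : π / 2 < θ) (h2 : θ < π) (hc : 0 < c) :
    1 / π * (HH θ c (-w)).im = (Real.Gamma w)⁻¹ := by
  have hcos : cos θ < 0 := Real.cos_neg_of_pi_div_two_lt_of_lt h1 (by linarith [pi_pos])
  have hsin : 0 < sin θ := Real.sin_pos_of_pos_of_lt_pi (by linarith [pi_pos]) h2
  have step : ∀ w : ℝ, w ≠ 0 → 1 / π * (HH θ c (-w)).im = (Real.Gamma w)⁻¹ →
      1 / π * (HH θ c (-(w + 1))).im = (Real.Gamma (w + 1))⁻¹ := by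
    intro w hw h
    have hr := recur θ c (-w) hcos hsin hc
    rw [show -w - 1 = -(w + 1) by ring] at hr
    rw [Real.Gamma_add_one hw, mul_inv, ← h]
    field_simp
    linarith
  have step1 : 1 / π * (HH θ c (-1)).im = (Real.Gamma 1)⁻¹ := by
    have l0 : ∀ w : ℝ, w < 0 → 1 / π * (HH θ c (-w)).im = (Real.Gamma w)⁻¹ := by
      intro w hw
      have hb := base θ c (-(w - 1)) h1 h2 hc.le (by linarith)
      rw [neg_neg] at hb
      have := step (w - 1) (by linarith) hb
      rwa [sub_add_cancel] at this
    have l1 : ∀ w : ℝ, w < 1 → 1 / π * (HH θ c (-w)).im = (Real.Gamma w)⁻¹ := by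
      intro w hw
      have := step (w - 1) (by linarith) (l0 (w - 1) (by linarith))
      rwa [sub_add_cancel] at this
    have c1 : ContinuousAt (fun w => 1 / π * (HH θ c (-w)).im) 1 := by
      have h := (HH_cont θ c (-1) hcos hsin hc).comp (f := fun w : ℝ => -w) (x := 1) continuous_neg.continuousAt
      have h' := Complex.continuous_im.continuousAt.comp h
      exact continuousAt_const.mul h'
    have c2 : ContinuousAt (fun w => (Real.Gamma w)⁻¹) 1 := by
      refine ContinuousAt.inv₀ (Real.differentiableAt_Gamma fun m => ?_).continuousAt (by simp)
      have : (0:ℝ) ≤ m := by positivity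
      linarith
    refine tendsto_nhds_unique (c1.tendsto.mono_left (nhdsWithin_le_nhds (s := Set.Iio 1))) ?_
    refine (c2.tendsto.mono_left (nhdsWithin_le_nhds (s := Set.Iio 1))).congr' ?_
    filter_upwards [self_mem_nhdsWithin] with w hw
    exact (l1 w hw).symm
  have all : ∀ n : ℕ, ∀ w : ℝ, w < n - 1 → 1 / π * (HH θ c (-w)).im = (Real.Gamma w)⁻¹ := by
    intro n
    induction n with
    | zero => 
      intro w hw
      have := base θ c (-w) h1 h2 hc.le (by simp at hw; linarith)
      rwa [neg_neg] at this
    | succ n ih =>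
      intro w hw
      push_cast at hw
      by_cases h : w = 1
      · subst h; exact step1
      · have := step (w - 1) (sub_ne_zero.2 h) (ih _ (by linarith))
        rwa [sub_add_cancel] at this
  obtain ⟨n, hn⟩ := exists_nat_gt (w + 1)
  exact all n w (by linarith)

lemma tt_pow (θ c α p : ℝ) (r : ℝ) (n : ℕ) (hne : tt θ c r ≠ 0) :
    tt θ c r ^ (p : ℂ) * (tt θ c r ^ (α : ℂ)) ^ n = tt θ c r ^ ((p + α * n : ℝ) : ℂ) := by
  rw [← Complex.cpow_nat_mul, ← Complex.cpow_add _ _ hne]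
  push_cast; ring_nf

lemma wright_rep (θ c α β s : ℝ) (h1 : π / 2 < θ) (h2 : θ < π) (hc : 0 < c) (hα : α < 1) (hα0 : 0 < α) :
    wrightFn (-α) (β - α) (-s) = 1 / π * (∫ r in Set.Ioi (0:ℝ), Complex.exp (tt θ c r) *
      tt θ c r ^ ((α - β : ℝ) : ℂ) * Complex.exp (θ * Complex.I) * Complex.exp (-s * tt θ c r ^ (α : ℂ))).im := by
  have hcos : cos θ < 0 := Real.cos_neg_of_pi_div_two_lt_of_lt h1 (by linarith [pi_pos])
  have hsin : 0 < sin θ := Real.sin_pos_of_pos_of_lt_pi (by linarith [pi_pos]) h2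
  have hpos : ∀ r, 0 < ‖tt θ c r‖ := fun r => lt_of_lt_of_le (by positivity) (tt_ge θ c r)
  have hne : ∀ r, tt θ c r ≠ 0 := fun r => norm_pos_iff.1 (hpos r)
  have hm := meas_tt θ c
  have hexp : ∀ x : ℝ, HasSum (fun n : ℕ => x ^ n / n.factorial) (exp x) := fun x => by
    rw [Real.exp_eq_exp_ℝ]; exact NormedSpace.expSeries_div_hasSum_exp x
  have hcexp : ∀ x : ℂ, HasSum (fun n : ℕ => x ^ n / n.factorial) (Complex.exp x) := fun x => by
    rw [Complex.exp_eq_exp_ℂ]; exact NormedSpace.expSeries_div_hasSum_exp x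
  have hb : ∀ r, HasSum (fun n : ℕ => exp c * (exp (r * cos θ) * ‖tt θ c r‖ ^ (α - β)) * ((|s| * ‖tt θ c r‖ ^ α) ^ n / n.factorial))
      (exp c * (exp (r * cos θ) * ‖tt θ c r‖ ^ (α - β)) * exp (|s| * ‖tt θ c r‖ ^ α)) := fun r =>
    (hexp _).mul_left _
  have hsum := hasSum_integral_of_dominated_convergence (μ := volume.restrict (Set.Ioi (0:ℝ)))
    (F := fun n r => Complex.exp (tt θ c r) *
      tt θ c r ^ ((α - β : ℝ) : ℂ) * Complex.exp (θ * Complex.I) * ((-s * tt θ c r ^ (α : ℂ)) ^ n / n.factorial))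
    (f := fun r => Complex.exp (tt θ c r) *
      tt θ c r ^ ((α - β : ℝ) : ℂ) * Complex.exp (θ * Complex.I) * Complex.exp (-s * tt θ c r ^ (α : ℂ)))
    (fun (n : ℕ) r => exp c * (exp (r * cos θ) * ‖tt θ c r‖ ^ (α - β)) * ((|s| * ‖tt θ c r‖ ^ α) ^ n / n.factorial))
    (fun n => Measurable.aestronglyMeasurable (by fun_prop))
    (fun n => Eventually.of_forall fun r => ?_) (Eventually.of_forall fun r => (hb r).summable) ?_
    (Eventually.of_forall fun r => (hcexp _).mul_left _)
  · have h3 := (hsum.mapL Complex.imCLM).mul_left (1 / π)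
    unfold wrightFn
    rw [show (∫ r in Set.Ioi (0:ℝ), Complex.exp (tt θ c r) *
      tt θ c r ^ ((α - β : ℝ) : ℂ) * Complex.exp (θ * Complex.I) * Complex.exp (-s * tt θ c r ^ (α : ℂ))).im = Complex.imCLM (∫ r in Set.Ioi (0:ℝ), Complex.exp (tt θ c r) *
      tt θ c r ^ ((α - β : ℝ) : ℂ) * Complex.exp (θ * Complex.I) * Complex.exp (-s * tt θ c r ^ (α : ℂ))) from rfl, ← h3.tsum_eq]
    congr 1
    ext n
    have e : ∫ r in Set.Ioi (0:ℝ), Complex.exp (tt θ c r) *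
      tt θ c r ^ ((α - β : ℝ) : ℂ) * Complex.exp (θ * Complex.I) * ((-s * tt θ c r ^ (α : ℂ)) ^ n / n.factorial)
      = (((-s) ^ n / n.factorial : ℝ) : ℂ) * HH θ c (-(-α * n + (β - α))) := by
      unfold HH
      rw [← integral_const_mul]
      congr 1; ext r
      rw [show -(-α * n + (β - α)) = α - β + α * n by ring, ← tt_pow θ c α (α - β) r n (hne r), mul_pow]
      push_cast; ring
    rw [e, Complex.imCLM_apply, Complex.im_ofReal_mul, mul_left_comm, hankel θ c _ h1 h2 hc]
    field_simp
  · simp only [norm_mul, norm_u, norm_exp_tt, Complex.norm_cpow_real, norm_div, norm_pow, norm_neg, Complex.norm_real, Complex.norm_natCast, Real.norm_eq_abs, mul_one]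
    apply le_of_eq; ring
  · have := (int_dom θ c (α - β) |s| α (c * sin θ) hcos hα hα0 (Or.inl (by positivity)) (by positivity) (tt_ge θ c)).const_mul (exp c)
    refine this.congr (Eventually.of_forall fun r => ?_)
    simp only [(hb r).tsum_eq]; ring

lemma main_formula (α β : ℝ) (hα : α ∈ Set.Ioo (0 : ℝ) 1) (z : ℝ) : ML α β z =
      ∫ s in Set.Ioi (0 : ℝ), Real.exp (z * s) * wrightFn (-α) (β - α) (-s) := by
  obtain ⟨hα0, hα1⟩ := hα
  obtain ⟨θ, h1, h2'⟩ : ∃ θ, π / 2 < θ ∧ θ < min π (π / 2 / α) := by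
    apply exists_between
    apply lt_min (by linarith [pi_pos])
    rw [lt_div_iff₀ hα0]; nlinarith [pi_pos]
  have h2 : θ < π := h2'.trans_le (min_le_left _ _)
  have h3 : θ * α < π / 2 := (lt_div_iff₀ hα0).1 (h2'.trans_le (min_le_right _ _))
  have hcos : cos θ < 0 := Real.cos_neg_of_pi_div_two_lt_of_lt h1 (by linarith [pi_pos])
  have hsin : 0 < sin θ := Real.sin_pos_of_pos_of_lt_pi (by linarith [pi_pos]) h2
  have hθ0 : 0 < θ := by linarith [pi_pos]
  have hcα : 0 < cos (θ * α) := Real.cos_pos_of_mem_Ioo ⟨by nlinarith [pi_pos], h3⟩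
  set R := (|z| + 1) / cos (θ * α) with hR
  have hRpos : 0 < R := by positivity
  obtain ⟨c, hc, hcR⟩ : ∃ c, 0 < c ∧ (c * sin θ) ^ α = R := by
    refine ⟨R ^ (α⁻¹) / sin θ, by positivity, ?_⟩
    rw [div_mul_cancel₀ _ hsin.ne', ← Real.rpow_mul hRpos.le, inv_mul_cancel₀ hα0.ne', Real.rpow_one]
  have hpos : ∀ r, 0 < ‖tt θ c r‖ := fun r => lt_of_lt_of_le (by positivity) (tt_ge θ c r)
  have hne : ∀ r, tt θ c r ≠ 0 := fun r => norm_pos_iff.1 (hpos r)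
  have hm := meas_tt θ c
  have hre : ∀ r, 0 < r → |z| + 1 ≤ (tt θ c r ^ (α : ℂ)).re := by
    intro r hr
    rw [Complex.cpow_ofReal_re]
    have a1 : R ≤ ‖tt θ c r‖ ^ α := by
      rw [← hcR]; exact Real.rpow_le_rpow (by positivity) (tt_ge θ c r) hα0.le
    have a2 : cos (θ * α) ≤ cos ((tt θ c r).arg * α) := by
      rw [← Real.cos_abs ((tt θ c r).arg * α), abs_mul, abs_of_pos hα0]
      apply Real.cos_le_cos_of_nonneg_of_le_pi (by positivity) (by linarith [pi_pos])
      exact mul_le_mul_of_nonneg_right (tt_arg θ c r hθ0.le h2.le hcos.le hc hr.le (hne r)) hα0.le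
    calc |z| + 1 = R * cos (θ * α) := by rw [hR]; field_simp
      _ ≤ _ := by gcongr
  have hnorm : ∀ r, 0 < r → |z| + 1 ≤ ‖tt θ c r ^ (α : ℂ)‖ := fun r hr =>
    (hre r hr).trans (Complex.re_le_norm _)
  -- the double integrand
  set A : ℝ → ℂ := fun r => Complex.exp (tt θ c r) * tt θ c r ^ ((α - β : ℝ) : ℂ) * Complex.exp (θ * Complex.I) with hA
  have hAm : Measurable A := by fun_prop
  have hAi : IntegrableOn A (Set.Ioi 0) := (int_f' θ c (α - β) hcos hsin hc.le (Or.inl hc)).mul_const _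
  set G : ℝ → ℝ → ℂ := fun s r => (exp (z * s) : ℝ) * (A r * Complex.exp (-s * tt θ c r ^ (α : ℂ))) with hG
  have hGi : Integrable (Function.uncurry G) ((volume.restrict (Set.Ioi (0:ℝ))).prod (volume.restrict (Set.Ioi (0:ℝ)))) := by
    have hb := Integrable.mul_prod (integrableOn_exp_mul_Ioi (a := -1) (by norm_num) 0) hAi.norm
    refine hb.mono' (Measurable.aestronglyMeasurable (by
      simp only [hG, Function.uncurry_def]; fun_prop)) ?_
    rw [Measure.prod_restrict]
    refine (ae_restrict_mem (measurableSet_Ioi.prod measurableSet_Ioi)).mono ?_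
    rintro ⟨s, r⟩ ⟨hs, hr⟩
    have hs : 0 < s := hs
    have hr : 0 < r := hr
    simp only [Function.uncurry_apply_pair, hG]
    rw [norm_mul, norm_mul, Complex.norm_exp, Complex.norm_of_nonneg (exp_pos _).le]
    have : (-s * tt θ c r ^ (α : ℂ) : ℂ).re = -s * (tt θ c r ^ (α : ℂ)).re := by
      rw [← Complex.ofReal_neg, Complex.re_ofReal_mul]
    rw [this, mul_left_comm, ← Real.exp_add, mul_comm]
    gcongr
    nlinarith [hre r hr, le_abs_self z]
  have hW : ∀ s, Real.exp (z * s) * wrightFn (-α) (β - α) (-s) = 1 / π * (∫ r in Set.Ioi (0:ℝ), G s r).im := by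
    intro s
    rw [wright_rep θ c α β s h1 h2 hc hα1 hα0, mul_left_comm, ← Complex.im_ofReal_mul, ← integral_const_mul]
  have hinner : ∀ r, 0 < r → ∫ s in Set.Ioi (0:ℝ), G s r = A r * (tt θ c r ^ (α : ℂ) - z)⁻¹ := by
    intro r hr
    have hlt : ((z:ℂ) - tt θ c r ^ (α : ℂ)).re < 0 := by
      rw [Complex.sub_re, Complex.ofReal_re]; linarith [hre r hr, le_abs_self z]
    have := integral_exp_mul_complex_Ioi hlt 0
    have e : ∀ s, G s r = A r * Complex.exp ((z - tt θ c r ^ (α : ℂ)) * s) := by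
      intro s
      simp only [hG]
      rw [sub_mul, sub_eq_add_neg, Complex.exp_add]; push_cast; ring_nf
    simp_rw [e]
    rw [integral_const_mul, this]
    congr 1
    rw [Complex.ofReal_zero, mul_zero, Complex.exp_zero, neg_div, one_div, ← inv_neg, neg_sub]
  have hR : ∫ s in Set.Ioi (0 : ℝ), Real.exp (z * s) * wrightFn (-α) (β - α) (-s)
      = 1 / π * (∫ r in Set.Ioi (0:ℝ), A r * (tt θ c r ^ (α : ℂ) - z)⁻¹).im := by
    simp_rw [hW]
    rw [integral_const_mul]
    congr 1
    have := integral_im (𝕜 := ℂ) hGi.integral_prod_left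
    refine Eq.trans this ?_
    rw [← setIntegral_congr_fun measurableSet_Ioi hinner]
    have := integral_integral_swap hGi
    exact congrArg Complex.im this
  rw [hR]
  -- geometric series
  set q := |z| / (|z| + 1) with hq
  have hq0 : 0 ≤ q := by positivity
  have hq1 : q < 1 := by rw [hq, div_lt_one (by positivity)]; linarith
  have hgb : HasSum (fun n : ℕ => q ^ n) (1 - q)⁻¹ := hasSum_geometric_of_lt_one hq0 hq1
  have hne' : ∀ r, tt θ c r ^ (α : ℂ) ≠ 0 := fun r => by simp [Complex.cpow_eq_zero_iff, hne r]
  have hB : IntegrableOn (fun r => ‖A r * (tt θ c r ^ (α : ℂ))⁻¹‖) (Set.Ioi 0) := by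
    refine ((int_f' θ c (-β) hcos hsin hc.le (Or.inl hc)).mul_const (Complex.exp (θ * Complex.I))).norm.congr (Eventually.of_forall fun r => ?_)
    simp only [hA]
    congr 1
    rw [show ((α - β : ℝ) : ℂ) = ((-β : ℝ) : ℂ) + α by push_cast; ring, Complex.cpow_add _ _ (hne r)]
    field_simp [hne' r]
  have hsum := hasSum_integral_of_dominated_convergence (μ := volume.restrict (Set.Ioi (0:ℝ)))
    (F := fun (n : ℕ) r => A r * (tt θ c r ^ (α : ℂ))⁻¹ * (z * (tt θ c r ^ (α : ℂ))⁻¹) ^ n)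
    (f := fun r => A r * (tt θ c r ^ (α : ℂ) - z)⁻¹)
    (fun (n : ℕ) r => ‖A r * (tt θ c r ^ (α : ℂ))⁻¹‖ * q ^ n)
    (fun n => Measurable.aestronglyMeasurable (by fun_prop))
    (fun n => ?_) (Eventually.of_forall fun r => (hgb.mul_left _).summable) ?_ ?_
  · have h3 := (hsum.mapL Complex.imCLM).mul_left (1 / π)
    refine Eq.trans ?_ h3.tsum_eq
    unfold ML
    congr 1
    ext n
    have e : ∫ r in Set.Ioi (0:ℝ), A r * (tt θ c r ^ (α : ℂ))⁻¹ * (z * (tt θ c r ^ (α : ℂ))⁻¹) ^ n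
        = ((z ^ n : ℝ) : ℂ) * HH θ c (-(α * n + β)) := by
      unfold HH
      rw [← integral_const_mul]
      congr 1; ext r
      have := tt_pow θ c α (-(α * n + β)) r (n + 1) (hne r)
      rw [show -(α * n + β) + α * ((n + 1 : ℕ) : ℝ) = α - β by push_cast; ring] at this
      simp only [hA]
      rw [← this, mul_pow, inv_pow, pow_succ]
      have := hne' r
      push_cast
      field_simp
    rw [e, Complex.imCLM_apply, Complex.im_ofReal_mul, mul_left_comm, hankel θ c _ h1 h2 hc, div_eq_mul_inv]
  · refine (ae_restrict_mem measurableSet_Ioi).mono fun r hr => ?_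
    rw [norm_mul, norm_pow]
    gcongr
    rw [norm_mul, norm_inv, Complex.norm_real, Real.norm_eq_abs, hq, div_eq_mul_inv]
    gcongr
    exact hnorm r hr
  · simp_rw [(hgb.mul_left _).tsum_eq]
    exact hB.mul_const _
  · refine (ae_restrict_mem measurableSet_Ioi).mono fun r hr => ?_
    have hlt : ‖(z * (tt θ c r ^ (α : ℂ))⁻¹ : ℂ)‖ < 1 := by
      refine lt_of_le_of_lt ?_ hq1
      rw [norm_mul, norm_inv, Complex.norm_real, Real.norm_eq_abs, hq, div_eq_mul_inv]
      gcongr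
      exact hnorm r hr
    have := (hasSum_geometric_of_norm_lt_one hlt).mul_left (A r * (tt θ c r ^ (α : ℂ))⁻¹)
    have e : A r * (tt θ c r ^ (α : ℂ) - z)⁻¹ = A r * (tt θ c r ^ (α : ℂ))⁻¹ * (1 - z * (tt θ c r ^ (α : ℂ))⁻¹)⁻¹ := by
      rw [mul_assoc (A r) (tt θ c r ^ (α : ℂ))⁻¹, ← mul_inv, mul_sub, mul_one, mul_left_comm, mul_inv_cancel₀ (hne' r), mul_one]
    rw [e]
    exact this

theorem stmt6 (α β : ℝ) (hα : α ∈ Set.Ioo (0 : ℝ) 1) (hβ : 0 < β) :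
    (∀ z : ℝ, ML α β z =
      ∫ s in Set.Ioi (0 : ℝ), Real.exp (z * s) * wrightFn (-α) (β - α) (-s)) ∧
    (∀ z : ℝ, 0 ≤ z → ML α 1 (-z) =
      ∫ s in Set.Ioi (0 : ℝ), Real.exp (-z * s) * wrightFn (-α) (1 - α) (-s)) := by
  exact ⟨fun z => main_formula α β hα z, fun z _ => main_formula α 1 hα (-z)⟩
end
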